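/- Let k ≥ 2. There are no integers n, b, d with n > 5, 1 ≤ b ≤ 9 and d ≥ 2 such that L_n^{(k)} = b·10^{d}. In particular, no k-generalized Lucas number with at least three decimal digits is a power of 10 times a single digit (and in particular none is a power of 10). -/

import Mathlib

/-- Shifted `k`-generalized Lucas sequence: `genLucas k m` equals `L^{(k)}_{m - (k-2)}`,
so that index `m = 0` corresponds to `n = 2 - k`.  The initial values are
`L^{(k)}_{2-k} = ⋯ = L^{(k)}_{-1} = 0`, `L^{(k)}_0 = 2`, `L^{(k)}_1 = 1`, and each term
afterwards is the sum of the `k` preceding terms. -/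
def genLucas (k : ℕ) : ℕ → ℤ := fun m =>
  if h1 : m < k - 2 then 0
  else if h2 : m = k - 2 then 2
  else if h3 : m = k - 1 then 1
  else ∑ i ∈ Finset.range k, genLucas k (m - 1 - i)
decreasing_by omega

/-- The `k`-generalized Lucas number `L^{(k)}_n` for `n ≥ 0`. -/
def lucasL (k n : ℕ) : ℤ := genLucas k (n + k - 2)

section partP1
open Polynomial Asymptotics Topology

/-- Hermite interpolation with small data. -/
theorem hermite_exists (S τ : ℕ) (t : ℕ → ℕ → ℂ) (δ R : ℝ) (hδ : 0 ≤ δ) (hR : 1 ≤ R) (hSR : (S:ℝ) ≤ R)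
    (ht : ∀ s < S, ∀ i < τ, ‖t s i‖ ≤ δ) :
    ∀ w : ℕ, ∀ μ : ℕ → ℕ, (∀ s, μ s ≤ τ) → ∑ s ∈ Finset.range S, μ s = w →
    ∃ H : ℂ[X], (∀ s < S, (X - C (s:ℂ))^(μ s) ∣ H - ∑ i ∈ Finset.range τ, C (t s i) * (X - C (s:ℂ))^i)
      ∧ ∀ z : ℂ, ‖z‖ ≤ R → ‖H.eval z‖ ≤ (4*R)^w * δ := by
  intro w
  induction w with
  | zero =>
    intro μ hμ hw
    refine ⟨0, ?_, ?_⟩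
    · intro s hs
      have : μ s = 0 := by
        rw [Finset.sum_eq_zero_iff] at hw
        exact hw s (Finset.mem_range.2 hs)
      simp [this]
    · intro z hz; simp [hδ]
  | succ w ih =>
    intro μ hμ hw
    have hnode : ∀ s < S, ∀ z : ℂ, ‖z‖ ≤ R → ‖z - (s:ℂ)‖ ≤ 2 * R := by
      intro s hs z hz
      have h1 : ‖z - (s:ℂ)‖ ≤ ‖z‖ + ‖(s:ℂ)‖ := norm_sub_le _ _
      have h2 : ‖(s:ℂ)‖ = s := by simp
      have h3 : (s:ℝ) ≤ S := by exact_mod_cast hs.le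
      linarith
    by_cases hc : ∃ s < S, ∃ s' < S, s < s' ∧ 0 < μ s ∧ 0 < μ s'
    · obtain ⟨s, hs, s', hs', hss, h0, h0'⟩ := hc
      have key : ∀ r < S, 0 < μ r → ∑ x ∈ Finset.range S, (Function.update μ r (μ r - 1)) x = w := by
        intro r hr h0
        have h1 := Finset.sum_update_of_mem (Finset.mem_range.2 hr) μ (μ r - 1)
        rw [h1]
        have h2 := Finset.add_sum_erase _ μ (Finset.mem_range.2 hr)
        rw [Finset.sdiff_singleton_eq_erase]
        omega
      have hle : ∀ r, ∀ x, (Function.update μ r (μ r - 1)) x ≤ τ := by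
        intro r x
        by_cases hx : x = r
        · subst hx; simp; have := hμ x; omega
        · simp [hx, hμ x]
      obtain ⟨H1, h1d, h1b⟩ := ih _ (hle s) (key s hs h0)
      obtain ⟨H2, h2d, h2b⟩ := ih _ (hle s') (key s' hs' h0')
      have hne : ((s':ℂ) - (s:ℂ)) ≠ 0 := by
        rw [sub_ne_zero]; exact_mod_cast hss.ne'
      refine ⟨C (((s':ℂ) - (s:ℂ))⁻¹) * ((X - C (s:ℂ)) * H1 - (X - C (s':ℂ)) * H2), ?_, ?_⟩
      · intro r hr
        set Ty := ∑ i ∈ Finset.range τ, C (t r i) * (X - C (r:ℂ))^i with hTy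
        have e : C (((s':ℂ) - (s:ℂ))⁻¹) * ((X - C (s:ℂ)) * H1 - (X - C (s':ℂ)) * H2) - Ty
            = C (((s':ℂ) - (s:ℂ))⁻¹) * ((X - C (s:ℂ)) * (H1 - Ty) - (X - C (s':ℂ)) * (H2 - Ty)) := by
          have : C (((s':ℂ) - (s:ℂ))⁻¹) * (C (s':ℂ) - C (s:ℂ)) = 1 := by
            rw [← C_sub, ← C_mul, inv_mul_cancel₀ hne, C_1]
          linear_combination Ty * this
        rw [e]
        apply Dvd.dvd.mul_left
        have d1 := h1d r hr
        have d2 := h2d r hr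
        rw [← hTy] at d1 d2
        by_cases hrs : r = s
        · subst hrs
          have : r ≠ s' := hss.ne
          simp only [Function.update_self] at d1
          simp only [Function.update_of_ne this] at d2
          apply dvd_sub
          · have e2 : μ r = (μ r - 1) + 1 := by omega
            rw [e2, pow_succ']
            exact mul_dvd_mul_left _ d1
          · exact Dvd.dvd.mul_left d2 _
        · by_cases hrs' : r = s'
          · subst hrs'
            simp only [Function.update_self] at d2
            simp only [Function.update_of_ne hrs] at d1
            apply dvd_sub
            · exact Dvd.dvd.mul_left d1 _
            · have e2 : μ r = (μ r - 1) + 1 := by omega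
              rw [e2, pow_succ']
              exact mul_dvd_mul_left _ d2
          · simp only [Function.update_of_ne hrs] at d1
            simp only [Function.update_of_ne hrs'] at d2
            exact dvd_sub (Dvd.dvd.mul_left d1 _) (Dvd.dvd.mul_left d2 _)
      · intro z hz
        have b1 := h1b z hz
        have b2 := h2b z hz
        simp only [eval_mul, eval_C, eval_sub, eval_X]
        rw [norm_mul]
        have c1 : ‖((s':ℂ) - (s:ℂ))⁻¹‖ ≤ 1 := by
          rw [norm_inv]
          apply inv_le_one_of_one_le₀
          have : ((s':ℂ) - (s:ℂ)) = ((s' - s : ℕ) : ℂ) := by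
            push_cast [Nat.cast_sub hss.le]; ring
          rw [this, Complex.norm_natCast]
          have : 1 ≤ s' - s := by omega
          exact_mod_cast this
        have c2 : ‖(z - (s:ℂ)) * H1.eval z - (z - (s':ℂ)) * H2.eval z‖ ≤ 2*R*((4*R)^w*δ) + 2*R*((4*R)^w*δ) := by
          refine (norm_sub_le _ _).trans ?_
          rw [norm_mul, norm_mul]
          gcongr
          · exact hnode s hs z hz
          · exact hnode s' hs' z hz
        calc _ ≤ 1 * (2*R*((4*R)^w*δ) + 2*R*((4*R)^w*δ)) := by gcongr
          _ = _ := by ring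
    · push Not at hc
      have hex : ∃ s < S, 0 < μ s := by
        by_contra! h
        have : ∑ s ∈ Finset.range S, μ s = 0 := Finset.sum_eq_zero (fun x hx => by
          have := h x (Finset.mem_range.1 hx); omega)
        omega
      obtain ⟨s, hs, h0⟩ := hex
      have hz : ∀ r < S, r ≠ s → μ r = 0 := by
        intro r hr hrs
        rcases lt_or_gt_of_ne hrs with h | h
        · by_contra hh
          have := hc r hr s hs h (by omega); omega
        · have := hc s hs r hr h h0; omega
      have hw' : μ s = w + 1 := by
        rw [← hw, Finset.sum_eq_single s]
        · intro b hb hbs; exact hz b (Finset.mem_range.1 hb) hbs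
        · intro h; exact absurd (Finset.mem_range.2 hs) h
      refine ⟨∑ i ∈ Finset.range (μ s), C (t s i) * (X - C (s:ℂ))^i, ?_, ?_⟩
      · intro r hr
        by_cases hrs : r = s
        · subst hrs
          have : Finset.range τ = Finset.range (μ r) ∪ Finset.Ico (μ r) τ := by
            ext x; simp; have := hμ r; omega
          rw [this, Finset.sum_union (by
            rw [Finset.disjoint_left]; intro a ha hb; simp at ha hb; omega)]
          rw [sub_add_cancel_left, dvd_neg]
          apply Finset.dvd_sum
          intro i hi
          apply Dvd.dvd.mul_left
          exact pow_dvd_pow _ (Finset.mem_Ico.1 hi).1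
        · rw [hz r hr hrs]; simp
      · intro z hz
        rw [eval_finsetSum]
        refine (norm_sum_le _ _).trans ?_
        have : ∀ n : ℕ, n ≤ τ → ∑ i ∈ Finset.range n, ‖eval z (C (t s i) * (X - C (s:ℂ))^i)‖ ≤ (4*R)^n * δ := by
          intro n
          induction n with
          | zero => simp [hδ]
          | succ n ihn =>
            intro hn
            rw [Finset.sum_range_succ]
            have i1 := ihn (by omega)
            have i2 : ‖eval z (C (t s n) * (X - C (s:ℂ))^n)‖ ≤ δ * (2*R)^n := by
              simp only [eval_mul, eval_C, eval_pow, eval_sub, eval_X, norm_mul, norm_pow]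
              gcongr
              · exact ht s hs n (by omega)
              · exact hnode s hs z hz
            have i3 : (2*R)^n ≤ (4*R)^n := by gcongr; linarith
            have i4 : 0 ≤ (4*R)^n := by positivity
            calc _ ≤ (4*R)^n*δ + δ*(4*R)^n := by
                    refine add_le_add i1 (i2.trans ?_); gcongr
              _ ≤ (4*R)^(n+1) * δ := by
                    rw [pow_succ]; nlinarith [mul_nonneg i4 hδ]
        have h5 := this (μ s) (hμ s)
        rwa [hw'] at h5 ⊢

theorem factor_one (F : ℂ → ℂ) (hF : Differentiable ℂ F) (c : ℂ) (τ : ℕ)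
    (hO : F =O[𝓝 c] fun z => (z - c)^τ) :
    ∃ h : ℂ → ℂ, Differentiable ℂ h ∧ ∀ z, F z = (z - c)^τ * h z := by
  induction τ generalizing F with
  | zero => exact ⟨F, hF, by simp⟩
  | succ τ ih =>
    obtain ⟨K, hK⟩ := hO.bound
    have h0 : F c = 0 := by
      have := hK.self_of_nhds
      simpa using this
    have hd : Differentiable ℂ (dslope F c) := by
      rw [← differentiableOn_univ]
      exact (Complex.differentiableOn_dslope Filter.univ_mem).2 hF.differentiableOn
    have he : ∀ z, F z = (z - c) * dslope F c z := by
      intro z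
      have := sub_smul_dslope F c z
      rw [h0, sub_zero] at this
      rw [← this]; rfl
    have hp : ∀ᶠ z in 𝓝[≠] c, ‖dslope F c z‖ ≤ K * ‖(z - c)^τ‖ := by
      filter_upwards [hK.filter_mono nhdsWithin_le_nhds, self_mem_nhdsWithin] with z hz hzc
      have hzc' : 0 < ‖z - c‖ := by
        rw [norm_pos_iff, sub_ne_zero]; exact hzc
      rw [he z, norm_mul, norm_pow, pow_succ] at hz
      rw [norm_pow]
      have : ‖z - c‖ * ‖dslope F c z‖ ≤ ‖z - c‖ * (K * ‖z - c‖^τ) := by linarith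
      exact le_of_mul_le_mul_left this hzc'
    have hc : ‖dslope F c c‖ ≤ K * ‖(c - c)^τ‖ := by
      have t1 : Filter.Tendsto (fun z => ‖dslope F c z‖) (𝓝[≠] c) (𝓝 ‖dslope F c c‖) :=
        (hd.continuous.norm.tendsto c).mono_left nhdsWithin_le_nhds
      have t2 : Filter.Tendsto (fun z => K * ‖(z - c)^τ‖) (𝓝[≠] c) (𝓝 (K * ‖(c - c)^τ‖)) := by
        have : Continuous (fun z : ℂ => K * ‖(z - c)^τ‖) := by fun_prop
        exact (this.tendsto c).mono_left nhdsWithin_le_nhds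
      exact le_of_tendsto_of_tendsto t1 t2 hp
    have hO' : dslope F c =O[𝓝 c] fun z => (z - c)^τ := by
      apply IsBigO.of_bound K
      rw [eventually_nhdsWithin_iff] at hp
      filter_upwards [hp] with z hz
      by_cases h : z = c
      · subst h; exact hc
      · exact hz h
    obtain ⟨h, hh, hz⟩ := ih _ hd hO'
    exact ⟨h, hh, fun z => by rw [he z, hz z]; ring⟩

theorem factor_many (F : ℂ → ℂ) (hF : Differentiable ℂ F) (τ : ℕ) (S : ℕ)
    (hO : ∀ s < S, F =O[𝓝 (s:ℂ)] fun z => (z - s)^τ) :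
    ∃ h : ℂ → ℂ, Differentiable ℂ h ∧ ∀ z, F z = (∏ s ∈ Finset.range S, (z - s)^τ) * h z := by
  induction S with
  | zero => exact ⟨F, hF, by simp⟩
  | succ S ih =>
    obtain ⟨h, hh, hz⟩ := ih (fun s hs => hO s (by omega))
    have h1 := hO S (by omega)
    have hq0 : (∏ s ∈ Finset.range S, ((S:ℂ) - s)^τ) ≠ 0 := by
      rw [Finset.prod_ne_zero_iff]
      intro a ha
      apply pow_ne_zero
      rw [sub_ne_zero]
      have := Finset.mem_range.1 ha
      exact_mod_cast this.ne'
    have hqc : Continuous (fun z : ℂ => ∏ s ∈ Finset.range S, (z - s)^τ) := by fun_prop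
    have h2 : h =O[𝓝 (S:ℂ)] fun z => (z - S)^τ := by
      have e : h =ᶠ[𝓝 (S:ℂ)] fun z => (∏ s ∈ Finset.range S, (z - s)^τ)⁻¹ * F z := by
        have := hqc.continuousAt.eventually_ne hq0
        filter_upwards [this] with z hzne
        rw [hz z, inv_mul_cancel_left₀ hzne]
      have h3 : (fun z : ℂ => (∏ s ∈ Finset.range S, (z - s)^τ)⁻¹) =O[𝓝 (S:ℂ)] (fun _ => (1:ℂ)) := by
        exact (hqc.continuousAt.inv₀ hq0).tendsto.isBigO_one ℂ
      have := h3.mul h1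
      simp only [one_mul] at this
      exact e.trans_isBigO this
    obtain ⟨k, hk, hkz⟩ := factor_one h hh _ τ h2
    refine ⟨k, hk, fun z => ?_⟩
    rw [hz z, hkz z, Finset.prod_range_succ]; ring

theorem schwarz_many (F : ℂ → ℂ) (hF : Differentiable ℂ F) (τ : ℕ) (S S' : ℕ) (hS : S ≤ S') (hS1 : 1 ≤ S')
    (hO : ∀ s < S, F =O[𝓝 (s:ℂ)] fun z => (z - s)^τ) (V : ℝ)
    (hV : ∀ z : ℂ, ‖z‖ ≤ 5 * S' → ‖F z‖ ≤ V) (x : ℕ) (hx : x ≤ S') :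
    ‖F x‖ ≤ V / 4^(S*τ) := by
  obtain ⟨h, hh, hz⟩ := factor_many F hF τ S hO
  have hS1' : (1:ℝ) ≤ S' := by exact_mod_cast hS1
  have hV0 : 0 ≤ V := (norm_nonneg _).trans (hV 0 (by simp))
  have hb : ∀ z ∈ frontier (Metric.ball (0:ℂ) (5*S')), ‖h z‖ ≤ V / (4*S')^(S*τ) := by
    intro z hz1
    rw [frontier_ball _ (by positivity)] at hz1
    have hzn : ‖z‖ = 5 * S' := by simpa using hz1
    have hQ : (4*(S':ℝ))^(S*τ) ≤ ‖∏ s ∈ Finset.range S, (z - s)^τ‖ := by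
      rw [norm_prod, mul_comm S τ, pow_mul]
      calc ((4*(S':ℝ))^τ)^S = ∏ s ∈ Finset.range S, (4*(S':ℝ))^τ := by simp
        _ ≤ _ := by
          apply Finset.prod_le_prod
          · intros; positivity
          · intro s hs
            rw [norm_pow]
            gcongr
            have h1 : ‖z‖ - ‖(s:ℂ)‖ ≤ ‖z - s‖ := norm_sub_norm_le _ _
            have h2 : ‖(s:ℂ)‖ = s := by simp
            have h3 : (s:ℝ) ≤ S' := by
              have := Finset.mem_range.1 hs
              exact_mod_cast (by omega : s ≤ S')
            linarith
    rw [le_div_iff₀ (by positivity)]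
    have := hV z hzn.le
    rw [hz z, norm_mul] at this
    calc ‖h z‖ * (4*(S':ℝ))^(S*τ) ≤ ‖h z‖ * ‖∏ s ∈ Finset.range S, (z - s)^τ‖ := by gcongr
      _ ≤ V := by linarith
  have hx1 : (x:ℂ) ∈ closure (Metric.ball (0:ℂ) (5*S')) := by
    apply subset_closure
    simp
    have : (x:ℝ) ≤ S' := by exact_mod_cast hx
    linarith
  have hm := Complex.norm_le_of_forall_mem_frontier_norm_le Metric.isBounded_ball hh.diffContOnCl hb hx1
  rw [hz x, norm_mul]
  have hP : ‖∏ s ∈ Finset.range S, ((x:ℂ) - s)^τ‖ ≤ (S':ℝ)^(S*τ) := by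
    rw [norm_prod, mul_comm S τ, pow_mul]
    calc _ ≤ ∏ s ∈ Finset.range S, (S':ℝ)^τ := by
          apply Finset.prod_le_prod
          · intros; positivity
          · intro s hs
            rw [norm_pow]
            gcongr
            have h3 : s ≤ S' := by
              have := Finset.mem_range.1 hs
              omega
            have e : ((x:ℂ) - s) = (((x:ℝ) - s : ℝ) : ℂ) := by push_cast; ring
            rw [e, Complex.norm_real, Real.norm_eq_abs, abs_le]
            have h4 : (s:ℝ) ≤ S' := by exact_mod_cast h3
            have h5 : (x:ℝ) ≤ S' := by exact_mod_cast hx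
            have h6 : (0:ℝ) ≤ s := by positivity
            have h7 : (0:ℝ) ≤ x := by positivity
            constructor <;> linarith
      _ = _ := by simp
  calc _ ≤ (S':ℝ)^(S*τ) * (V / (4*S')^(S*τ)) := by gcongr
    _ = _ := by rw [mul_pow]; field_simp

/-- Extrapolation for exponential sums with small Taylor data. -/
theorem extrapolate {ι : Type*} (Λ : Finset ι) (c ω : ι → ℂ) (S S' τ : ℕ) (hS : S ≤ S') (hS1 : 1 ≤ S')
    (δ V : ℝ) (hδ : 0 ≤ δ)
    (ht : ∀ s < S, ∀ i < τ, ‖∑ l ∈ Λ, c l * (ω l)^i * Complex.exp (ω l * s)‖ ≤ δ)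
    (hV : ∀ z : ℂ, ‖z‖ ≤ 5 * S' → ‖∑ l ∈ Λ, c l * Complex.exp (ω l * z)‖ ≤ V) (x : ℕ) (hx : x ≤ S') :
    ‖∑ l ∈ Λ, c l * Complex.exp (ω l * x)‖ ≤ V / 4^(S*τ) + 2 * ((20*S')^(S*τ) * δ) := by
  set t : ℕ → ℕ → ℂ := fun s i => (∑ l ∈ Λ, c l * (ω l)^i * Complex.exp (ω l * s)) / (i.factorial : ℂ) with htdef
  have hS1' : (1:ℝ) ≤ S' := by exact_mod_cast hS1
  obtain ⟨H, hd, hb⟩ := hermite_exists S τ t δ (5*S') hδ (by linarith) (by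
      have : (S:ℝ) ≤ S' := by exact_mod_cast hS
      linarith) (by
      intro s hs i hi
      rw [htdef]
      simp only [norm_div]
      apply div_le_of_le_mul₀ (by positivity) hδ
      have h1 := ht s hs i hi
      have h2 : (1:ℝ) ≤ ‖(i.factorial:ℂ)‖ := by
        rw [Complex.norm_natCast]
        exact_mod_cast Nat.one_le_iff_ne_zero.2 i.factorial_ne_zero
      nlinarith) (S*τ) (fun _ => τ) (fun _ => le_rfl) (by simp)
  have e20 : (4*(5*(S':ℝ))) = 20*S' := by ring
  rw [e20] at hb
  set F : ℂ → ℂ := fun z => (∑ l ∈ Λ, c l * Complex.exp (ω l * z)) - H.eval z with hFdef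
  have hFd : Differentiable ℂ F := by
    rw [hFdef]
    apply Differentiable.sub
    · fun_prop
    · exact H.differentiable
  have hO : ∀ s < S, F =O[𝓝 (s:ℂ)] fun z => (z - s)^τ := by
    intro s hs
    obtain ⟨Q, hQ⟩ := hd s hs
    have hexp : ∀ l, (fun z : ℂ => Complex.exp (ω l * z) - Complex.exp (ω l * s) * ∑ i ∈ Finset.range τ, (ω l * (z - s))^i / i.factorial) =O[𝓝 (s:ℂ)] fun z => (z - s)^τ := by
      intro l
      have h1 := Complex.exp_sub_sum_range_isBigO_pow τ
      have h2 : Filter.Tendsto (fun z : ℂ => ω l * (z - s)) (𝓝 (s:ℂ)) (𝓝 0) := by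
        have : Continuous (fun z : ℂ => ω l * (z - s)) := by fun_prop
        have h3 := this.tendsto (s:ℂ)
        simpa using h3
      have h3 := (h1.comp_tendsto h2).const_mul_left (Complex.exp (ω l * s))
      have h4 : ((fun x : ℂ => x^τ) ∘ fun z : ℂ => ω l * (z - s)) =O[𝓝 (s:ℂ)] fun z => (z - s)^τ := by
        apply IsBigO.of_bound (‖ω l‖^τ)
        apply Filter.Eventually.of_forall
        intro z
        simp [mul_pow]
      refine (h3.trans h4).congr_left ?_
      intro z
      simp only [Function.comp]
      rw [mul_sub, ← Complex.exp_add]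
      congr 2
      ring
    have hsum : (fun z => ∑ l ∈ Λ, c l * (Complex.exp (ω l * z) - Complex.exp (ω l * s) * ∑ i ∈ Finset.range τ, (ω l * (z - s))^i / i.factorial)) =O[𝓝 (s:ℂ)] fun z => (z - s)^τ := by
      apply IsBigO.fun_sum
      intro l _
      exact (hexp l).const_mul_left _
    have hpoly : (fun z : ℂ => (z - s)^τ * Q.eval z) =O[𝓝 (s:ℂ)] fun z => (z - s)^τ := by
      have h1 : (fun z : ℂ => Q.eval z) =O[𝓝 (s:ℂ)] (fun _ => (1:ℂ)) :=
        (Q.continuous.continuousAt).tendsto.isBigO_one ℂ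
      have := (isBigO_refl (fun z : ℂ => (z - s)^τ) (𝓝 (s:ℂ))).mul h1
      simpa using this
    refine (hsum.sub hpoly).congr_left ?_
    intro z
    have hHz : H.eval z = (∑ i ∈ Finset.range τ, t s i * (z - s)^i) + (z - s)^τ * Q.eval z := by
      have := congrArg (eval z) hQ
      simp only [eval_sub, eval_mul, eval_pow, eval_X, eval_C, eval_finsetSum] at this
      linear_combination this
    simp only [hFdef, hHz]
    have : ∑ i ∈ Finset.range τ, t s i * (z - s)^i = ∑ l ∈ Λ, c l * (Complex.exp (ω l * s) * ∑ i ∈ Finset.range τ, (ω l * (z - s))^i / i.factorial) := by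
      simp only [htdef, Finset.mul_sum, Finset.sum_div, Finset.sum_mul]
      rw [Finset.sum_comm]
      refine Finset.sum_congr rfl fun l _ => Finset.sum_congr rfl fun i _ => ?_
      rw [mul_pow]; ring
    rw [this]
    simp only [mul_sub, Finset.sum_sub_distrib]
    ring
  have hFV : ∀ z : ℂ, ‖z‖ ≤ 5 * S' → ‖F z‖ ≤ V + (20*S')^(S*τ) * δ := by
    intro z hz
    exact (norm_sub_le _ _).trans (add_le_add (hV z hz) (hb z hz))
  have h1 := schwarz_many F hFd τ S S' hS hS1 hO _ hFV x hx
  have h2 := hb x (by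
    rw [Complex.norm_natCast]
    have : (x:ℝ) ≤ S' := by exact_mod_cast hx
    linarith)
  have h3 : (∑ l ∈ Λ, c l * Complex.exp (ω l * x)) = F x + H.eval (x:ℂ) := by simp [hFdef]
  rw [h3]
  refine (norm_add_le _ _).trans ?_
  have h4 : (1:ℝ) ≤ 4^(S*τ) := one_le_pow₀ (by norm_num)
  have h5 : 0 ≤ (20*(S':ℝ))^(S*τ) * δ := by positivity
  have h6 : (20*(S':ℝ))^(S*τ) * δ / 4^(S*τ) ≤ (20*S')^(S*τ) * δ := div_le_self h5 h4
  rw [add_div] at h1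
  linarith

end partP1

section partP2
open Polynomial Asymptotics Topology

theorem vand {ι : Type*} (Λ : Finset ι) (c x : ι → ℝ) (N : ℕ) (hN : (Λ.image x).card ≤ N)
    (h : ∀ s < N, ∑ i ∈ Λ, c i * x i ^ s = 0) (r : ℝ) :
    ∑ i ∈ Λ.filter (fun i => x i = r), c i = 0 := by
  by_cases hr : r ∈ Λ.image x
  swap
  · rw [Finset.filter_false_of_mem]
    · simp
    · intro i hi hir
      exact hr (Finset.mem_image.2 ⟨i, hi, hir⟩)
  have hpoly : ∀ Q : ℝ[X], Q.natDegree < N → ∑ i ∈ Λ, c i * Q.eval (x i) = 0 := by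
    intro Q hQ
    have : ∀ i ∈ Λ, c i * Q.eval (x i) = ∑ s ∈ Finset.range N, Q.coeff s * (c i * x i ^ s) := by
      intro i hi
      rw [Polynomial.eval_eq_sum_range' hQ, Finset.mul_sum]
      exact Finset.sum_congr rfl fun s hs => by ring
    rw [Finset.sum_congr rfl this, Finset.sum_comm]
    apply Finset.sum_eq_zero
    intro s hs
    rw [← Finset.mul_sum, h s (Finset.mem_range.1 hs), mul_zero]
  set Q : ℝ[X] := ∏ y ∈ (Λ.image x).erase r, (X - C y) with hQ
  have hdeg : Q.natDegree < N := by
    rw [hQ, Polynomial.natDegree_prod_of_monic _ _ (fun y _ => monic_X_sub_C y)]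
    simp only [natDegree_X_sub_C, Finset.sum_const, smul_eq_mul, mul_one]
    have := Finset.card_erase_lt_of_mem hr
    omega
  have h0 := hpoly Q hdeg
  have hQr : Q.eval r ≠ 0 := by
    rw [hQ, Polynomial.eval_prod, Finset.prod_ne_zero_iff]
    intro y hy
    simp only [eval_sub, eval_X, eval_C]
    exact sub_ne_zero.2 (Finset.ne_of_mem_erase hy).symm
  have h1 : ∑ i ∈ Λ, c i * Q.eval (x i) = (∑ i ∈ Λ.filter (fun i => x i = r), c i) * Q.eval r := by
    rw [Finset.sum_mul, Finset.sum_filter]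
    apply Finset.sum_congr rfl
    intro i hi
    split_ifs with hir
    · rw [hir]
    · have : Q.eval (x i) = 0 := by
        rw [hQ, Polynomial.eval_prod]
        apply Finset.prod_eq_zero (i := x i)
        · exact Finset.mem_erase.2 ⟨hir, Finset.mem_image_of_mem _ hi⟩
        · simp
      rw [this, mul_zero]
  rw [h1] at h0
  exact (mul_eq_zero.1 h0).resolve_right hQr

theorem box {ι κ : Type*} [Fintype ι] [Fintype κ] [DecidableEq ι] [DecidableEq κ] (w : κ → ι → ℝ) (X K : ℕ) (hX : 0 < X)
    (ε : ℝ) (hε : 0 < ε)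
    (hb : ∀ k, ∑ i, (X:ℝ) * |w k i| ≤ K * ε)
    (hcard : (2 * K + 1) ^ Fintype.card κ < X ^ Fintype.card ι) :
    ∃ p : ι → ℤ, p ≠ 0 ∧ (∀ i, |p i| ≤ X) ∧ ∀ k, |∑ i, (p i : ℝ) * w k i| ≤ ε := by
  classical
  let F : (ι → Fin X) → (κ → ℤ) := fun p k => ⌊(∑ i, ((p i : ℕ) : ℝ) * w k i) / ε⌋
  have hbd : ∀ (p : ι → Fin X) k, |∑ i, ((p i : ℕ) : ℝ) * w k i| ≤ K * ε := by
    intro p k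
    refine le_trans (Finset.abs_sum_le_sum_abs _ _) (le_trans (Finset.sum_le_sum ?_) (hb k))
    intro i _
    rw [abs_mul, Nat.abs_cast]
    apply mul_le_mul_of_nonneg_right _ (abs_nonneg _)
    exact_mod_cast (p i).2.le
  have hmaps : ∀ p ∈ (Finset.univ : Finset (ι → Fin X)), F p ∈ Fintype.piFinset (fun _ : κ => Finset.Icc (-(K:ℤ)) K) := by
    intro p _
    rw [Fintype.mem_piFinset]
    intro k
    rw [Finset.mem_Icc]
    have h := abs_le.1 (hbd p k)
    constructor
    · rw [Int.le_floor]
      push_cast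
      rw [le_div_iff₀ hε]
      linarith [h.1]
    · have : ((F p k : ℤ):ℝ) ≤ K := by
        refine le_trans (Int.floor_le _) ?_
        rw [div_le_iff₀ hε]
        exact h.2
      exact_mod_cast this
  have hc : (Fintype.piFinset (fun _ : κ => Finset.Icc (-(K:ℤ)) K)).card < (Finset.univ : Finset (ι → Fin X)).card := by
    rw [Fintype.card_piFinset]
    simp only [Int.card_Icc, Finset.prod_const, Finset.card_univ, Fintype.card_fun, Fintype.card_fin]
    have : ((K:ℤ) + 1 - -K).toNat = 2 * K + 1 := by omega
    rw [this]
    exact hcard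
  obtain ⟨p, _, q, _, hpq, hF⟩ := Finset.exists_ne_map_eq_of_card_lt_of_maps_to hc hmaps
  refine ⟨fun i => ((p i : ℕ):ℤ) - ((q i : ℕ):ℤ), ?_, ?_, ?_⟩
  · intro h
    apply hpq
    funext i
    have := congrFun h i
    simp only [Pi.zero_apply] at this
    apply Fin.ext
    omega
  · intro i
    have := (p i).2
    have := (q i).2
    rw [abs_le]
    constructor <;> (dsimp only; omega)
  · intro k
    have hFk := congrFun hF k
    have h1 : |(∑ i, ((p i : ℕ) : ℝ) * w k i) / ε - (∑ i, ((q i : ℕ) : ℝ) * w k i) / ε| < 1 :=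
      Int.abs_sub_lt_one_of_floor_eq_floor hFk
    rw [← sub_div, abs_div, abs_of_pos hε, div_lt_one hε] at h1
    refine le_trans (le_of_eq ?_) h1.le
    rw [← Finset.sum_sub_distrib]
    congr 1
    apply Finset.sum_congr rfl
    intro i _
    push_cast
    ring

/-- Extrapolation step. -/
theorem step {ι : Type*} (Λ : Finset ι) (p : ι → ℤ) (u v ρ : ι → ℝ) (a l : ℝ) (ha : 0 ≤ a) (hl : 0 ≤ l)
    (hal : a + l ≤ 4)
    (S S' τ Tj T : ℕ) (hS : S ≤ S') (hS1 : 1 ≤ S') (hT : Tj ≤ T) (V ε₀ κ : ℝ) (hε : 0 ≤ ε₀)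
    (hzero : ∀ m₁ m₂ s, m₁ + m₂ < Tj → s < S → ∑ i ∈ Λ, (p i : ℝ) * (u i ^ m₁ * v i ^ m₂) * ρ i ^ s = 0)
    (happ : ∀ m₁ m₂ s, m₁ + m₂ < T → s ≤ S' →
      |∑ i ∈ Λ, (p i : ℝ) * (u i ^ m₁ * v i ^ m₂) * ρ i ^ s
        - ∑ i ∈ Λ, (p i : ℝ) * (u i ^ m₁ * v i ^ m₂) * Real.exp ((u i * a + v i * l) * s)| ≤ ε₀)
    (hV : ∀ m₁ m₂, m₁ + m₂ < T → ∀ z : ℂ, ‖z‖ ≤ 5 * S' →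
      ‖∑ i ∈ Λ, (((p i : ℝ) * (u i ^ m₁ * v i ^ m₂) : ℝ) : ℂ) * Complex.exp (((u i * a + v i * l : ℝ) : ℂ) * z)‖ ≤ V)
    (hliou : ∀ m₁ m₂ s, m₁ + m₂ < T → s ≤ S' → ∑ i ∈ Λ, (p i : ℝ) * (u i ^ m₁ * v i ^ m₂) * ρ i ^ s ≠ 0 →
      κ ≤ |∑ i ∈ Λ, (p i : ℝ) * (u i ^ m₁ * v i ^ m₂) * ρ i ^ s|)
    (hnum : V / 4 ^ (S * τ) + 2 * ((20 * S') ^ (S * τ) * (4 ^ τ * ε₀)) + ε₀ < κ) :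
    ∀ m₁ m₂ s, m₁ + m₂ + τ ≤ Tj → s ≤ S' → m₁ + m₂ < T → ∑ i ∈ Λ, (p i : ℝ) * (u i ^ m₁ * v i ^ m₂) * ρ i ^ s = 0 := by
  intro m₁ m₂ s hm hs hmT
  by_contra hne
  have hκ := hliou m₁ m₂ s hmT hs hne
  have hder : ∀ t < S, ∀ i < τ, ‖∑ x ∈ Λ, (((p x : ℝ) * (u x ^ m₁ * v x ^ m₂) : ℝ) : ℂ) * (((u x * a + v x * l : ℝ) : ℂ))^i
      * Complex.exp (((u x * a + v x * l : ℝ) : ℂ) * (t:ℕ))‖ ≤ 4 ^ τ * ε₀ := by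
    intro t ht i hi
    have e1 : ∑ x ∈ Λ, (((p x : ℝ) * (u x ^ m₁ * v x ^ m₂) : ℝ) : ℂ) * (((u x * a + v x * l : ℝ) : ℂ))^i
      * Complex.exp (((u x * a + v x * l : ℝ) : ℂ) * (t:ℕ)) =
      ((∑ j ∈ Finset.range (i+1), a^j * l^(i-j) * (i.choose j) *
        ∑ x ∈ Λ, (p x : ℝ) * (u x ^ (m₁+j) * v x ^ (m₂+(i-j))) * Real.exp ((u x * a + v x * l) * t) : ℝ) : ℂ) := by
      simp_rw [Finset.mul_sum]
      rw [Finset.sum_comm, Complex.ofReal_sum]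
      apply Finset.sum_congr rfl
      intro x _
      have : ∑ j ∈ Finset.range (i+1), a^j * l^(i-j) * (i.choose j) *
        ((p x : ℝ) * (u x ^ (m₁+j) * v x ^ (m₂+(i-j))) * Real.exp ((u x * a + v x * l) * t))
        = (p x : ℝ) * (u x ^ m₁ * v x ^ m₂) * (u x * a + v x * l)^i * Real.exp ((u x * a + v x * l) * t) := by
        rw [add_pow, Finset.mul_sum, Finset.sum_mul]
        apply Finset.sum_congr rfl
        intro j _
        ring
      rw [this]
      push_cast
      rfl
    rw [e1, Complex.norm_real, Real.norm_eq_abs]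
    calc _ ≤ ∑ j ∈ Finset.range (i+1), a^j * l^(i-j) * (i.choose j) * ε₀ := by
          refine le_trans (Finset.abs_sum_le_sum_abs _ _) (Finset.sum_le_sum ?_)
          intro j hj
          have hj' : j ≤ i := Nat.lt_succ_iff.1 (Finset.mem_range.1 hj)
          rw [abs_mul, abs_of_nonneg (by positivity)]
          apply mul_le_mul_of_nonneg_left _ (by positivity)
          have h1 := happ (m₁+j) (m₂+(i-j)) t (by omega) (by omega)
          rw [hzero (m₁+j) (m₂+(i-j)) t (by omega) ht, zero_sub, abs_neg] at h1
          exact h1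
      _ = (a + l)^i * ε₀ := by rw [add_pow, Finset.sum_mul]
      _ ≤ 4 ^ τ * ε₀ := by
          apply mul_le_mul_of_nonneg_right _ hε
          calc (a+l)^i ≤ 4^i := pow_le_pow_left₀ (by positivity) hal i
            _ ≤ 4^τ := pow_le_pow_right₀ (by norm_num) hi.le
  have hex := extrapolate Λ (fun x => (((p x : ℝ) * (u x ^ m₁ * v x ^ m₂) : ℝ) : ℂ)) (fun x => ((u x * a + v x * l : ℝ) : ℂ))
    S S' τ hS hS1 (4^τ * ε₀) V (by positivity) hder (hV m₁ m₂ hmT) s hs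
  have e2 : ∑ x ∈ Λ, (((p x : ℝ) * (u x ^ m₁ * v x ^ m₂) : ℝ) : ℂ) * Complex.exp (((u x * a + v x * l : ℝ) : ℂ) * (s:ℕ))
     = ((∑ x ∈ Λ, (p x : ℝ) * (u x ^ m₁ * v x ^ m₂) * Real.exp ((u x * a + v x * l) * s) : ℝ) : ℂ) := by
    push_cast
    rfl
  rw [e2, Complex.norm_real, Real.norm_eq_abs] at hex
  have h3 := happ m₁ m₂ s hmT hs
  have h4 := abs_sub_abs_le_abs_sub (∑ i ∈ Λ, (p i : ℝ) * (u i ^ m₁ * v i ^ m₂) * ρ i ^ s) (∑ x ∈ Λ, (p x : ℝ) * (u x ^ m₁ * v x ^ m₂) * Real.exp ((u x * a + v x * l) * s))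
  linarith

end partP2

section partP3

structure LSys (P : ℝ → ℝ → Prop) (α : ℝ) (D : ℕ) : Prop where
  int : ∀ z : ℤ, P z |(z:ℝ)|
  nn : ∀ x ℓ, P x ℓ → 0 ≤ ℓ
  add : ∀ x y a b, P x a → P y b → P (x + y) (a + b)
  mul : ∀ x y a b, P x a → P y b → P (x * y) (a * b)
  gen : P α 1
  mono : ∀ x a b, P x a → a ≤ b → P x b
  liou : ∀ x ℓ, P x ℓ → 1 ≤ ℓ → x ≠ 0 → 1 ≤ |x| * ℓ ^ D

namespace LSys
variable {P : ℝ → ℝ → Prop} {α : ℝ} {D : ℕ}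

theorem one (h : LSys P α D) : P 1 1 := by
  have := h.int 1
  simpa using this

theorem zero (h : LSys P α D) : P 0 0 := by
  have := h.int 0
  simpa using this

theorem pow (h : LSys P α D) {x a : ℝ} (hx : P x a) (n : ℕ) : P (x ^ n) (a ^ n) := by
  induction n with
  | zero => simpa using h.one
  | succ n ih => rw [pow_succ, pow_succ]; exact h.mul _ _ _ _ ih hx

theorem sum (h : LSys P α D) {ι : Type*} (s : Finset ι) (f : ι → ℝ) (b : ℝ) (hb : ∀ i ∈ s, P (f i) b) :
    P (∑ i ∈ s, f i) (s.card * b) := by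
  classical
  induction s using Finset.induction_on with
  | empty => simpa using h.zero
  | insert i s hi ih =>
    rw [Finset.sum_insert hi, Finset.card_insert_of_notMem hi]
    have h1 := h.add _ _ _ _ (hb i (Finset.mem_insert_self _ _)) (ih fun j hj => hb j (Finset.mem_insert_of_mem hj))
    convert h1 using 1
    push_cast
    ring
end LSys

theorem pow_big (M : ℕ) (hM : 600 ≤ M) : M ^ 58 ≤ 2 ^ M := by
  induction M, hM using Nat.le_induction with
  | base =>
    rw [show (600:ℕ) = 200 * 3 from rfl, pow_mul]
    norm_num
  | succ M hM ih =>
    have h1 : (M + 1) ^ 58 ≤ 2 * M ^ 58 := by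
      have : (600 * (M+1)) ^ 58 ≤ (601 * M)^58 := Nat.pow_le_pow_left (by omega) _
      rw [mul_pow, mul_pow] at this
      have h2 : (601:ℕ)^58 ≤ 2 * 600^58 := by norm_num
      have h3 : (0:ℕ) < 600^58 := by positivity
      have : 600^58 * (M+1)^58 ≤ 600^58 * (2 * M^58) := by
        calc _ ≤ 601^58 * M^58 := this
          _ ≤ (2 * 600^58) * M^58 := Nat.mul_le_mul_right _ h2
          _ = _ := by ring
      exact Nat.le_of_mul_le_mul_left this h3
    rw [pow_succ 2]
    omega

/-- the exponent beta -/
def bet (M s : ℕ) : ℕ := M + M^5 * M^13 + 2 * M * (256 * M^3 * M^13) + 2 * M * M^13 * s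

theorem par1 (M S : ℕ) (hM : 600 ≤ M) (hS : M^4 ≤ S) :
    (M + M^5 * M^13 + 2 * M * (256 * M^3 * M^13)) + 10 * M * M^13 * (M * S) + 5 * M * bet M (M*S) + 2
      ≤ 2 * (S * (6 * M^3 * M^13)) := by
  obtain ⟨Y, hY⟩ : ∃ Y, Y = M^13 * S := ⟨_, rfl⟩
  have h1 : M^5 * M^13 ≤ M * Y := by
    rw [hY]
    calc M^5 * M^13 = M * (M^13 * M^4) := by ring
      _ ≤ _ := by gcongr
  have h2 : 2 * M * (256 * M^3 * M^13) ≤ M * Y := by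
    rw [hY]
    calc 2 * M * (256 * M^3 * M^13) = 512 * (M^13 * M^4) := by ring
      _ ≤ M * (M^13 * S) := by gcongr; omega
  have hM1 : 1 ≤ M := by omega
  have h3 : M ≤ Y := by
    rw [hY]
    calc M = M^1 * 1 := by ring
      _ ≤ M^13 * S := by
        apply Nat.mul_le_mul (Nat.pow_le_pow_right hM1 (by norm_num))
        exact le_trans (Nat.one_le_pow _ _ hM1) hS
  have e1 : 10 * M * M^13 * (M * S) = 10 * M^2 * Y := by rw [hY]; ring
  have e2 : bet M (M*S) ≤ Y + 2 * M * Y + 2 * M^2 * Y := by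
    unfold bet
    have : 2 * M * M^13 * (M*S) = 2 * M^2 * Y := by rw [hY]; ring
    rw [this]
    linarith
  have e3 : 2 * (S * (6 * M^3 * M^13)) = 12 * M^3 * Y := by rw [hY]; ring
  rw [e1, e3]
  have e4 : 5 * M * bet M (M*S) ≤ 5 * M * (Y + 2 * M * Y + 2 * M^2 * Y) := Nat.mul_le_mul_left _ e2
  have h5 : M * Y * 600 ≤ M * Y * M := Nat.mul_le_mul_left _ hM
  have h6 : M * (M * Y * 600) ≤ M * (M * Y * M) := Nat.mul_le_mul_left _ h5
  have h7 : 1 * Y ≤ M * Y := Nat.mul_le_mul_right _ hM1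
  have h8 : M * Y = M * Y := rfl
  nlinarith

theorem par2 (M S e : ℕ) (hM : 600 ≤ M) (hS : M^4 ≤ S) (hS2 : S ≤ M^39) (he : 2^M ≤ 16 * e) :
    M * (S * (6 * M^3 * M^13)) + 2 * (6 * M^3 * M^13) + (bet M (M*S) + 2 * M) + 5 * M * bet M (M*S) + 3 ≤ e := by
  have hp := par1 M S hM hS
  have hb := pow_big M hM
  have hM1 : 1 ≤ M := by omega
  have h1 : M * (S * (6 * M^3 * M^13)) ≤ 6 * M^56 := by
    calc _ ≤ M * (M^39 * (6 * M^3 * M^13)) := by gcongr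
      _ = 6 * M^56 := by ring
  have h2 : 2 * (S * (6 * M^3 * M^13)) ≤ M * (S * (6 * M^3 * M^13)) := Nat.mul_le_mul_right _ (by omega)
  have h3 : 2 * (6 * M^3 * M^13) ≤ M^56 := by
    calc 2 * (6 * M^3 * M^13) = 12 * M^16 := by ring
      _ ≤ M * M^16 := by gcongr; omega
      _ = M^17 := by ring
      _ ≤ M^56 := Nat.pow_le_pow_right hM1 (by norm_num)
  have h4 : M ≤ M^56 := by
    calc M = M^1 := by ring
      _ ≤ M^56 := Nat.pow_le_pow_right hM1 (by norm_num)
  have h5 : 600 * 600 * M^56 ≤ M^58 := by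
    calc 600 * 600 * M^56 ≤ M * M * M^56 := by gcongr
      _ = M^58 := by ring
  have h6 : bet M (M*S) ≤ M * bet M (M*S) := Nat.le_mul_of_pos_left _ (by omega)
  have h7 : 5 * M * bet M (M*S) = 5 * (M * bet M (M * S)) := by ring
  rw [h7] at hp ⊢
  omega

theorem par3 (M : ℕ) (hM : 600 ≤ M) :
    (bet M (M^4) + 5 * M * bet M (M^4) + 3) * ((256 * M^3 * M^13)^2 * M^4) < M^5 * M^13 * (M^13 * (M*M^13 * M^13)) := by
  have hM1 : 1 ≤ M := by omega
  have hb : bet M (M^4) ≤ 4 * M^18 := by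
    unfold bet
    have h1 : 2 * M * (256 * M^3 * M^13) + M ≤ M^18 := by
      have : M ≤ M^17 := Nat.le_self_pow (by norm_num) _
      calc 2 * M * (256 * M^3 * M^13) + M ≤ 2 * M * (256 * M^3 * M^13) + M^17 := by omega
        _ = 513 * M^17 := by ring
        _ ≤ M * M^17 := by gcongr; omega
        _ = M^18 := by ring
    have h2 : 2 * M * M^13 * M^4 = 2 * M^18 := by ring
    have h3 : M^5 * M^13 = M^18 := by ring
    rw [h2, h3]
    omega
  have hb2 : bet M (M^4) + 5 * M * bet M (M^4) + 3 ≤ 28 * M^19 := by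
    have h1 : 5 * M * bet M (M^4) ≤ 5 * M * (4 * M^18) := Nat.mul_le_mul_left _ hb
    have h2 : 5 * M * (4 * M^18) = 20 * M^19 := by ring
    have h3 : M^18 * 600 ≤ M^18 * M := Nat.mul_le_mul_left _ hM
    have h4 : M^18 * M = M^19 := by ring
    have h5 : 1 ≤ M^18 := Nat.one_le_pow _ _ hM1
    omega
  calc _ ≤ 28 * M^19 * ((256 * M^3 * M^13)^2 * M^4) := Nat.mul_le_mul_right _ hb2
    _ = (28 * 65536) * M^55 := by ring
    _ < (600 * 600 * 600) * M^55 := by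
        apply Nat.mul_lt_mul_of_pos_right (by norm_num) (by positivity)
    _ ≤ (M * M * M) * M^55 := by gcongr
    _ = _ := by ring

end partP3

section partP4

/-- Index set -/
abbrev Idx (M : ℕ) := Fin (M^13) × Fin (M * M^13) × Fin (M^13)

/-- the core iteration -/
theorem iterate (M : ℕ) (hM : 600 ≤ M) (e : ℕ) (he : 2^M ≤ 16 * e) (p : Idx M → ℤ) (u v ρ : Idx M → ℝ) (a l : ℝ) (ha : 0 ≤ a) (hl : 0 ≤ l)
    (hal : a + l ≤ 4)
    (happ : ∀ S m₁ m₂ s, m₁ + m₂ < 256 * M^3 * M^13 → s ≤ S → S ≤ M^40 →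
      |∑ i, (p i : ℝ) * (u i ^ m₁ * v i ^ m₂) * ρ i ^ s
        - ∑ i, (p i : ℝ) * (u i ^ m₁ * v i ^ m₂) * Real.exp ((u i * a + v i * l) * s)| ≤ 2^(bet M S + 2 * M) / 2^e)
    (hV : ∀ S m₁ m₂, m₁ + m₂ < 256 * M^3 * M^13 → ∀ z : ℂ, ‖z‖ ≤ 5 * (S:ℕ) →
      ‖∑ i, (((p i : ℝ) * (u i ^ m₁ * v i ^ m₂) : ℝ) : ℂ) * Complex.exp (((u i * a + v i * l : ℝ) : ℂ) * z)‖
        ≤ 2^((M + M^5 * M^13 + 2 * M * (256 * M^3 * M^13)) + 10 * M * M^13 * S))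
    (hliou : ∀ S m₁ m₂ s, m₁ + m₂ < 256 * M^3 * M^13 → s ≤ S → ∑ i, (p i : ℝ) * (u i ^ m₁ * v i ^ m₂) * ρ i ^ s ≠ 0 →
      1 / 2^(5 * M * bet M S) ≤ |∑ i, (p i : ℝ) * (u i ^ m₁ * v i ^ m₂) * ρ i ^ s|)
    (h0 : ∀ m₁ m₂ s, m₁ + m₂ < 256 * M^3 * M^13 → s < M^4 → ∑ i, (p i : ℝ) * (u i ^ m₁ * v i ^ m₂) * ρ i ^ s = 0) :
    ∀ j ≤ 36, ∀ m₁ m₂ s, m₁ + m₂ + j * (6 * M^3 * M^13) < 256 * M^3 * M^13 → s < M^(4+j) →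
      ∑ i, (p i : ℝ) * (u i ^ m₁ * v i ^ m₂) * ρ i ^ s = 0 := by
  intro j
  induction j with
  | zero =>
    intro _ m₁ m₂ s h1 h2
    exact h0 m₁ m₂ s (by omega) (by simpa using h2)
  | succ j ih =>
    intro hj m₁ m₂ s h1 h2
    have hM1 : 1 ≤ M := by omega
    have hS4 : M^4 ≤ M^(4+j) := Nat.pow_le_pow_right hM1 (by omega)
    have hS39 : M^(4+j) ≤ M^39 := Nat.pow_le_pow_right hM1 (by omega)
    have hS40 : M * M^(4+j) ≤ M^40 := by
      calc M * M^(4+j) ≤ M * M^39 := Nat.mul_le_mul_left _ hS39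
        _ = M^40 := by ring
    have q1 := par1 M (M^(4+j)) hM hS4
    have q2 := par2 M (M^(4+j)) e hM hS4 hS39 he
    set S := M^(4+j) with hSdef
    refine step Finset.univ p u v ρ a l ha hl hal S (M*S) (6 * M^3 * M^13) (256 * M^3 * M^13 - j * (6 * M^3 * M^13)) (256 * M^3 * M^13)
      (Nat.le_mul_of_pos_left _ hM1) (Nat.mul_pos hM1 (by positivity)) (Nat.sub_le _ _) _ _ _ (by positivity) ?_
      (fun m₁ m₂ s hm hs => happ (M*S) m₁ m₂ s hm hs hS40) (fun m₁ m₂ hm z hz => hV (M*S) m₁ m₂ hm z hz)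
      (fun m₁ m₂ s hm hs hne => hliou (M*S) m₁ m₂ s hm hs hne) ?_ m₁ m₂ s ?_ ?_ ?_
    · intro m₁ m₂ s hm hs
      exact ih (by omega) m₁ m₂ s (by omega) hs
    · have hk : (0:ℝ) < 1 / 2^(5 * M * bet M (M*S)) := by positivity
      have t1 : (2:ℝ)^((M + M^5 * M^13 + 2 * M * (256 * M^3 * M^13)) + 10 * M * M^13 * (M*S)) / 4^(S * (6 * M^3 * M^13))
          ≤ 1 / 2^(5 * M * bet M (M*S)) / 4 := by
        rw [div_div, div_le_div_iff₀ (by positivity) (by positivity)]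
        rw [show (4:ℝ) = 2^2 by norm_num, ← pow_mul, ← pow_add (2:ℝ), ← pow_add (2:ℝ), one_mul]
        exact pow_le_pow_right₀ (by norm_num : (1:ℝ) ≤ 2) (by omega)
      have hcast : (20 * ((M * S : ℕ):ℝ)) ≤ 2^M := by
        have h3 : 20 * (M * S) ≤ 2^M := by
          have := pow_big M hM
          calc 20 * (M * S) ≤ M * M^40 := Nat.mul_le_mul (by omega) hS40
            _ = M^41 := by ring
            _ ≤ M^58 := Nat.pow_le_pow_right hM1 (by norm_num)
            _ ≤ _ := this
        exact_mod_cast h3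
      have t2 : 2 * ((20 * ((M * S : ℕ):ℝ))^(S * (6 * M^3 * M^13)) * (4 ^ (6 * M^3 * M^13) * (2^(bet M (M*S) + 2 * M) / 2^e)))
          ≤ 1 / 2^(5 * M * bet M (M*S)) / 4 := by
        calc _ ≤ 2 * (((2:ℝ)^M)^(S * (6 * M^3 * M^13)) * (4 ^ (6 * M^3 * M^13) * (2^(bet M (M*S) + 2 * M) / 2^e))) := by
              gcongr
          _ = 2^(1 + M * (S * (6 * M^3 * M^13)) + 2 * (6 * M^3 * M^13) + (bet M (M*S) + 2 * M)) / 2^e := by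
              rw [show (4:ℝ) = 2^2 by norm_num, ← pow_mul, ← pow_mul]
              rw [pow_add 2 (1 + M * (S * (6 * M^3 * M^13)) + 2 * (6 * M^3 * M^13)), pow_add 2 (1 + M * (S * (6 * M^3 * M^13))), pow_add 2 1]
              ring
          _ ≤ _ := by
              rw [div_div, div_le_div_iff₀ (by positivity) (by positivity)]
              rw [show (4:ℝ) = 2^2 by norm_num, ← pow_add (2:ℝ), ← pow_add (2:ℝ), one_mul]
              exact pow_le_pow_right₀ (by norm_num : (1:ℝ) ≤ 2) (by omega)
      have t3 : (2:ℝ)^(bet M (M*S) + 2 * M) / 2^e ≤ 1 / 2^(5 * M * bet M (M*S)) / 4 := by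
        rw [div_div, div_le_div_iff₀ (by positivity) (by positivity)]
        rw [show (4:ℝ) = 2^2 by norm_num, ← pow_add (2:ℝ), ← pow_add (2:ℝ), one_mul]
        exact pow_le_pow_right₀ (by norm_num : (1:ℝ) ≤ 2) (by omega)
      linarith
    · rw [Nat.succ_mul] at h1; omega
    · have : M^(4+(j+1)) = M * S := by rw [hSdef]; ring
      omega
    · omega

/-- the zero estimate -/
theorem zero_est (M : ℕ) (hM : 600 ≤ M) (p : Idx M → ℤ) (u ρ : Idx M → ℝ) (A α γ : ℝ) (d : ℕ) (hd : M^13 ≤ d)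
    (hα : 1 < α) (hA : 1 < A) (hγ : 0 < γ)
    (hind : ∀ x y : ℕ, 0 < x → A^x ≠ α^y)
    (hu : ∀ i, u i = (i.1 : ℕ) + d * (i.2.2 : ℕ))
    (hρ : ∀ i, ρ i = A^(i.1:ℕ) * α^(i.2.1:ℕ) * γ^(i.2.2:ℕ))
    (h : ∀ m s, m < M^13 → s < M^40 → ∑ i, (p i : ℝ) * (u i ^ m) * ρ i ^ s = 0) : p = 0 := by
  classical
  funext i₀
  have h1 : ∀ m < M^13, ∑ i ∈ Finset.univ.filter (fun i => ρ i = ρ i₀), (p i : ℝ) * u i ^ m = 0 := by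
    intro m hm
    apply vand Finset.univ (fun i => (p i : ℝ) * u i ^ m) ρ (M^40) _ (fun s hs => h m s hm hs)
    refine le_trans Finset.card_image_le ?_
    simp only [Finset.card_univ, Fintype.card_prod, Fintype.card_fin]
    apply le_of_eq
    ring
  have h2 := vand (Finset.univ.filter (fun i => ρ i = ρ i₀)) (fun i => (p i : ℝ)) u (M^13) ?_ h1 (u i₀)
  · rw [Finset.filter_filter] at h2
    have : Finset.univ.filter (fun i => ρ i = ρ i₀ ∧ u i = u i₀) = {i₀} := by
      ext i
      simp only [Finset.mem_filter, Finset.mem_univ, true_and, Finset.mem_singleton]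
      constructor
      · rintro ⟨hr, hu'⟩
        rw [hu, hu] at hu'
        have hu2 : (i.1:ℕ) + d * (i.2.2 : ℕ) = (i₀.1:ℕ) + d * (i₀.2.2 : ℕ) := by exact_mod_cast hu'
        have a1 := i.1.2
        have a2 := i₀.1.2
        have e1 : (i.1:ℕ) = i₀.1 := by
          have := congrArg (· % d) hu2
          simp only [Nat.add_mul_mod_self_left] at this
          rwa [Nat.mod_eq_of_lt (by omega), Nat.mod_eq_of_lt (by omega)] at this
        have e2 : (i.2.2:ℕ) = i₀.2.2 := by
          rw [e1] at hu2
          exact Nat.eq_of_mul_eq_mul_left (by omega) (Nat.add_left_cancel hu2)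
        have e3 : (i.2.1:ℕ) = i₀.2.1 := by
          rw [hρ, hρ, e1, e2] at hr
          have := mul_right_cancel₀ (by positivity) hr
          have := mul_left_cancel₀ (by positivity) this
          exact pow_right_injective₀ (by linarith) (by linarith) this
        exact Prod.ext (Fin.ext e1) (Prod.ext (Fin.ext e3) (Fin.ext e2))
      · rintro rfl
        exact ⟨rfl, rfl⟩
    rw [this, Finset.sum_singleton] at h2
    exact_mod_cast h2
  · refine le_trans Finset.card_image_le ?_
    calc (Finset.univ.filter (fun i => ρ i = ρ i₀)).card ≤ (Finset.univ : Finset (Fin (M^13))).card := by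
          apply Finset.card_le_card_of_injOn (fun i => i.2.2) (fun _ _ => Finset.mem_univ _)
          have key : ∀ x₁ x₂ y₁ y₂ : ℕ, x₁ ≤ x₂ → A^x₁ * α^y₁ = A^x₂ * α^y₂ → x₁ = x₂ := by
            intro x₁ x₂ y₁ y₂ hx hxy
            by_contra hne
            obtain ⟨t, rfl⟩ := Nat.exists_eq_add_of_le hx
            rw [pow_add, mul_assoc] at hxy
            have h3 := mul_left_cancel₀ (by positivity) hxy
            rcases le_total y₂ y₁ with hy | hy
            · obtain ⟨r, rfl⟩ := Nat.exists_eq_add_of_le hy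
              rw [pow_add, mul_comm] at h3
              exact hind t r (by omega) (mul_right_cancel₀ (by positivity) h3).symm
            · have h4 : α^y₁ ≤ α^y₂ := pow_le_pow_right₀ hα.le hy
              have h5 : 1 < A^t := one_lt_pow₀ hA (by omega)
              have h6 : 0 < α^y₂ := by positivity
              nlinarith
          intro i hi i' hi' hii
          simp only [Finset.coe_filter, Finset.mem_univ, true_and, Set.mem_ofPred_eq] at hi hi'
          have hr : ρ i = ρ i' := hi.trans hi'.symm
          have e2 : (i.2.2:ℕ) = i'.2.2 := congrArg Fin.val hii
          rw [hρ, hρ, e2] at hr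
          have hr := mul_right_cancel₀ (by positivity) hr
          have e1 : (i.1:ℕ) = i'.1 := by
            rcases le_total (i.1:ℕ) i'.1 with hx | hx
            · exact key _ _ _ _ hx hr
            · exact (key _ _ _ _ hx hr.symm).symm
          have e3 : (i.2.1:ℕ) = i'.2.1 := by
            rw [e1] at hr
            have := mul_left_cancel₀ (by positivity) hr
            exact pow_right_injective₀ (by linarith) (by linarith) this
          exact Prod.ext (Fin.ext e1) (Prod.ext (Fin.ext e3) (Fin.ext e2))
      _ = M^13 := by simp

end partP4

section partP5

theorem exp_nat_le (N : ℕ) (x : ℝ) (h : x ≤ N) : Real.exp x ≤ 2^(2*N) := by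
  calc Real.exp x ≤ Real.exp (N * 1) := Real.exp_le_exp.2 (by simpa using h)
    _ = (Real.exp 1)^N := Real.exp_nat_mul 1 N
    _ ≤ 4^N := pow_le_pow_left₀ (Real.exp_pos _).le (by linarith [Real.exp_one_lt_d9]) N
    _ = 2^(2*N) := by rw [pow_mul]; norm_num

theorem baker (P : ℝ → ℝ → Prop) (α : ℝ) (D : ℕ) (hP : LSys P α D) (M : ℕ) (hM : 600 ≤ M) (hD : D ≤ 4 * M)
    (hα1 : 3/2 ≤ α) (hα2 : α ≤ 2) (A : ℕ) (hA2 : 2 ≤ A) (hA10 : A ≤ 10) (γ g h c : ℝ) (hγ : γ = g / h) (hγ0 : 0 < γ)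
    (hh : h ≠ 0) (hPg : P g c) (hPh : P h c) (hhc : |h| ≤ c) (hc1 : 1 ≤ c) (hc2 : c ≤ 2^M) (hlogγ : |Real.log γ| ≤ 4)
    (n d e : ℕ) (hn : n < 2^(M+1)) (hd : d ≤ n) (hd8 : 2^M ≤ 8 * d) (he : 2^M ≤ 16 * e)
    (hΛ : |Real.log γ - (d * Real.log A - n * Real.log α)| ≤ 1 / 2^e)
    (hind : ∀ x y : ℕ, 0 < x → (A:ℝ)^x ≠ α^y) : False := by
  have hM1 : 1 ≤ M := by omega
  have hbig := pow_big M hM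
  obtain ⟨L, hL⟩ : ∃ L, L = M^13 := ⟨_, rfl⟩
  obtain ⟨T, hT⟩ : ∃ T, T = 256 * M^3 * M^13 := ⟨_, rfl⟩
  have hL1 : 1 ≤ L := by rw [hL]; exact Nat.one_le_pow _ _ hM1
  have hL14 : 600 * L ≤ M^14 := by rw [hL, pow_succ M 13]; nlinarith [Nat.one_le_pow 13 M hM1]
  have hM14 : M^14 ≤ M^58 := Nat.pow_le_pow_right hM1 (by norm_num)
  have hL2 : 600 * L ≤ 2^M := by omega
  have hM40 : M^40 ≤ 2^M := le_trans (Nat.pow_le_pow_right hM1 (by norm_num)) hbig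
  set a := Real.log A with ha
  set l := Real.log α with hl
  set G := Real.log γ with hG
  have ha0 : 0 ≤ a := Real.log_natCast_nonneg A
  have hl0 : 0 ≤ l := Real.log_nonneg (by linarith)
  have hA0 : (0:ℝ) < A := by exact_mod_cast (by omega : 0 < A)
  have hα0 : 0 < α := by linarith
  have hl1 : l ≤ 1 := by
    have := Real.log_le_sub_one_of_pos hα0
    linarith
  have ha3 : a ≤ 3 := by
    have h10 : (A:ℝ) ≤ 10 := by exact_mod_cast hA10
    rw [ha, Real.log_le_iff_le_exp hA0]
    have h3 : Real.exp 3 = (Real.exp 1)^3 := by rw [← Real.exp_nat_mul]; norm_num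
    rw [h3]
    have := Real.exp_one_gt_d9
    have h4 : (2.7:ℝ)^3 ≤ (Real.exp 1)^3 := pow_le_pow_left₀ (by norm_num) (by linarith) 3
    norm_num at h4 ⊢
    linarith
  set η := G - (d * a - n * l) with hη
  have hη1 : |η| ≤ 1 := by
    refine le_trans hΛ ?_
    rw [div_le_one (by positivity)]
    exact one_le_pow₀ (by norm_num)
  -- integer coordinates
  let ui : Idx M → ℤ := fun i => ((i.1:ℕ):ℤ) + d * ((i.2.2:ℕ):ℤ)
  let vi : Idx M → ℤ := fun i => ((i.2.1:ℕ):ℤ) - n * ((i.2.2:ℕ):ℤ)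
  let u : Idx M → ℝ := fun i => ui i
  let v : Idx M → ℝ := fun i => vi i
  let ρ : Idx M → ℝ := fun i => (A:ℝ)^(i.1:ℕ) * α^(i.2.1:ℕ) * γ^(i.2.2:ℕ)
  have hi1 : ∀ i : Idx M, (i.1:ℕ) ≤ L := fun i => by rw [hL]; exact i.1.2.le
  have hi2 : ∀ i : Idx M, (i.2.1:ℕ) ≤ M * L := fun i => by rw [hL]; exact i.2.1.2.le
  have hi3 : ∀ i : Idx M, (i.2.2:ℕ) ≤ L := fun i => by rw [hL]; exact i.2.2.2.le
  have hW : (L:ℤ) * M + 2^(M+1) * L ≤ 2^(2*M) := by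
    have : L * M + 2^(M+1) * L ≤ 2^(2*M) := by
      have e1 : 2^(M+1) * L = 2^M * (2 * L) := by rw [pow_succ]; ring
      have e2 : 2^(2*M) = 2^M * 2^M := by rw [two_mul, pow_add]
      have e3 : M ≤ 2^M := Nat.lt_two_pow_self.le
      have e4 : L * M ≤ L * 2^M := Nat.mul_le_mul_left _ e3
      rw [e1, e2]
      have e5 : 2^M * (3 * L) ≤ 2^M * 2^M := Nat.mul_le_mul_left _ (by omega)
      linarith
    exact_mod_cast this
  have hnz : (n:ℤ) ≤ 2^(M+1) := by exact_mod_cast hn.le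
  have hdz : (d:ℤ) ≤ 2^(M+1) := le_trans (by exact_mod_cast hd) hnz
  have hub : ∀ i, |ui i| ≤ 2^(2*M) := by
    intro i
    have h1 : ((i.1:ℕ):ℤ) ≤ L := by exact_mod_cast hi1 i
    have h3 : ((i.2.2:ℕ):ℤ) ≤ L := by exact_mod_cast hi3 i
    have h4 : (d:ℤ) * ((i.2.2:ℕ):ℤ) ≤ 2^(M+1) * L := mul_le_mul hdz h3 (by positivity) (by positivity)
    have h5 : (L:ℤ) * 1 ≤ L * M := mul_le_mul_of_nonneg_left (by exact_mod_cast hM1) (by positivity)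
    rw [abs_of_nonneg (by positivity)]
    linarith
  have hvb : ∀ i, |vi i| ≤ 2^(2*M) := by
    intro i
    have h1 : ((i.2.1:ℕ):ℤ) ≤ M * L := by exact_mod_cast hi2 i
    have h3 : ((i.2.2:ℕ):ℤ) ≤ L := by exact_mod_cast hi3 i
    have h4 : (n:ℤ) * ((i.2.2:ℕ):ℤ) ≤ 2^(M+1) * L := mul_le_mul hnz h3 (by positivity) (by positivity)
    have h6 : 0 ≤ (n:ℤ) * ((i.2.2:ℕ):ℤ) := by positivity
    have h7 : 0 ≤ ((i.2.1:ℕ):ℤ) := by positivity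
    have h8 : 0 ≤ (L:ℤ) * M := by positivity
    have h9 : 0 ≤ (2:ℤ)^(M+1) * L := by positivity
    rw [abs_le]
    constructor <;> simp only [vi] <;> linarith
  -- exponent bound
  have hLR : (1:ℝ) ≤ L := by exact_mod_cast hL1
  have hMR : (600:ℝ) ≤ M := by exact_mod_cast hM
  have hω : ∀ i, u i * a + v i * l = (i.1:ℕ) * a + (i.2.1:ℕ) * l + (i.2.2:ℕ) * (d * a - n * l) := by
    intro i
    simp only [u, v, ui, vi]
    push_cast
    ring
  have hθ : |d * a - n * l| ≤ 5 := by
    have : d * a - n * l = G - η := by rw [hη]; ring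
    rw [this]
    exact le_trans (abs_sub _ _) (by linarith)
  have hML2 : ∀ i : Idx M, (i.2.1:ℕ) * l ≤ (9/10 * (M * L) : ℝ) := by
    intro i
    have hl2 : l ≤ 9/10 := by
      have h1 : l ≤ Real.log 2 := Real.log_le_log hα0 hα2
      linarith [Real.log_two_lt_d9]
    have h2 : ((i.2.1:ℕ):ℝ) ≤ M * L := by exact_mod_cast hi2 i
    have := mul_le_mul h2 hl2 hl0 (by positivity)
    linarith
  have hexpb : ∀ (i : Idx M) (t : ℝ), |t| ≤ 5 → |(i.1:ℕ) * a + (i.2.1:ℕ) * l + (i.2.2:ℕ) * t| ≤ M * L := by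
    intro i t ht
    have h1 : ((i.1:ℕ):ℝ) ≤ L := by exact_mod_cast hi1 i
    have h3 : ((i.2.2:ℕ):ℝ) ≤ L := by exact_mod_cast hi3 i
    have h4 := hML2 i
    have h5 : ((i.1:ℕ):ℝ) * a ≤ L * 3 := mul_le_mul h1 ha3 ha0 (by positivity)
    have h6 : |((i.2.2:ℕ):ℝ) * t| ≤ L * 5 := by
      rw [abs_mul, Nat.abs_cast]
      exact mul_le_mul h3 ht (abs_nonneg _) (by positivity)
    have h7 := abs_le.1 h6
    have h8 : 0 ≤ ((i.1:ℕ):ℝ) * a := by positivity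
    have h9 : 0 ≤ ((i.2.1:ℕ):ℝ) * l := by positivity
    have h10 : (600:ℝ) * L ≤ M * L := mul_le_mul_of_nonneg_right hMR (by positivity)
    rw [abs_le]
    constructor <;> linarith
  have hρexp : ∀ i, ρ i = Real.exp ((i.1:ℕ) * a + (i.2.1:ℕ) * l + (i.2.2:ℕ) * G) := by
    intro i
    rw [Real.exp_add, Real.exp_add, Real.exp_nat_mul, Real.exp_nat_mul, Real.exp_nat_mul, ha, hl, hG,
      Real.exp_log hA0, Real.exp_log hα0, Real.exp_log hγ0]
  have hG5 : |G| ≤ 5 := by linarith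
  have hρs : ∀ i (s : ℕ), |ρ i ^ s| ≤ 2^(2*M*M^13*s) := by
    intro i s
    rw [hρexp, ← Real.exp_nat_mul, Real.abs_exp]
    have := exp_nat_le (M * L * s) (s * ((i.1:ℕ) * a + (i.2.1:ℕ) * l + (i.2.2:ℕ) * G)) (by
      have := (abs_le.1 (hexpb i G hG5)).2
      push_cast
      rw [mul_comm]
      exact mul_le_mul_of_nonneg_right this (by positivity))
    refine le_trans this (le_of_eq ?_)
    rw [hL]
    congr 1
    ring
  have hcard : Fintype.card (Idx M) ≤ 2^M := by
    refine le_trans (le_of_eq ?_) hM40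
    simp only [Fintype.card_prod, Fintype.card_fin]
    ring
  have hcardR : (Fintype.card (Idx M) : ℝ) ≤ 2^M := by exact_mod_cast hcard
  -- monomial bound
  have hmonZ : ∀ i m₁ m₂, m₁ + m₂ < T → |ui i ^ m₁ * vi i ^ m₂| ≤ 2^(2*M*T) := by
    intro i m₁ m₂ hm
    rw [abs_mul, abs_pow, abs_pow]
    calc |ui i|^m₁ * |vi i|^m₂ ≤ (2^(2*M))^m₁ * (2^(2*M))^m₂ :=
          mul_le_mul (pow_le_pow_left₀ (abs_nonneg _) (hub i) _) (pow_le_pow_left₀ (abs_nonneg _) (hvb i) _) (by positivity) (by positivity)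
      _ = 2^(2*M*(m₁+m₂)) := by rw [← pow_add, ← pow_mul]
      _ ≤ 2^(2*M*T) := pow_le_pow_right₀ (by norm_num) (Nat.mul_le_mul_left _ hm.le)
  have hmon : ∀ i m₁ m₂, m₁ + m₂ < T → |u i ^ m₁ * v i ^ m₂| ≤ 2^(2*M*T) := by
    intro i m₁ m₂ hm
    have := hmonZ i m₁ m₂ hm
    simp only [u, v]
    exact_mod_cast this
  -- general sum bound
  obtain ⟨eX, heX⟩ : ∃ eX, eX = M^5 * M^13 := ⟨_, rfl⟩
  have hsum : ∀ (t : Idx M → ℝ) (B : ℝ), (∀ i, |t i| ≤ B) → ∑ i, |t i| ≤ 2^M * B := by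
    intro t B ht
    have hB : 0 ≤ B := le_trans (abs_nonneg _) (ht (⟨0, by positivity⟩, ⟨0, by positivity⟩, ⟨0, by positivity⟩))
    calc ∑ i, |t i| ≤ ∑ i : Idx M, B := Finset.sum_le_sum fun i _ => ht i
      _ = Fintype.card (Idx M) * B := by rw [Finset.sum_const, Finset.card_univ, nsmul_eq_mul]
      _ ≤ 2^M * B := mul_le_mul_of_nonneg_right hcardR hB
  -- Liouville
  have hliou : ∀ p : Idx M → ℤ, (∀ i, |p i| ≤ 2^eX) → ∀ S m₁ m₂ s, m₁ + m₂ < T → s ≤ S →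
      ∑ i, (p i : ℝ) * (u i ^ m₁ * v i ^ m₂) * ρ i ^ s ≠ 0 →
      1 / 2^(5 * M * bet M S) ≤ |∑ i, (p i : ℝ) * (u i ^ m₁ * v i ^ m₂) * ρ i ^ s| := by
    intro p hp S m₁ m₂ s hm hs hne
    have hgh : g = γ * h := by rw [hγ]; field_simp
    have e1 : h^(L*s) * ∑ i, (p i : ℝ) * (u i ^ m₁ * v i ^ m₂) * ρ i ^ s =
        ∑ i, ((p i * (ui i ^ m₁ * vi i ^ m₂) * ((A:ℤ)^(i.1:ℕ))^s : ℤ):ℝ) * ((α^(i.2.1:ℕ))^s * (g^((i.2.2:ℕ)*s) * h^((L - (i.2.2:ℕ)) * s))) := by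
      rw [Finset.mul_sum]
      apply Finset.sum_congr rfl
      intro i _
      have h1 : h^(L*s) = h^((i.2.2:ℕ)*s) * h^((L - (i.2.2:ℕ)) * s) := by
        rw [← pow_add, ← add_mul, Nat.add_sub_cancel' (hi3 i)]
      rw [h1, hgh]
      simp only [ρ, u, v]
      push_cast
      rw [mul_pow, mul_pow, mul_pow, ← pow_mul γ]
      ring
    have h2 : P (h^(L*s) * ∑ i, (p i : ℝ) * (u i ^ m₁ * v i ^ m₂) * ρ i ^ s) (2^(bet M s)) := by
      rw [e1]
      refine hP.mono _ _ _ (hP.sum Finset.univ _ (2^(eX + 2*M*T + 4*(L*s)) * c^(L*s)) ?_) ?_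
      · intro i _
        refine hP.mono _ _ _ (hP.mul _ _ _ _ (hP.mono _ _ (2^(eX + 2*M*T + 4*(L*s))) (hP.int _) ?_)
          (hP.mul _ _ _ _ (hP.pow (hP.pow hP.gen _) _) (hP.mul _ _ _ _ (hP.pow hPg _) (hP.pow hPh _)))) ?_
        · have hz : |p i * (ui i ^ m₁ * vi i ^ m₂) * ((A:ℤ)^(i.1:ℕ))^s| ≤ 2^(eX + 2*M*T + 4*(L*s)) := by
            rw [abs_mul, abs_mul, pow_add, pow_add]
            have hA : |((A:ℤ)^(i.1:ℕ))^s| ≤ 2^(4*(L*s)) := by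
              rw [abs_of_nonneg (by positivity), ← pow_mul, pow_mul 2]
              calc (A:ℤ)^((i.1:ℕ)*s) ≤ (2^4)^((i.1:ℕ)*s) := pow_le_pow_left₀ (by positivity) (by norm_num; omega) _
                _ ≤ (2^4)^(L*s) := pow_le_pow_right₀ (by norm_num) (Nat.mul_le_mul_right _ (hi1 i))
            exact mul_le_mul (mul_le_mul (hp i) (hmonZ i m₁ m₂ hm) (abs_nonneg _) (by positivity)) hA (abs_nonneg _) (by positivity)
          exact_mod_cast hz
        · rw [one_pow, one_pow, one_mul, ← pow_add, ← add_mul, Nat.add_sub_cancel' (hi3 i)]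
      · rw [Finset.card_univ]
        calc (Fintype.card (Idx M) : ℝ) * (2^(eX + 2*M*T + 4*(L*s)) * c^(L*s)) ≤
            2^M * (2^(eX + 2*M*T + 4*(L*s)) * (2^M)^(L*s)) := by gcongr
          _ = 2^(M + (eX + 2*M*T + 4*(L*s) + M*(L*s))) := by
            rw [← pow_mul, ← pow_add, ← pow_add]
          _ ≤ 2^(bet M s) := by
            apply pow_le_pow_right₀ (by norm_num : (1:ℝ) ≤ 2)
            unfold bet
            rw [← heX, ← hT, ← hL]
            have : 4 * (L*s) ≤ M * (L*s) := Nat.mul_le_mul_right _ (by omega)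
            have : 2 * M * L * s = M * (L*s) + M * (L*s) := by ring
            omega
    have h3 := hP.liou _ _ h2 (one_le_pow₀ (by norm_num)) (mul_ne_zero (pow_ne_zero _ hh) hne)
    rw [abs_mul, abs_pow] at h3
    set Q := |∑ i, (p i : ℝ) * (u i ^ m₁ * v i ^ m₂) * ρ i ^ s| with hQ
    have hQ0 : 0 ≤ Q := abs_nonneg _
    have h4 : |h|^(L*s) ≤ 2^(M*(L*s)) := by
      rw [pow_mul 2]
      exact pow_le_pow_left₀ (abs_nonneg _) (hhc.trans hc2) _
    have h5 : ((2:ℝ)^(bet M s))^D ≤ 2^(4 * M * bet M s) := by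
      rw [← pow_mul]
      apply pow_le_pow_right₀ (by norm_num)
      rw [mul_comm]
      exact Nat.mul_le_mul_right _ hD
    have h6 : (1:ℝ) ≤ 2^(M*(L*s)) * Q * 2^(4 * M * bet M s) := by
      refine h3.trans ?_
      gcongr
    rw [div_le_iff₀ (by positivity)]
    refine h6.trans ?_
    rw [mul_comm ((2:ℝ)^(M*(L*s))) Q, mul_assoc, ← pow_add]
    apply mul_le_mul_of_nonneg_left _ hQ0
    apply pow_le_pow_right₀ (by norm_num)
    have hbS : bet M s ≤ bet M S := by unfold bet; gcongr
    have hbL : L * s ≤ bet M s := by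
      unfold bet
      rw [← hL]
      have : 1 * (L * s) ≤ 2 * M * (L * s) := Nat.mul_le_mul_right _ (by omega)
      have : 2 * M * L * s = 2 * M * (L*s) := by ring
      omega
    calc M * (L*s) + 4 * M * bet M s ≤ M * bet M s + 4 * M * bet M s := by gcongr
      _ = 5 * M * bet M s := by ring
      _ ≤ _ := by gcongr
  -- pigeonhole
  set β := bet M (M^4) with hβ
  have hp3 := par3 M hM
  rw [← hβ, ← heX, ← hT] at hp3
  obtain ⟨p, hp0, hpX, hpε⟩ := box (κ := {k : Fin T × Fin T × Fin (M^4) // (k.1:ℕ) + (k.2.1:ℕ) < T}) (ι := Idx M)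
    (fun k i => u i ^ (k.1.1:ℕ) * v i ^ (k.1.2.1:ℕ) * ρ i ^ (k.1.2.2:ℕ)) (2^eX) (2^(β + 5*M*β + 1)) (by positivity)
    (1 / 2^(5*M*β) / 2) (by positivity) (by
      rintro ⟨⟨m₁, m₂, s⟩, hm⟩
      simp only at hm ⊢
      rw [← Finset.mul_sum]
      have h1 := hsum (fun i => u i ^ (m₁:ℕ) * v i ^ (m₂:ℕ) * ρ i ^ (s:ℕ)) (2^(2*M*T) * 2^(2*M*M^13*M^4)) (by
        intro i
        rw [abs_mul]
        refine mul_le_mul (hmon i _ _ hm) ?_ (abs_nonneg _) (by positivity)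
        refine (hρs i s).trans ?_
        apply pow_le_pow_right₀ (by norm_num)
        exact Nat.mul_le_mul_left _ s.2.le)
      have h2 : ((2^eX : ℕ):ℝ) * (2^M * (2^(2*M*T) * 2^(2*M*M^13*M^4))) = 2^β := by
        push_cast
        rw [← pow_add, ← pow_add, ← pow_add, hβ]
        unfold bet
        rw [← heX, ← hT]
        congr 1
        ring
      have h3 : (((2^(β + 5*M*β + 1) : ℕ):ℝ) * (1 / 2^(5*M*β) / 2)) = 2^β := by
        push_cast
        rw [pow_add, pow_add]
        field_simp
      rw [h3, ← h2]
      exact mul_le_mul_of_nonneg_left h1 (by positivity))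
    (by
      calc (2 * 2^(β + 5*M*β + 1) + 1) ^ Fintype.card {k : Fin T × Fin T × Fin (M^4) // (k.1:ℕ) + (k.2.1:ℕ) < T}
          ≤ (2^(β + 5*M*β + 3)) ^ Fintype.card {k : Fin T × Fin T × Fin (M^4) // (k.1:ℕ) + (k.2.1:ℕ) < T} := by
            apply Nat.pow_le_pow_left
            have : 1 ≤ 2^(β + 5*M*β + 1) := Nat.one_le_two_pow
            have h9 : 2^(β + 5*M*β + 3) = 2^(β + 5*M*β + 1) * 4 := by
              rw [show β + 5*M*β + 3 = (β + 5*M*β + 1) + 2 by ring, pow_add 2 (β + 5*M*β + 1) 2]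
              norm_num
            rw [h9]
            generalize 2^(β + 5*M*β + 1) = q at *
            omega
        _ ≤ (2^(β + 5*M*β + 3)) ^ (T^2 * M^4) := by
            apply Nat.pow_le_pow_right (by positivity)
            refine (Fintype.card_subtype_le _).trans (le_of_eq ?_)
            simp only [Fintype.card_prod, Fintype.card_fin]
            ring
        _ = 2^((β + 5*M*β + 3) * (T^2 * M^4)) := by rw [← pow_mul]
        _ < 2^(eX * Fintype.card (Idx M)) := by
            apply Nat.pow_lt_pow_right (by norm_num)
            simp only [Fintype.card_prod, Fintype.card_fin]
            exact hp3
        _ = (2^eX) ^ Fintype.card (Idx M) := by rw [← pow_mul])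
  have hpX' : ∀ i, |p i| ≤ 2^eX := fun i => by
    have := hpX i
    push_cast at this
    exact this
  have hpR : ∀ i, |(p i : ℝ)| ≤ 2^eX := fun i => by
    have := hpX' i
    exact_mod_cast this
  have h0 : ∀ m₁ m₂ s, m₁ + m₂ < T → s < M^4 → ∑ i, (p i : ℝ) * (u i ^ m₁ * v i ^ m₂) * ρ i ^ s = 0 := by
    intro m₁ m₂ s hm hs
    by_contra hne
    have h1 := hliou p hpX' (M^4) m₁ m₂ s hm hs.le hne
    have h2 := hpε ⟨(⟨m₁, by omega⟩, ⟨m₂, by omega⟩, ⟨s, hs⟩), hm⟩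
    simp only at h2
    simp_rw [← mul_assoc] at h1 h2
    have h3 : (0:ℝ) < 1 / 2^(5*M*β) := by positivity
    rw [← hβ] at h1
    linarith
  have hcoef : ∀ i m₁ m₂, m₁ + m₂ < T → |(p i : ℝ) * (u i ^ m₁ * v i ^ m₂)| ≤ 2^(eX + 2*M*T) := by
    intro i m₁ m₂ hm
    rw [abs_mul, pow_add]
    exact mul_le_mul (hpR i) (hmon i m₁ m₂ hm) (abs_nonneg _) (by positivity)
  have hV : ∀ S m₁ m₂, m₁ + m₂ < T → ∀ z : ℂ, ‖z‖ ≤ 5 * (S:ℕ) →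
      ‖∑ i, (((p i : ℝ) * (u i ^ m₁ * v i ^ m₂) : ℝ) : ℂ) * Complex.exp (((u i * a + v i * l : ℝ) : ℂ) * z)‖
        ≤ 2^((M + eX + 2 * M * T) + 10 * M * M^13 * S) := by
    intro S m₁ m₂ hm z hz
    refine (norm_sum_le _ _).trans ?_
    have h1 := hsum (fun i => ‖(((p i : ℝ) * (u i ^ m₁ * v i ^ m₂) : ℝ) : ℂ) * Complex.exp (((u i * a + v i * l : ℝ) : ℂ) * z)‖)
      (2^(eX + 2*M*T) * 2^(2 * (M * L * (5 * S)))) (by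
        intro i
        rw [abs_norm, norm_mul, Complex.norm_real, Real.norm_eq_abs]
        refine mul_le_mul (hcoef i m₁ m₂ hm) ?_ (norm_nonneg _) (by positivity)
        refine (Complex.norm_exp_le_exp_norm _).trans ?_
        apply exp_nat_le
        rw [norm_mul, Complex.norm_real, Real.norm_eq_abs, hω]
        push_cast
        exact mul_le_mul (hexpb i _ hθ) hz (norm_nonneg _) (by positivity))
    simp_rw [abs_norm] at h1
    refine h1.trans (le_of_eq ?_)
    rw [← pow_add, ← pow_add, hL]
    congr 1
    ring
  have happ : ∀ S m₁ m₂ s, m₁ + m₂ < T → s ≤ S → S ≤ M^40 →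
      |∑ i, (p i : ℝ) * (u i ^ m₁ * v i ^ m₂) * ρ i ^ s
        - ∑ i, (p i : ℝ) * (u i ^ m₁ * v i ^ m₂) * Real.exp ((u i * a + v i * l) * s)| ≤ 2^(bet M S + 2 * M) / 2^e := by
    intro S m₁ m₂ s hm hs hS
    rw [← Finset.sum_sub_distrib]
    refine (Finset.abs_sum_le_sum_abs _ _).trans ?_
    have h1 := hsum (fun i => (p i : ℝ) * (u i ^ m₁ * v i ^ m₂) * ρ i ^ s - (p i : ℝ) * (u i ^ m₁ * v i ^ m₂) * Real.exp ((u i * a + v i * l) * s))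
      (2^(eX + 2*M*T) * (2^(2 * (M * L * s)) * (2^(2*M) * (1 / 2^e)))) (by
        intro i
        rw [← mul_sub, abs_mul]
        refine mul_le_mul (hcoef i m₁ m₂ hm) ?_ (abs_nonneg _) (by positivity)
        have e1 : ρ i ^ s = Real.exp ((u i * a + v i * l) * s) * Real.exp ((i.2.2:ℕ) * s * η) := by
          rw [hρexp, ← Real.exp_nat_mul, ← Real.exp_add, hω, hη]
          congr 1
          ring
        rw [e1, ← mul_sub_one, abs_mul, Real.abs_exp]
        refine mul_le_mul ?_ ?_ (abs_nonneg _) (by positivity)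
        · apply exp_nat_le
          rw [hω]
          push_cast
          exact mul_le_mul_of_nonneg_right (abs_le.1 (hexpb i _ hθ)).2 (by positivity)
        · have hy : |(i.2.2:ℕ) * s * η| ≤ L * 2^M * (1 / 2^e) := by
            rw [abs_mul, abs_mul, Nat.abs_cast, Nat.abs_cast]
            have h3 : ((i.2.2:ℕ):ℝ) ≤ L := by exact_mod_cast hi3 i
            have h4 : (s:ℝ) ≤ 2^M := by exact_mod_cast (hs.trans hS).trans hM40
            gcongr
          have h2L : (2 * L : ℝ) ≤ 2^M := by exact_mod_cast (by omega : 2 * L ≤ 2^M)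
          have h6 : 2 * (L * 2^M * (1 / 2^e)) ≤ (2:ℝ)^(2*M) * (1/2^e) := by
            calc 2 * (L * 2^M * (1 / 2^e)) = (2 * L) * 2^M * (1/2^e : ℝ) := by ring
              _ ≤ 2^M * 2^M * (1/2^e) := by gcongr
              _ = _ := by rw [two_mul, pow_add]
          have hMe : 2 * M ≤ e := by
            have := par2 M (M^4) e hM le_rfl (Nat.pow_le_pow_right hM1 (by norm_num)) he
            omega
          have h7 : (2:ℝ)^(2*M) * (1/2^e) ≤ 1 := by
            rw [mul_one_div, div_le_one (by positivity)]
            exact pow_le_pow_right₀ (by norm_num) hMe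
          have h8 := abs_nonneg ((i.2.2:ℕ) * s * η)
          exact (Real.abs_exp_sub_one_le (by linarith)).trans (by linarith))
    refine h1.trans ?_
    rw [mul_one_div, ← mul_div_assoc, ← mul_div_assoc, ← mul_div_assoc, ← pow_add, ← pow_add, ← pow_add]
    apply div_le_div_of_nonneg_right _ (by positivity)
    apply pow_le_pow_right₀ (by norm_num)
    unfold bet
    rw [← heX, ← hT, ← hL]
    have : 2 * (M * L * s) ≤ 2 * M * L * S := by
      calc 2 * (M * L * s) = 2 * M * L * s := by ring
        _ ≤ _ := by gcongr
    omega
  have hit := iterate M hM e he p u v ρ a l ha0 hl0 (by linarith) (by rw [← hT]; exact happ)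
    (by rw [← hT, ← heX]; exact hV) (by rw [← hT]; exact hliou p hpX') (by rw [← hT]; exact h0) 36 le_rfl
  apply hp0
  refine zero_est M hM p u ρ A α γ d (by rw [← hL]; omega) (by linarith) (by exact_mod_cast (by omega : 1 < A)) hγ0 hind
    (fun i => by simp only [u, ui]; push_cast; rfl) (fun i => rfl) ?_
  intro m s hm hs
  have h1 := hit m 0 s (by
    have : M^13 ≤ M^3 * M^13 := Nat.le_mul_of_pos_left _ (by positivity)
    rw [mul_assoc 6, mul_assoc 256]
    omega) hs
  simpa using h1

end partP5

section partN4

/-- force evaluation -/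
def fce {α : Type} (n : ℕ) (f : ℕ → α) : α := Nat.rec (f 0) (fun m _ => f (Nat.succ m)) n

def cnd {α : Type} (b : Bool) (x y : α) : α := Bool.rec y x b

def nlogAux (O Y : ℕ) (f : ℕ) : ℕ → ℕ → ℕ → ℕ :=
  Nat.rec (fun _ _ s => s) (fun _ ih i t s => cnd (Nat.beq t 0) s
     (fce (Nat.div (Nat.mul t Y) O) fun t' => fce (Nat.add s (Nat.div t i)) fun s' => ih (Nat.succ i) t' s')) f

/-- approx of -log(1-Y/O)*O -/
def nlog (O Y : ℕ) : ℕ := nlogAux O Y 2000 1 Y 0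

def powT (O a : ℕ) (f : ℕ) : ℕ → ℕ :=
  Nat.rec (fun _ => O) (fun _ ih k => cnd (Nat.beq k 0) O
     (fce (ih (Nat.div k 2)) fun h => fce (Nat.div (Nat.mul h h) O) fun h2 =>
       cnd (Nat.beq (Nat.mod k 2) 1) (Nat.div (Nat.mul h2 a) O) h2)) f

def xIter (O k R : ℕ) (f : ℕ) : ℕ → ℕ :=
  Nat.rec (fun X => X) (fun _ ih X => fce (powT O (Nat.sub O X) 12 k) fun pw =>
    fce (Nat.div (Nat.sub R (Nat.mul X pw)) (Nat.div (Nat.mul pw (Nat.sub O (Nat.mul (Nat.succ k) X))) (Nat.sub O X))) fun Y =>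
     cnd (Nat.beq Y 0) X (fce (Nat.add X Y) ih)) f

def xOK (O k R X : ℕ) : Bool :=
  cnd (Nat.ble (Nat.mul (2*(k+1)) (X+16)) O)
  (cnd (Nat.ble (Nat.mul X (Nat.add (powT O (Nat.sub O X) 12 k) (Nat.mul 4 k))) R)
   (Nat.ble R (Nat.mul (Nat.add X 16) (powT O (Nat.sub O (Nat.add X 16)) 12 k))) false) false

def tst (L1 L2 G N W2 Q : ℕ) : Bool :=
  fce (Nat.mod (Nat.mul Q G) L1) fun R => fce (Nat.mod (Nat.mul Q L2) L1) fun x =>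
    fce (Nat.add (Nat.mul N (cnd (Nat.ble (Nat.mul 2 x) L1) x (Nat.sub L1 x))) (Nat.mul Q W2)) fun B =>
     cnd (Nat.ble R B) false (Nat.ble (Nat.succ (Nat.add B R)) L1)

/-- homogeneous test -/
def tsth (L1 L2 N W2 Q : ℕ) : Bool :=
  fce (Nat.div (Nat.mul Q L2) L1) fun P => fce (Nat.mod (Nat.mul Q L2) L1) fun x =>
    cnd (Nat.ble (Nat.mul 2 x) L1)
     (cnd (Nat.beq (Nat.gcd P Q) 1) (cnd (Nat.ble Q N) false (Nat.ble (Nat.succ (Nat.add (Nat.mul N x) (Nat.mul Q W2))) L1)) false)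
     (cnd (Nat.beq (Nat.gcd (Nat.succ P) Q) 1) (cnd (Nat.ble Q N) false (Nat.ble (Nat.succ (Nat.add (Nat.mul N (Nat.sub L1 x)) (Nat.mul Q W2))) L1)) false)

/-- Euclid: run until small, then call K -/
def eucl (T : ℕ) (K : ℕ → ℕ → Bool) (f : ℕ) : ℕ → ℕ → Bool :=
  Nat.rec (fun _ _ => false) (fun _ ih a b =>
     cnd (Nat.ble b T) (K a b) (fce (Nat.mod a b) fun r => ih b r)) f

def srch (t : ℕ → Bool) (S : ℕ) (f : ℕ) : ℕ → ℕ → Bool :=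
  Nat.rec (fun _ _ => false) (fun _ ih a b =>
     cnd (fce (Nat.mod b S) fun v => t (cnd (Nat.ble (Nat.mul 2 v) S) v (Nat.sub S v))) true
     (fce (Nat.mod a b) fun r => ih b r)) f

def bt (L1 L2 g N W2 S a b lb : ℕ) : Bool :=
  cnd (Nat.ble lb g) (fce (g - lb) fun G => srch (tst L1 L2 G N W2) S 400 a b) false

def chkK (O S T l2 l3 l5 l7 N W2 : ℕ) (k : ℕ) : Bool :=
  fce (2^(3799-k)) fun R =>
  fce (xIter O k R 100 0 - 4) fun X =>
  cnd (xOK O k R X)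
  (fce (l2 + l5) fun L1 => fce (nlog O X) fun n0 => fce (nlog O (4*X/3)) fun n1 => fce (nlog O (2*X)) fun n2 =>
   fce (nlog O ((k+1)*X)) fun n3 =>
   cnd (Nat.ble n0 l2) (cnd (Nat.ble (n1 + n2 + l2) (L1 + l3 + n3))
   (fce (l2 - n0) fun L2 =>
   fce (L1 + l3 + n3 - (n1 + n2 + l2)) fun g =>
   eucl T (fun a b => cnd (
     [0, l2, 2*l2, l5, l7, 3*l2, 2*l3].all (bt L1 L2 g N W2 S a b))
      (eucl (O*S/2^(k+12)) (fun a b => [l3, l2+l3].all (bt L1 L2 g N W2 S a b)) 3000 a b) false)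
       3000 (L1*S) (L2*S+1)) false) false)
  false

def chkI (S T l2 l3 l5 l7 N W2 : ℕ) : Bool :=
   fce (l2 + l5) fun L1 => fce (L1 + l3) fun g =>
   eucl T (fun a b => cnd (
     [0, l2, 2*l2, l5, l7, 3*l2, 2*l3].all (bt L1 l2 g N W2 S a b))
      (srch (tsth L1 l2 N W2) S 400 a b) false)
       3000 (L1*S) (l2*S+1)

def OO : ℕ := 2^1900
def l2c : ℕ := 62779408947575789274014016747484871824570139514251302215287115907995202138247522318249029771611688229752261622063071531640118973134006444484493017616147935638043088467780333547088437275239929777058729332236784293506759201755649054347925318924406927878967677567166833590588535343860813928424352907934361697086520240053643873648387173567279605218541026080367522049626543361532435063718247241010914521171216126498173029763430208280728218361384928492155353266324729654131108617244786309698119819317768312218603221563110238011166417162535947326470019620980866999219854819308402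
def l3c : ℕ := 99503008999345850737770889137585343265614277676152281610551805065192702585064748744164283926626247147064896319302944745943513515226082728056571221423916073298089742757339966976732209785499551194262988735884928231909741130221961244622326092714815611266442226242529512958474297094670970176354104467630327578631078372396421948560226322409819359177949238711574960109582964998606463885651942391308276551344560505210829121170362726712540740893646750965755172590718029382806380224549422288213416647795487730712003440819430726675705565017335733277939832409487649644678425251339531
def l5c : ℕ := 145769273415799282031188801345273409582132417246516446803532954196559202496041756619033644248964916655190312411722597860169817570115013313405824048834288684684062399603228455004753075006654259186277265835040207662625419760852532299322494061708242829917780168880325043039925300208843384854749758493635510146792471454547806401819682012127742368017071870776686177583747573237109875951686963991780198979145671839937919918927100351572445295443093802123555774068251472025943844140096168149402722137225001208623702212454256064926620529479775542058968188161683350032875281997529332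
def l7c : ℕ := 176244082712844083804597542277769803310962110633781816628052865189360397022362185392290442475036552744927605590880874799120698032363416717310836466089412988664356587737693766197838274336027260974210563763628726845408399351150531383319186708444765947609151247003530494924003029708478748840898477787287511993644936686040020605566407454316236518817376153204453078345764939888175135400537597220335037066988537811385325917005727282362641145028953436041196964691504967918819676576065990226810849144541507622732585698094531096446411280960030263315822653280242415071553363494278213
def chks (tb N W2 f k : ℕ) : Bool :=
  fce OO fun O => fce (2^1400) fun S => fce (2^(3300-tb)) fun T =>
  fce l2c fun l2 => fce l3c fun l3 => fce l5c fun l5 => fce l7c fun l7 =>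
  fce N fun N => fce W2 fun W2 =>
  Nat.rec true (fun i ih => cnd (chkK O S T l2 l3 l5 l7 N W2 (k + i)) ih false) f
def chkJ (tb N W2 : ℕ) : Bool :=
  fce (2^1400) fun S => fce (2^(3300-tb)) fun T =>
  fce l2c fun l2 => fce l3c fun l3 => fce l5c fun l5 => fce l7c fun l7 =>
  fce N fun N => fce W2 fun W2 => chkI S T l2 l3 l5 l7 N W2

end partN4

section partN5
set_option maxRecDepth 100000
theorem l2c_eq : Nat.beq (nlog OO (OO/2)) l2c = true := by decide +kernel
theorem l3c_eq : Nat.beq (2*l2c - nlog OO (OO/4)) l3c = true := by decide +kernel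
theorem l5c_eq : Nat.beq (2*l2c + nlog OO (OO/5)) l5c = true := by decide +kernel
theorem l7c_eq : Nat.beq (3*l2c - nlog OO (OO/8)) l7c = true := by decide +kernel
set_option maxHeartbeats 0 in
theorem r1 (j : ℕ) (hj : j < 123) : chks 606 (2^601) (2^600 + (2^602+2) * 2^18) 10 (3+10*j) = true := by
  interval_cases j <;> decide +kernel
theorem r2 (j : ℕ) (hj : j < 4) : chks 14 1700 (2^1820 + 3402 * 2^18) 10 (3+10*j) = true := by
  interval_cases j <;> decide +kernel
theorem i1 : chkJ 606 (2^601) (2^1280 + (2^602+2) * 2^18) = true := by decide +kernel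
theorem i2 : chkJ 16 1700 (2^1876 + 3402 * 2^18) = true := by decide +kernel

end partN5

section partN6

theorem fce_eq {α : Type} (n : ℕ) (f : ℕ → α) : fce n f = f n := by cases n <;> rfl
theorem cnd_eq {α : Type} (b : Bool) (x y : α) : cnd b x y = if b = true then x else y := by cases b <;> rfl

/-- auxiliary series -/
noncomputable def lser (y : ℝ) (i : ℕ) : ℝ := ∑' j : ℕ, y ^ j / ((i:ℝ) + j)

theorem lser_summable (y : ℝ) (h0 : 0 ≤ y) (h1 : y ≤ 1/2) (i : ℕ) (hi : 1 ≤ i) :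
    Summable fun j : ℕ => y ^ j / ((i:ℝ) + j) := by
  refine Summable.of_nonneg_of_le (fun j => by positivity) (fun j => ?_)
    (summable_geometric_of_lt_one h0 (by linarith : y < 1))
  have : (1:ℝ) ≤ i := by exact_mod_cast hi
  have : (1:ℝ) ≤ (i:ℝ) + j := by linarith [Nat.cast_nonneg (α := ℝ) j]
  exact div_le_self (by positivity) this

theorem lser_rec (y : ℝ) (h0 : 0 ≤ y) (h1 : y ≤ 1/2) (i : ℕ) (hi : 1 ≤ i) :
    lser y i = 1 / i + y * lser y (i+1) := by
  unfold lser
  rw [(lser_summable y h0 h1 i hi).tsum_eq_zero_add, ← tsum_mul_left]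
  congr 1
  · simp
  · congr 1; ext j; push_cast; rw [pow_succ]; ring

theorem lser_bd (y : ℝ) (h0 : 0 ≤ y) (h1 : y ≤ 1/2) (i : ℕ) (hi : 1 ≤ i) :
    0 ≤ lser y i ∧ lser y i ≤ 2 := by
  constructor
  · exact tsum_nonneg fun j => by positivity
  · have h2 : (∑' j : ℕ, y ^ j) ≤ 2 := by
      rw [tsum_geometric_of_lt_one h0 (by linarith)]
      rw [inv_le_comm₀ (by linarith) (by norm_num)]; linarith
    refine le_trans ?_ h2
    refine (lser_summable y h0 h1 i hi).tsum_le_tsum (fun j => ?_) (summable_geometric_of_lt_one h0 (by linarith : y < 1))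
    have : (1:ℝ) ≤ i := by exact_mod_cast hi
    have : (1:ℝ) ≤ (i:ℝ) + j := by linarith [Nat.cast_nonneg (α := ℝ) j]
    exact div_le_self (by positivity) this

theorem lser_log (y : ℝ) (h0 : 0 ≤ y) (h1 : y ≤ 1/2) : y * lser y 1 = -Real.log (1 - y) := by
  have := Real.hasSum_pow_div_log_of_abs_lt_one (x := y) (by rw [abs_of_nonneg h0]; linarith)
  rw [← this.tsum_eq, lser, ← tsum_mul_left]
  congr 1; ext j; push_cast; rw [pow_succ, add_comm (1:ℝ)]; ring

theorem nlogAux_spec (O Y : ℕ) (hO : 0 < O) (hY : 2 * Y ≤ O) (f : ℕ) : ∀ (i t s : ℕ) (τ : ℝ), 1 ≤ i →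
    (t:ℝ) ≤ τ → τ ≤ t + 2 →
    (nlogAux O Y f i t s : ℝ) ≤ s + τ * lser (Y / O) i ∧
    s + τ * lser (Y / O) i ≤ nlogAux O Y f i t s + (3 * f + 4 + 2 * τ * (Y/O:ℝ)^f) := by
  have hO' : (0:ℝ) < O := by exact_mod_cast hO
  have hy0 : (0:ℝ) ≤ Y / O := by positivity
  have hy1 : (Y / O : ℝ) ≤ 1/2 := by
    rw [div_le_iff₀ hO']; have : (2 * Y : ℝ) ≤ O := by exact_mod_cast hY
    linarith
  induction f with
  | zero =>
    intro i t s τ hi h1 h2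
    have hl := lser_bd _ hy0 hy1 i hi
    have hτ : 0 ≤ τ := le_trans (by positivity) h1
    have h0 : nlogAux O Y 0 i t s = s := rfl
    rw [h0]
    constructor
    · nlinarith [mul_nonneg hτ hl.1]
    · simp; nlinarith [mul_nonneg hτ (sub_nonneg.2 hl.2)]
  | succ f ih =>
    intro i t s τ hi h1 h2
    have hl := lser_bd _ hy0 hy1 i hi
    have hτ : 0 ≤ τ := le_trans (by positivity) h1
    have hun : nlogAux O Y (f+1) i t s = if t = 0 then s else
      nlogAux O Y f (i+1) (t*Y/O) (s + t/i) := by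
      show cnd (Nat.beq t 0) s (fce (Nat.div (Nat.mul t Y) O) fun t' => fce (Nat.add s (Nat.div t i)) fun s' => nlogAux O Y f (Nat.succ i) t' s') = _
      rw [fce_eq, fce_eq, cnd_eq]
      simp only [Nat.beq_eq]; rfl
    rw [hun]
    split_ifs with ht
    · subst ht
      have h3 : 0 ≤ 2 * τ * (Y/O:ℝ)^(f+1) := by positivity
      constructor
      · nlinarith [mul_nonneg hτ hl.1]
      · push_cast; simp at h2; nlinarith [mul_nonneg hτ (sub_nonneg.2 hl.2), Nat.cast_nonneg (α := ℝ) f]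
    · have e1 : ((t*Y/O : ℕ) : ℝ) ≤ t * (Y / O) := by
        refine le_trans Nat.cast_div_le ?_; push_cast; rw [mul_div_assoc]
      have e2 : (t:ℝ) * (Y/O) ≤ ((t*Y/O : ℕ) : ℝ) + 1 := by
        have := (Nat.lt_floor_add_one ((t * Y : ℕ) / (O:ℕ) : ℝ)).le
        rw [Nat.floor_div_eq_div] at this
        push_cast at this ⊢; rw [← mul_div_assoc]; exact this
      have f1 : ((t/i : ℕ) : ℝ) ≤ t / i := Nat.cast_div_le
      have f2 : (t:ℝ) / i ≤ ((t/i : ℕ) : ℝ) + 1 := by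
        have := (Nat.lt_floor_add_one ((t : ℕ) / (i:ℕ) : ℝ)).le
        rwa [Nat.floor_div_eq_div] at this
      have hi' : (1:ℝ) ≤ i := by exact_mod_cast hi
      have g1 : (t:ℝ)/i ≤ τ / i := by gcongr
      have g2 : τ / i ≤ t / i + 2 := by
        rw [div_le_iff₀ (by linarith), add_mul, div_mul_cancel₀ _ (by linarith)]; linarith
      have k1 : (t:ℝ) * (Y/O) ≤ τ * (Y/O) := by gcongr
      have k2 : τ * (Y/O) ≤ t * (Y/O) + 1 := by nlinarith
      obtain ⟨a1, a2⟩ := ih (i+1) (t*Y/O) (s+t/i) (τ * (Y/O)) (by omega) (by linarith) (by linarith)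
      have hr := lser_rec _ hy0 hy1 i hi
      have hr' : τ * lser (Y/O) i = τ / i + τ * (Y/O) * lser (Y/O) (i+1) := by rw [hr]; ring
      rw [hr']
      push_cast at a1 a2 ⊢
      have hp : 2 * (τ * (Y/O:ℝ)) * (Y/O)^f = 2 * τ * (Y/O:ℝ)^(f+1) := by ring
      rw [hp] at a2
      constructor <;> linarith

theorem nlog_spec (O : ℕ) (hO : 0 < O) (hO2 : (O:ℝ) * (1/2)^2000 ≤ 1) (Y : ℕ) (hY : 2 * Y ≤ O) :
    (nlog O Y : ℝ) ≤ O * (-Real.log (1 - Y / O)) ∧ O * (-Real.log (1 - Y / O)) ≤ nlog O Y + 6006 := by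
  have hO' : (0:ℝ) < O := by exact_mod_cast hO
  have hy0 : (0:ℝ) ≤ Y / O := by positivity
  have hy1 : (Y / O : ℝ) ≤ 1/2 := by
    rw [div_le_iff₀ hO']; have : (2 * Y : ℝ) ≤ O := by exact_mod_cast hY
    linarith
  obtain ⟨h1, h2⟩ := nlogAux_spec O Y hO hY 2000 1 Y 0 Y le_rfl le_rfl (by linarith)
  rw [← lser_log _ hy0 hy1]
  have e : (O:ℝ) * (Y/O * lser (Y/O) 1) = Y * lser (Y/O) 1 := by field_simp
  rw [e]
  have h3 : 2 * (Y:ℝ) * (Y/O:ℝ)^2000 ≤ 2 := by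
    have a : (Y/O:ℝ)^2000 ≤ (1/2)^2000 := pow_le_pow_left₀ hy0 hy1 _
    have b : (Y:ℝ) ≤ O := by
      have : Y ≤ O := by omega
      exact_mod_cast this
    have hz0 : (0:ℝ) ≤ (1/2:ℝ)^2000 := pow_nonneg (by norm_num) _
    generalize (1/2:ℝ)^2000 = z at *
    generalize (Y/O:ℝ)^2000 = w at *
    have hw : (Y:ℝ) * w ≤ O * z := by
      rcases le_or_gt 0 w with h | h
      · exact mul_le_mul b a h hO'.le
      · have : (0:ℝ) ≤ Y := by positivity
        have hz : 0 ≤ z := by assumption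
        nlinarith
    linarith
  unfold nlog
  push_cast at h1 h2
  constructor <;> linarith

theorem powT_spec (O a : ℕ) (hO : 0 < O) (ha : a ≤ O) (f : ℕ) : ∀ k : ℕ, k < 2^f →
    (powT O a f k : ℝ) ≤ O * (a/O:ℝ)^k ∧ (k = 0 → powT O a f k = O) ∧
     (1 ≤ k → O * (a/O:ℝ)^k ≤ powT O a f k + (4 * k - 4)) := by
  have hO' : (0:ℝ) < O := by exact_mod_cast hO
  have hy0 : (0:ℝ) ≤ a / O := by positivity
  have hy1 : (a / O : ℝ) ≤ 1 := by
    rw [div_le_iff₀ hO']; simpa using (by exact_mod_cast ha : (a:ℝ) ≤ O)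
  have fl : ∀ u v : ℕ, 0 < v → ((u/v : ℕ):ℝ) ≤ u/v ∧ (u:ℝ)/v ≤ (u/v:ℕ) + 1 := by
    intro u v hv
    refine ⟨Nat.cast_div_le, ?_⟩
    have := (Nat.lt_floor_add_one ((u : ℕ) / (v:ℕ) : ℝ)).le
    rwa [Nat.floor_div_eq_div] at this
  induction f with
  | zero => 
    intro k hk
    have : k = 0 := by simpa using hk
    subst this
    simp [powT]
  | succ f ih =>
    intro k hk
    have hun : powT O a (f+1) k = if k = 0 then O else
      if k % 2 = 1 then (powT O a f (k/2) * powT O a f (k/2) / O) * a / O else (powT O a f (k/2) * powT O a f (k/2) / O) := by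
      show cnd (Nat.beq k 0) O (fce (powT O a f (Nat.div k 2)) fun h => fce (Nat.div (Nat.mul h h) O) fun h2 =>
       cnd (Nat.beq (Nat.mod k 2) 1) (Nat.div (Nat.mul h2 a) O) h2) = _
      rw [fce_eq, fce_eq, cnd_eq, cnd_eq]
      simp only [Nat.beq_eq]; rfl
    by_cases hk0 : k = 0
    · subst hk0; rw [hun]; simp
    rw [hun, if_neg hk0]
    obtain ⟨i1, i2, i3⟩ := ih (k/2) (by rw [pow_succ] at hk; omega)
    set h := powT O a f (k/2) with hh
    obtain ⟨s1, s2⟩ := fl (h*h) O hO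
    obtain ⟨t1, t2⟩ := fl (h*h/O*a) O hO
    push_cast at s1 s2 t1 t2
    set H : ℝ := O * (a/O:ℝ)^(k/2) with hH
    have hH0 : 0 ≤ H := by positivity
    have hHO : H ≤ O := by
      rw [hH]; nlinarith [pow_le_one₀ hy0 hy1 (n := k/2)]
    have hhh : (0:ℝ) ≤ h := by positivity
    have u1 : (h:ℝ)*h/O ≤ H*H/O := by gcongr
    have e2 : H*H/O = O * (a/O:ℝ)^(2*(k/2)) := by
      rw [hH, two_mul, pow_add]; field_simp
    set D : ℝ := H - h with hD
    have u2 : H*H/O ≤ h*h/O + 2 * D := by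
      rw [div_add' _ _ _ hO'.ne', div_le_div_iff_of_pos_right hO']
      have : 0 ≤ D := by rw [hD]; linarith
      nlinarith
    have t3 : ((h*h/O:ℕ):ℝ)*a/O = (h*h/O:ℕ) * (a/O:ℝ) := by rw [mul_div_assoc]
    rcases Nat.mod_two_eq_zero_or_one k with hm | hm
    · rw [if_neg (by omega)]
      have hk2 : 2 * (k/2) = k := by omega
      rw [hk2] at e2
      refine ⟨by linarith, fun h => absurd h hk0, fun _ => ?_⟩
      have := i3 (by omega)
      have hkk : (k:ℝ) = 2 * (k/2 : ℕ) := by exact_mod_cast hk2.symm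
      rw [hkk]; linarith
    · rw [if_pos hm]
      have hk2 : 2 * (k/2) + 1 = k := by omega
      have e3 : O * (a/O:ℝ)^k = (H*H/O) * (a/O) := by
        rw [e2, ← hk2, pow_succ]
        have : 2 * ((2 * (k/2) + 1)/2) = 2 * (k/2) := by omega
        rw [this]; ring
      rw [t3] at t1 t2
      rw [e3]
      have v1 : ((h*h/O:ℕ):ℝ) * (a/O:ℝ) ≤ (H*H/O) * (a/O) := by gcongr; linarith
      refine ⟨by linarith, fun h => absurd h hk0, fun _ => ?_⟩
      have hkk : (k:ℝ) = 2 * (k/2 : ℕ) + 1 := by exact_mod_cast hk2.symm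
      rcases Nat.eq_zero_or_pos (k/2) with h0 | h0
      · have : h = O := i2 h0
        have k1 : k = 1 := by omega
        have q : h * h / O = O := by rw [this]; exact Nat.mul_div_cancel _ hO
        rw [q, Nat.mul_div_cancel_left _ hO, hH, h0, k1]; 
        simp; field_simp; rfl
      · have := i3 h0
        have w : (H*H/O) * (a/O:ℝ) ≤ ((h*h/O:ℕ):ℝ) * (a/O) + (H*H/O - (h*h/O:ℕ)) := by
          have : (0:ℝ) ≤ (H*H/O - (h*h/O:ℕ)) := by linarith
          nlinarith
        rw [hkk]; linarith

end partN6

section partN7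

theorem tst_sound (L1 L2 G N W2 Q : ℕ) (h : tst L1 L2 G N W2 Q = true) (d m : ℤ) (hm : 0 ≤ m) (hmN : m ≤ N)
    (hδ : |d * L1 - m * L2 - G| ≤ W2) : False := by
  unfold tst at h
  rw [fce_eq, fce_eq, fce_eq, cnd_eq, cnd_eq] at h
  simp only [Nat.mul_eq, Nat.add_eq, Nat.sub_eq, Nat.ble_eq, show ∀ a b : ℕ, Nat.mod a b = a % b from fun _ _ => rfl] at h
  set R := Q * G % L1 with hR
  set x := Q * L2 % L1 with hx
  have hh : ∃ y : ℕ, y = (if 2 * x ≤ L1 then x else L1 - x) ∧ N * y + Q * W2 < R ∧ N * y + Q * W2 + R < L1 := by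
    refine ⟨_, rfl, ?_⟩
    generalize (if 2 * x ≤ L1 then x else L1 - x) = y at h
    split_ifs at h with h2
    rw [Nat.ble_eq] at h
    exact ⟨by omega, by omega⟩
  clear h
  obtain ⟨y, hy, h2, h⟩ := hh
  split_ifs at hy with h1 <;> subst hy
  all_goals
    have e1 := Nat.div_add_mod (Q*G) L1
    have e2 := Nat.div_add_mod (Q*L2) L1
    rw [← hR] at e1
    rw [← hx] at e2
    zify at e1 e2
    obtain ⟨d1, d2⟩ := abs_le.1 hδ
    have hxL : x < L1 := Nat.mod_lt _ (by omega)
    generalize ((Q:ℤ)*G/L1) = u at e1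
    generalize ((Q:ℤ)*L2/L1) = v at e2
    set δ : ℤ := d * L1 - m * L2 - G with hdel
    have hQ : (0:ℤ) ≤ Q := by positivity
    have a1 : (Q:ℤ) * δ ≤ Q * W2 := mul_le_mul_of_nonneg_left d2 hQ
    have a2 : -((Q:ℤ) * W2) ≤ Q * δ := by
      have := mul_le_mul_of_nonneg_left d1 hQ; linarith
    zify at h h2
  · -- x small
    have b1 : m * (x:ℤ) ≤ N * x := mul_le_mul_of_nonneg_right hmN (by positivity)
    have b2 : 0 ≤ m * (x:ℤ) := by positivity
    have key : (R:ℤ) + Q * δ + m * x = L1 * (Q * d - m * v - u) := by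
      rw [hdel]; linear_combination e1 + m * e2
    generalize (Q:ℤ) * d - m * v - u = z at key
    have hz : 0 < (L1:ℤ) * z := by linarith
    have hz2 : (L1:ℤ) * z < L1 := by
      linarith
    have hL : (0:ℤ) < L1 := by linarith [Int.natCast_nonneg x, (by exact_mod_cast hxL : (x:ℤ) < L1)]
    have : 0 < z := by by_contra hc; nlinarith
    nlinarith
  · have hcast : ((L1 - x : ℕ):ℤ) = L1 - x := by omega
    have b1 : m * ((L1:ℤ) - x) ≤ N * (L1 - x) := mul_le_mul_of_nonneg_right hmN (by omega)
    have b2 : 0 ≤ m * ((L1:ℤ) - x) := mul_nonneg hm (by omega)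
    rw [hcast] at h h2
    have key : (R:ℤ) + Q * δ - m * (L1 - x) = L1 * (Q * d - m * v - u - m) := by
      rw [hdel]; linear_combination e1 + m * e2
    generalize (Q:ℤ) * d - m * v - u - m = z at key
    have hz : 0 < (L1:ℤ) * z := by linarith
    have hz2 : (L1:ℤ) * z < L1 := by
      linarith
    have hL : (0:ℤ) < L1 := by linarith [Int.natCast_nonneg x, (by exact_mod_cast hxL : (x:ℤ) < L1)]
    have : 0 < z := by by_contra hc; nlinarith
    nlinarith

theorem tsth_aux (L1 L2 N W2 Q : ℕ) (P s : ℤ) (hs : |(Q:ℤ) * L2 - P * L1| ≤ s) (hg : Int.gcd P Q = 1) (hQ : N < Q)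
    (hb : N * s + Q * W2 < L1) (d m : ℤ) (hm : 0 < m) (hmN : m ≤ N)
    (hδ : |d * L1 - m * L2| ≤ W2) : False := by
  obtain ⟨d1, d2⟩ := abs_le.1 hδ
  obtain ⟨s1, s2⟩ := abs_le.1 hs
  set δ : ℤ := d * L1 - m * L2 with hdel
  set e : ℤ := (Q:ℤ) * L2 - P * L1 with he
  have hs0 : 0 ≤ s := le_trans (abs_nonneg _) hs
  have hQ0 : (0:ℤ) ≤ Q := by positivity
  have a1 : (Q:ℤ) * δ ≤ Q * W2 := mul_le_mul_of_nonneg_left d2 hQ0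
  have a2 : -((Q:ℤ) * W2) ≤ Q * δ := by
    have := mul_le_mul_of_nonneg_left d1 hQ0; linarith
  have b0 : m * s ≤ N * s := mul_le_mul_of_nonneg_right hmN hs0
  have b1 : m * e ≤ m * s := mul_le_mul_of_nonneg_left s2 hm.le
  have b2 : -(m * s) ≤ m * e := by
    have := mul_le_mul_of_nonneg_left s1 hm.le; linarith
  have key : (Q:ℤ) * δ + m * e = L1 * (Q * d - m * P) := by rw [hdel, he]; ring
  have hL : (0:ℤ) < L1 := by
    have : (0:ℤ) ≤ N * s + Q * W2 := by positivity
    linarith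
  have hz : (Q:ℤ) * d - m * P = 0 := by
    have z1 : (L1:ℤ) * (Q * d - m * P) < L1 * 1 := by linarith
    have z2 : (L1:ℤ) * (-1) < L1 * (Q * d - m * P) := by linarith
    have := lt_of_mul_lt_mul_left z1 hL.le
    have := lt_of_mul_lt_mul_left z2 hL.le
    omega
  have hdv : (Q:ℤ) ∣ m * P := ⟨d, by linarith⟩
  have hco : IsCoprime (Q:ℤ) P := by
    rw [Int.isCoprime_iff_gcd_eq_one, Int.gcd_comm]; exact hg
  have hdm : (Q:ℤ) ∣ m := hco.dvd_of_dvd_mul_right hdv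
  have := Int.le_of_dvd hm hdm
  have : (N:ℤ) < Q := by exact_mod_cast hQ
  linarith

theorem tsth_sound (L1 L2 N W2 Q : ℕ) (h : tsth L1 L2 N W2 Q = true) (d m : ℤ) (hm : 0 < m) (hmN : m ≤ N)
    (hδ : |d * L1 - m * L2| ≤ W2) : False := by
  unfold tsth at h
  rw [fce_eq, fce_eq] at h
  simp only [cnd_eq, Nat.mul_eq, Nat.add_eq, Nat.sub_eq, Nat.ble_eq, Nat.beq_eq, show ∀ a b : ℕ, Nat.mod a b = a % b from fun _ _ => rfl,
     show ∀ a b : ℕ, Nat.div a b = a / b from fun _ _ => rfl, Nat.succ_eq_add_one] at h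
  have e2 := Nat.div_add_mod (Q*L2) L1
  set x := Q * L2 % L1 with hx
  set v := Q * L2 / L1 with hv
  zify at e2
  split_ifs at h with h1 h2 h3 h4 h5
  · rw [Nat.ble_eq] at h
    refine tsth_aux L1 L2 N W2 Q v x ?_ (by simpa using h2) (by omega) (by zify at h; linarith) d m hm hmN hδ
    rw [show (Q:ℤ) * L2 - v * L1 = x by linarith]; simp
  · rw [Nat.ble_eq] at h
    have hxL : x < L1 := Nat.mod_lt _ (by omega)
    have hcast : ((L1 - x : ℕ):ℤ) = L1 - x := by omega
    refine tsth_aux L1 L2 N W2 Q ((v+1:ℕ):ℤ) ((L1 - x : ℕ):ℤ) ?_ (by rw [Int.gcd_natCast_natCast]; exact h4) (by omega) (by zify at h; linarith) d m hm hmN hδ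
    rw [hcast, show (Q:ℤ) * L2 - (v+1:ℕ) * L1 = -(L1 - x) by push_cast; linarith, abs_neg, abs_of_nonneg (by omega)]

theorem eucl_sound (T : ℕ) (K : ℕ → ℕ → Bool) (f : ℕ) : ∀ a b, eucl T K f a b = true → ∃ a b, K a b = true := by
  induction f with
  | zero => intro a b h; exact absurd h (by simp [eucl])
  | succ f ih =>
    intro a b h
    have hun : eucl T K (f+1) a b = if Nat.ble b T = true then K a b else eucl T K f b (a % b) := by
      show cnd (Nat.ble b T) (K a b) (fce (Nat.mod a b) fun r => eucl T K f b r) = _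
      rw [fce_eq, cnd_eq]; rfl
    rw [hun] at h
    split_ifs at h with h1
    · exact ⟨a, b, h⟩
    · exact ih _ _ h

theorem srch_sound (t : ℕ → Bool) (S : ℕ) (f : ℕ) : ∀ a b, srch t S f a b = true → ∃ Q, t Q = true := by
  induction f with
  | zero => intro a b h; exact absurd h (by simp [srch])
  | succ f ih =>
    intro a b h
    have hun : srch t S (f+1) a b = if t (cnd (Nat.ble (Nat.mul 2 (b % S)) S) (b%S) (Nat.sub S (b%S))) = true then true else srch t S f b (a % b) := by
      show cnd (fce (Nat.mod b S) fun v => t (cnd (Nat.ble (Nat.mul 2 v) S) v (Nat.sub S v))) true (fce (Nat.mod a b) fun r => srch t S f b r) = _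
      rw [fce_eq, fce_eq, cnd_eq]; rfl
    rw [hun] at h
    split_ifs at h with h1
    · exact ⟨_, h1⟩
    · exact ih _ _ h

theorem log_lip (u v : ℝ) (hu : 1/2 ≤ u) (hv : 1/2 ≤ v) : |Real.log u - Real.log v| ≤ 2 * |u - v| := by
  have key : ∀ u v : ℝ, 1/2 ≤ u → 1/2 ≤ v → Real.log u - Real.log v ≤ 2 * |u - v| := by
    intro u v hu hv
    rw [← Real.log_div (by linarith) (by linarith)]
    refine le_trans (Real.log_le_sub_one_of_pos (div_pos (by linarith) (by linarith))) ?_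
    rw [div_sub_one (by linarith), div_le_iff₀ (by linarith)]
    nlinarith [le_abs_self (u-v), abs_nonneg (u-v)]
  rw [abs_le]
  constructor
  · have := key v u hv hu
    rw [abs_sub_comm] at this; linarith
  · exact key u v hu hv

theorem nlog_near (O : ℕ) (hO : 0 < O) (hO2 : (O:ℝ) * (1/2)^2000 ≤ 1) (Y : ℕ) (hY : 2 * Y ≤ O) (y c : ℝ)
    (hy : y ≤ 1/2) (hc : |Y - O * y| ≤ c) : |O * (-Real.log (1-y)) - nlog O Y| ≤ 6006 + 2 * c := by
  obtain ⟨h1, h2⟩ := nlog_spec O hO hO2 Y hY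
  have hO' : (0:ℝ) < O := by exact_mod_cast hO
  have hy1 : (Y / O : ℝ) ≤ 1/2 := by
    rw [div_le_iff₀ hO']; have : (2 * Y : ℝ) ≤ O := by exact_mod_cast hY
    linarith
  have h3 := log_lip (1-Y/O) (1-y) (by linarith) (by linarith)
  have h4 : |(1 - Y/O:ℝ) - (1 - y)| = |Y - O*y| / O := by
    rw [show ((1 - Y/O:ℝ) - (1 - y)) = -((Y - O*y)/O) by field_simp; ring, abs_neg, abs_div, abs_of_pos hO']
  rw [h4] at h3
  have h5 : |(O:ℝ) * (Real.log (1-Y/O) - Real.log (1-y))| ≤ 2 * c := by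
    rw [abs_mul, abs_of_pos hO']
    calc (O:ℝ) * |Real.log (1-Y/O) - Real.log (1-y)| ≤ O * (2 * (|Y - O*y| / O)) := by gcongr
      _ = 2 * |Y - O*y| := by field_simp
      _ ≤ 2 * c := by linarith
  rw [abs_le] at h5 ⊢
  constructor <;> nlinarith

theorem h_mono (k : ℕ) (a b : ℝ) (ha : 0 ≤ a) (hab : a < b) (hb : (k+1) * b ≤ 1) (hb1 : b < 1) :
    a * (1-a)^k < b * (1-b)^k := by
  have h1 : 0 < 1 - a := by linarith
  have hB : 1 + (k:ℝ) * (-((b-a)/(1-a))) ≤ (1 + -((b-a)/(1-a)))^k := by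
    apply one_add_mul_le_pow
    have : (b-a)/(1-a) ≤ 1 := by rw [div_le_one h1]; linarith
    linarith
  have e : (1 + -((b-a)/(1-a))) = (1-b)/(1-a) := by field_simp; ring
  rw [e, div_pow, le_div_iff₀ (by positivity)] at hB
  have hp : 0 < (1-a)^k := by positivity
  have h2 : b * ((1 + (k:ℝ) * (-((b-a)/(1-a)))) * (1-a)^k) ≤ b * (1-b)^k := mul_le_mul_of_nonneg_left hB (by linarith)
  have h3 : 0 < b * (1 + (k:ℝ) * (-((b-a)/(1-a)))) - a := by
    have : b * (1 + (k:ℝ) * (-((b-a)/(1-a)))) - a = (b-a)*(1-a-k*b)/(1-a) := by field_simp; ring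
    rw [this]
    apply div_pos _ h1
    apply mul_pos (by linarith)
    linarith
  nlinarith [mul_pos h3 hp]

end partN7

section partN8

theorem core (O L1 L2 G N W2 W Q : ℕ) (h : tst L1 L2 G N W2 Q = true) (hW : W2 = W + (2*N+2)*2^18)
    (l1 l2 g : ℝ) (h1 : |O * l1 - L1| ≤ 26000) (h2 : |O * l2 - L2| ≤ 26000) (h3 : |O * g - G| ≤ 200000)
    (d m : ℕ) (hdm : d ≤ m) (hm : m ≤ N) : (W:ℝ) < O * |d * l1 - m * l2 - (g - l1)| := by
  by_contra hc
  push Not at hc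
  rw [← abs_of_nonneg (Nat.cast_nonneg (α := ℝ) O), ← abs_mul] at hc
  refine tst_sound L1 L2 G N W2 Q h (d+1) m (by positivity) (by exact_mod_cast hm) ?_
  have hd' : (d:ℝ) ≤ m := by exact_mod_cast hdm
  have hm' : (m:ℝ) ≤ N := by exact_mod_cast hm
  have hd0 : (0:ℝ) ≤ d := by positivity
  have hm0 : (0:ℝ) ≤ m := by positivity
  have key : |((d:ℝ)+1) * L1 - m * L2 - G| ≤ W2 := by
    have e : ((d:ℝ)+1) * L1 - m * L2 - G = O * (d * l1 - m * l2 - (g - l1)) - (d+1) * (O * l1 - L1) + m * (O * l2 - L2) + (O * g - G) := by ring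
    rw [e, hW]; push_cast
    have a1 : |((d:ℝ)+1) * (O * l1 - L1)| ≤ (d+1) * 26000 := by
      rw [abs_mul, abs_of_nonneg (by positivity : (0:ℝ) ≤ (d:ℝ)+1)]; gcongr
    have a2 : |(m:ℝ) * (O * l2 - L2)| ≤ m * 26000 := by
      rw [abs_mul, abs_of_nonneg hm0]; gcongr
    rw [abs_le] at *
    constructor <;> linarith [a1.1, a1.2, a2.1, a2.2, h3.1, h3.2, hc.1, hc.2]
  have : ((|((d:ℤ)+1) * L1 - m * L2 - G| : ℤ):ℝ) ≤ W2 := by push_cast; exact key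
  exact_mod_cast this

theorem coreh (O L1 L2 N W2 W Q : ℕ) (h : tsth L1 L2 N W2 Q = true) (hW : W2 = W + (2*N+2)*2^18)
    (l1 l2 : ℝ) (h1 : |O * l1 - L1| ≤ 26000) (h2 : |O * l2 - L2| ≤ 26000)
    (d m : ℕ) (hdm : d ≤ m) (hm : m ≤ N) (hm1 : 0 < m) : (W:ℝ) < O * |d * l1 - m * l2| := by
  by_contra hc
  push Not at hc
  rw [← abs_of_nonneg (Nat.cast_nonneg (α := ℝ) O), ← abs_mul] at hc
  refine tsth_sound L1 L2 N W2 Q h d m (by exact_mod_cast hm1) (by exact_mod_cast hm) ?_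
  have hd' : (d:ℝ) ≤ m := by exact_mod_cast hdm
  have hm' : (m:ℝ) ≤ N := by exact_mod_cast hm
  have hd0 : (0:ℝ) ≤ d := by positivity
  have hm0 : (0:ℝ) ≤ m := by positivity
  have key : |(d:ℝ) * L1 - m * L2| ≤ W2 := by
    have e : (d:ℝ) * L1 - m * L2 = O * (d * l1 - m * l2) - d * (O * l1 - L1) + m * (O * l2 - L2) := by ring
    rw [e, hW]; push_cast
    have a1 : |(d:ℝ) * (O * l1 - L1)| ≤ d * 26000 := by
      rw [abs_mul, abs_of_nonneg hd0]; gcongr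
    have a2 : |(m:ℝ) * (O * l2 - L2)| ≤ m * 26000 := by
      rw [abs_mul, abs_of_nonneg hm0]; gcongr
    rw [abs_le] at *
    constructor <;> linarith [a1.1, a1.2, a2.1, a2.2, hc.1, hc.2]
  have : ((|(d:ℤ) * L1 - m * L2| : ℤ):ℝ) ≤ W2 := by push_cast; exact key
  exact_mod_cast this

theorem x_loc (O k R X : ℕ) (hO : 0 < O) (hR : (R:ℝ) * 2^(k+1) = O^2) (hk1 : 1 ≤ k) (hk2 : k < 2^12) (h : xOK O k R X = true)
    (x : ℝ) (hx0 : 0 < x) (hx1 : 2 * (k+1) * x ≤ 1) (hx : x * (1-x)^k = 1/2^(k+1)) :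
    2 * ((k+1) * (X + 16)) ≤ O ∧ (X:ℝ) ≤ O * x ∧ O * x ≤ X + 16 := by
  unfold xOK at h
  rw [cnd_eq, cnd_eq] at h
  simp only [Nat.mul_eq, Nat.add_eq, Nat.sub_eq, Nat.ble_eq] at h
  split_ifs at h with h1 h2
  rw [Nat.ble_eq] at h
  have hO' : (0:ℝ) < O := by exact_mod_cast hO
  have hkk : (1:ℝ) ≤ k := by exact_mod_cast hk1
  have hb : 2 * ((k+1) * ((X:ℝ) + 16)) ≤ O := by
    have : 2 * ((k+1) * (X + 16)) ≤ O := by rw [← mul_assoc]; exact h1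
    exact_mod_cast this
  have hX16 : X + 16 ≤ O := by
    have : 2 * ((k+1) * (X + 16)) ≤ O := by rw [← mul_assoc]; exact h1
    nlinarith
  refine ⟨by rw [← mul_assoc]; exact h1, ?_, ?_⟩
  · by_contra hc
    push Not at hc
    have hc' : x < X / O := by rw [lt_div_iff₀ hO']; linarith
    have hm := h_mono k x (X/O) hx0.le hc' (by rw [mul_div_assoc', div_le_one hO']; nlinarith) (by rw [div_lt_one hO']; nlinarith)
    obtain ⟨-, -, p3⟩ := powT_spec O (O - X) hO (Nat.sub_le _ _) 12 k hk2
    have p := p3 hk1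
    rw [Nat.cast_sub (by omega : X ≤ O), sub_div, div_self hO'.ne'] at p
    have h2' : (X:ℝ) * (powT O (O-X) 12 k + 4 * k) ≤ R := by exact_mod_cast h2
    have q : (X:ℝ) * (O * (1 - X/O)^k) ≤ R := le_trans (by gcongr; linarith) h2'
    have q2 : (X/O:ℝ) * (1-X/O)^k ≤ 1/2^(k+1) := by
      rw [le_div_iff₀ (by positivity)]
      have : (X/O:ℝ) * (1-X/O)^k * 2^(k+1) = (X:ℝ) * (O * (1 - X/O)^k) * 2^(k+1) / O^2 := by field_simp
      rw [this, div_le_one (by positivity), ← hR]; gcongr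
    linarith
  · by_contra hc
    push Not at hc
    have hc' : ((X + 16 : ℕ):ℝ) / O < x := by rw [div_lt_iff₀ hO']; push_cast; linarith
    have hm := h_mono k _ x (by positivity) hc' (by nlinarith) (by nlinarith)
    obtain ⟨p, -, -⟩ := powT_spec O (O - (X+16)) hO (Nat.sub_le _ _) 12 k hk2
    rw [Nat.cast_sub hX16, sub_div, div_self hO'.ne'] at p
    have h2' : (R:ℝ) ≤ ((X+16:ℕ):ℝ) * powT O (O-(X+16)) 12 k := by exact_mod_cast h
    set Y := X + 16 with hY
    have q : (R:ℝ) ≤ (Y:ℝ) * (O * (1 - Y/O)^k) := le_trans h2' (by gcongr)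
    have q2 : 1/2^(k+1) ≤ (Y/O:ℝ) * (1-Y/O)^k := by
      rw [div_le_iff₀ (by positivity)]
      have : (Y/O:ℝ) * (1-Y/O)^k * 2^(k+1) = (Y:ℝ) * (O * (1 - Y/O)^k) * 2^(k+1) / O^2 := by field_simp
      rw [this, one_le_div (by positivity), ← hR]; gcongr
    linarith

structure LC (O l2 l3 l5 l7 : ℕ) : Prop where
  pos : 0 < O
  small : (O:ℝ) * (1/2)^2000 ≤ 1
  sq : (O:ℝ)^2 = 2^3800
  e2 : |O * Real.log 2 - l2| ≤ 6008
  e3 : |O * Real.log 3 - l3| ≤ 19000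
  e5 : |O * Real.log 5 - l5| ≤ 19000
  e7 : |O * Real.log 7 - l7| ≤ 25000

theorem LC.lb {O l2 l3 l5 l7 : ℕ} (hc : LC O l2 l3 l5 l7) (b : ℕ) (h1 : 1 ≤ b) (h9 : b ≤ 9) :
    ∃ lb : ℕ, |O * Real.log b - lb| ≤ 38000 ∧ 
      ((b = 3 ∨ b = 6) ∧ lb ∈ [l3, l2+l3] ∨ b ≠ 3 ∧ b ≠ 6 ∧ lb ∈ [0, l2, 2*l2, l5, l7, 3*l2, 2*l3]) := by
  have e2 := abs_le.1 hc.e2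
  have e3 := abs_le.1 hc.e3
  have e5 := abs_le.1 hc.e5
  have e7 := abs_le.1 hc.e7
  have g4 : Real.log 4 = 2 * Real.log 2 := by rw [show (4:ℝ) = 2^2 by norm_num, Real.log_pow]; norm_num
  have g8 : Real.log 8 = 3 * Real.log 2 := by rw [show (8:ℝ) = 2^3 by norm_num, Real.log_pow]; norm_num
  have g9 : Real.log 9 = 2 * Real.log 3 := by rw [show (9:ℝ) = 3^2 by norm_num, Real.log_pow]; norm_num
  have g6 : Real.log 6 = Real.log 2 + Real.log 3 := by rw [← Real.log_mul] <;> norm_num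
  interval_cases b
  · exact ⟨0, by simp, by simp⟩
  · exact ⟨l2, by push_cast; rw [abs_le]; constructor <;> linarith, by simp⟩
  · exact ⟨l3, by push_cast; rw [abs_le]; constructor <;> linarith, by simp⟩
  · exact ⟨2*l2, by push_cast; rw [abs_le, g4]; constructor <;> linarith, by simp⟩
  · exact ⟨l5, by push_cast; rw [abs_le]; constructor <;> linarith, by simp⟩
  · exact ⟨l2+l3, by push_cast; rw [abs_le, g6]; constructor <;> linarith, by simp⟩
  · exact ⟨l7, by push_cast; rw [abs_le]; constructor <;> linarith, by simp⟩
  · exact ⟨3*l2, by push_cast; rw [abs_le, g8]; constructor <;> linarith, by simp⟩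
  · exact ⟨2*l3, by push_cast; rw [abs_le, g9]; constructor <;> linarith, by simp⟩

theorem LC.l10 {O l2 l3 l5 l7 : ℕ} (hc : LC O l2 l3 l5 l7) : |O * Real.log 10 - ((l2 + l5 : ℕ):ℝ)| ≤ 26000 := by
  have e2 := abs_le.1 hc.e2
  have e5 := abs_le.1 hc.e5
  have g : Real.log 10 = Real.log 2 + Real.log 5 := by rw [← Real.log_mul] <;> norm_num
  push_cast; rw [abs_le, g]; constructor <;> linarith

theorem bt_core {O L1 L2 g N W2 S a b lb W : ℕ} (h : bt L1 L2 g N W2 S a b lb = true) (hW : W2 = W + (2*N+2)*2^18)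
    (l1 l2 γ β : ℝ) (h1 : |O * l1 - L1| ≤ 26000) (h2 : |O * l2 - L2| ≤ 26000) (h3 : |O * (l1 + γ) - g| ≤ 150000)
    (h4 : |O * β - lb| ≤ 38000) (d m : ℕ) (hdm : d ≤ m) (hm : m ≤ N) : (W:ℝ) < O * |d * l1 - m * l2 - (γ - β)| := by
  unfold bt at h
  rw [cnd_eq, fce_eq] at h
  split_ifs at h with hl
  rw [Nat.ble_eq] at hl
  obtain ⟨Q, hQ⟩ := srch_sound _ _ _ _ _ h
  have := core O L1 L2 (g - lb) N W2 W Q hQ hW l1 l2 (l1 + γ - β) h1 h2 (by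
    rw [Nat.cast_sub hl]
    rw [abs_le] at *
    constructor <;> linarith [h3.1, h3.2, h4.1, h4.2]) d m hdm hm
  rwa [show l1 + γ - β - l1 = γ - β by ring] at this

theorem chkK_sound (O S T l2 l3 l5 l7 N W2 W k : ℕ) (hc : LC O l2 l3 l5 l7) (hk3 : 3 ≤ k) (hk : k ≤ 1300)
    (hW : W2 = W + (2*N+2)*2^18) (h : chkK O S T l2 l3 l5 l7 N W2 k = true)
    (x : ℝ) (hx0 : 0 < x) (hx1 : 2 * (k+1) * x ≤ 1) (hx : x * (1-x)^k = 1/2^(k+1))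
    (b : ℕ) (hb1 : 1 ≤ b) (hb9 : b ≤ 9) (d m : ℕ) (hdm : d ≤ m) (hm : m ≤ N) :
    (W:ℝ) < O * |d * Real.log 10 - m * (Real.log 2 + Real.log (1-x)) -
      ((Real.log 3 + Real.log (1 - 4*x/3) + Real.log (1-2*x) - Real.log 2 - Real.log (1-(k+1)*x)) - Real.log b)| := by
  unfold chkK at h
  simp only [fce_eq, cnd_eq] at h
  generalize hRR : 2^(3799-k) = R at h
  generalize xIter O k R 100 0 - 4 = X at h
  have hR : (R:ℝ) * 2^(k+1) = O^2 := by
    rw [hc.sq, ← hRR]; push_cast; rw [← pow_add]; congr 1; omega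
  split_ifs at h with h1 h2 h3
  obtain ⟨x1, x2, x3⟩ := x_loc O k R X hc.pos hR (by omega) (by omega) h1 x hx0 hx1 hx
  have hOp : (0:ℝ) < O := by exact_mod_cast hc.pos
  have hk3' : (3:ℝ) ≤ k := by exact_mod_cast hk3
  have hk' : (k:ℝ) ≤ 1300 := by exact_mod_cast hk
  have hxs : 8 * x ≤ 1 := by nlinarith
  have hXX : 8 * (X + 16) ≤ O := by nlinarith
  have m0 := nlog_near O hc.pos hc.small X (by omega) x 16 (by linarith) (by rw [abs_le]; constructor <;> linarith)
  have m2 := nlog_near O hc.pos hc.small (2*X) (by omega) (2*x) 32 (by linarith) (by push_cast; rw [abs_le]; constructor <;> linarith)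
  have m3 := nlog_near O hc.pos hc.small ((k+1)*X) (by nlinarith) ((k+1)*x) (16*1301) (by linarith) (by
    push_cast; rw [abs_le]; constructor <;> nlinarith)
  have q1 : (((4*X/3:ℕ)):ℝ) ≤ 4*X/3 := by
    have := Nat.cast_div_le (m := 4*X) (n := 3) (α := ℝ); push_cast at this; exact this
  have q2 : (4*X/3:ℝ) ≤ ((4*X/3:ℕ):ℝ) + 1 := by
    have : 4 * X ≤ 3 * (4*X/3) + 3 := by omega
    have : (4 * X:ℝ) ≤ 3 * (4*X/3:ℕ) + 3 := by exact_mod_cast this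
    linarith
  have m1 := nlog_near O hc.pos hc.small (4*X/3) (by omega) (4*x/3) 24 (by linarith) (by
    rw [abs_le]; constructor <;> linarith)
  obtain ⟨lb, hlb, hbc⟩ := hc.lb b hb1 hb9
  obtain ⟨a, c, hac⟩ := eucl_sound _ _ _ _ _ h
  simp only [Nat.ble_eq] at h2 h3
  generalize nlog O X = n0 at *
  generalize nlog O (4*X/3) = n1 at *
  generalize nlog O (2*X) = n2 at *
  generalize nlog O ((k+1)*X) = n3 at *
  have e2 := abs_le.1 hc.e2
  have e3 := abs_le.1 hc.e3
  have e10 := abs_le.1 hc.l10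
  rw [abs_le] at m0 m1 m2 m3
  have A2 : |O * (Real.log 2 + Real.log (1-x)) - ((l2 - n0 : ℕ):ℝ)| ≤ 26000 := by
    rw [Nat.cast_sub h2, abs_le]; constructor <;> linarith [m0.1, m0.2]
  have A3 : |O * (Real.log 10 + (Real.log 3 + Real.log (1 - 4*x/3) + Real.log (1-2*x) - Real.log 2 - Real.log (1-(k+1)*x)))
      - ((l2 + l5 + l3 + n3 - (n1 + n2 + l2) : ℕ):ℝ)| ≤ 150000 := by
    rw [Nat.cast_sub h3, abs_le]; push_cast at e10 ⊢; constructor <;> linarith [m1.1, m1.2, m2.1, m2.2, m3.1, m3.2]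
  split_ifs at hac with h4
  rcases hbc with ⟨-, hmem⟩ | ⟨-, -, hmem⟩
  · obtain ⟨a', c', hac'⟩ := eucl_sound _ _ _ _ _ hac
    rw [List.all_eq_true] at hac'
    exact bt_core (hac' _ hmem) hW _ _ _ _ hc.l10 A2 A3 hlb d m hdm hm
  · rw [List.all_eq_true] at h4
    exact bt_core (h4 _ hmem) hW _ _ _ _ hc.l10 A2 A3 hlb d m hdm hm

theorem chkI_sound (O S T l2 l3 l5 l7 N W2 W : ℕ) (hc : LC O l2 l3 l5 l7)
    (hW : W2 = W + (2*N+2)*2^18) (h : chkI S T l2 l3 l5 l7 N W2 = true)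
    (b : ℕ) (hb1 : 1 ≤ b) (hb9 : b ≤ 9) (d m : ℕ) (hdm : d + 1 ≤ m) (hm : m ≤ N) (hm1 : 2 ≤ m) :
    (W:ℝ) < O * |d * Real.log 10 - m * Real.log 2 - (Real.log 3 - Real.log b)| := by
  unfold chkI at h
  simp only [fce_eq, cnd_eq] at h
  obtain ⟨a, c, hac⟩ := eucl_sound _ _ _ _ _ h
  split_ifs at hac with h4
  have e2 := abs_le.1 hc.e2
  have e3 := abs_le.1 hc.e3
  have e10 := abs_le.1 hc.l10
  have A2 : |O * Real.log 2 - (l2:ℝ)| ≤ 26000 := le_trans hc.e2 (by norm_num)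
  by_cases hb : b = 3 ∨ b = 6
  · obtain ⟨Q, hQ⟩ := srch_sound _ _ _ _ _ hac
    rcases hb with rfl | rfl
    · have := coreh O _ l2 N W2 W Q hQ hW _ _ hc.l10 A2 d m (by omega) hm (by omega)
      simpa using this
    · have := coreh O _ l2 N W2 W Q hQ hW _ _ hc.l10 A2 d (m-1) (by omega) (by omega) (by omega)
      have g6 : Real.log (6:ℕ) = Real.log 2 + Real.log 3 := by rw [← Real.log_mul] <;> norm_num
      rw [g6]; rw [Nat.cast_sub (by omega)] at this
      convert this using 3; push_cast; ring
  · obtain ⟨lb, hlb, hbc⟩ := hc.lb b hb1 hb9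
    rcases hbc with ⟨h, -⟩ | ⟨-, -, hmem⟩
    · exact absurd h hb
    · rw [List.all_eq_true] at h4
      refine bt_core (h4 _ hmem) hW _ _ _ _ hc.l10 A2 ?_ hlb d m (by omega) hm
      push_cast at e10 ⊢; rw [abs_le]; constructor <;> linarith

end partN8

section partN9

theorem pow_small (n m : ℕ) (h : n ≤ m) : ((2^n:ℕ):ℝ) * (1/2)^m ≤ 1 := by
  push_cast
  rw [div_pow, one_pow, mul_one_div, div_le_one (by positivity)]
  exact pow_le_pow_right₀ (by norm_num) h

theorem pow_sq (n m : ℕ) (h : n * 2 = m) : ((2^n:ℕ):ℝ)^2 = 2^m := by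
  push_cast; rw [← pow_mul, h]

theorem LC_of (O l2 l3 l5 l7 : ℕ) (pos : 8 ≤ O) (small : (O:ℝ) * (1/2)^2000 ≤ 1) (sq : (O:ℝ)^2 = 2^3800)
    (h2 : nlog O (O/2) = l2) (h3 : 2 * l2 - nlog O (O/4) = l3) (h5 : 2 * l2 + nlog O (O/5) = l5)
    (h7 : 3 * l2 - nlog O (O/8) = l7) (p3 : 0 < l3) (p7 : 0 < l7) : LC O l2 l3 l5 l7 := by
  have hq : ∀ q : ℕ, 2 ≤ q → q ≤ 8 → |O * (-Real.log (1 - 1/q)) - nlog O (O/q)| ≤ 6008 := by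
    intro q hq hq8
    have hq' : (2:ℝ) ≤ q := by exact_mod_cast hq
    have := nlog_near O (by omega) small (O/q) (by
      have := Nat.div_mul_le_self O q; nlinarith) (1/q) 1 (by
        rw [div_le_div_iff₀ (by linarith) (by norm_num)]; linarith) (by
      have a1 : ((O/q:ℕ):ℝ) ≤ O/q := Nat.cast_div_le
      have a2 := (Nat.lt_floor_add_one ((O : ℕ) / (q:ℕ) : ℝ)).le
      rw [Nat.floor_div_eq_div] at a2
      rw [mul_one_div, abs_le]; constructor <;> linarith)
    linarith
  have k2 := abs_le.1 (hq 2 le_rfl (by norm_num))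
  have k4 := abs_le.1 (hq 4 (by norm_num) (by norm_num))
  have k5 := abs_le.1 (hq 5 (by norm_num) (by norm_num))
  have k8 := abs_le.1 (hq 8 (by norm_num) (by norm_num))
  have g2 : -Real.log (1 - 1/(2:ℕ)) = Real.log 2 := by
    rw [← Real.log_inv]; norm_num
  have lg4 : Real.log 4 = 2 * Real.log 2 := by rw [show (4:ℝ) = 2^2 by norm_num, Real.log_pow]; norm_num
  have lg8 : Real.log 8 = 3 * Real.log 2 := by rw [show (8:ℝ) = 2^3 by norm_num, Real.log_pow]; norm_num
  have g4 : -Real.log (1 - 1/(4:ℕ)) = 2 * Real.log 2 - Real.log 3 := by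
    rw [show (1 - 1/((4:ℕ):ℝ)) = 3/4 by norm_num, Real.log_div (by norm_num) (by norm_num), lg4]; ring
  have g8 : -Real.log (1 - 1/(8:ℕ)) = 3 * Real.log 2 - Real.log 7 := by
    rw [show (1 - 1/((8:ℕ):ℝ)) = 7/8 by norm_num, Real.log_div (by norm_num) (by norm_num), lg8]; ring
  have g5 : -Real.log (1 - 1/(5:ℕ)) = Real.log 5 - 2 * Real.log 2 := by
    rw [show (1 - 1/((5:ℕ):ℝ)) = 4/5 by norm_num, Real.log_div (by norm_num) (by norm_num), lg4]; ring
  rw [g2] at k2; rw [g4] at k4; rw [g5] at k5; rw [g8] at k8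
  have j3 : (l3:ℝ) = 2 * l2 - nlog O (O/4) := by
    have : l3 + nlog O (O/4) = 2 * l2 := by omega
    have : (l3:ℝ) + nlog O (O/4) = 2 * l2 := by exact_mod_cast this
    linarith
  have j7 : (l7:ℝ) = 3 * l2 - nlog O (O/8) := by
    have : l7 + nlog O (O/8) = 3 * l2 := by omega
    have : (l7:ℝ) + nlog O (O/8) = 3 * l2 := by exact_mod_cast this
    linarith
  have j5 : (l5:ℝ) = 2 * l2 + nlog O (O/5) := by exact_mod_cast h5.symm
  rw [h2] at k2
  have e2 : |O * Real.log 2 - l2| ≤ 6008 := abs_le.2 k2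
  refine ⟨by omega, small, sq, e2, ?_, ?_, ?_⟩
  · rw [j3, abs_le]; constructor <;> linarith
  · rw [j5, abs_le]; constructor <;> linarith
  · rw [j7, abs_le]; constructor <;> linarith

theorem c_pos : (Nat.ble 1 l3c && (Nat.ble 1 l7c && Nat.ble 8 OO)) = true := by decide +kernel

theorem LCc : LC OO l2c l3c l5c l7c := by
  have h := c_pos
  simp only [Bool.and_eq_true, Nat.ble_eq] at h
  have e2 := l2c_eq
  have e3 := l3c_eq
  have e5 := l5c_eq
  have e7 := l7c_eq
  rw [Nat.beq_eq] at e2 e3 e5 e7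
  exact LC_of OO l2c l3c l5c l7c h.2.2 (pow_small 1900 2000 (by norm_num)) (pow_sq 1900 3800 (by norm_num))
    e2 e3 e5 e7 h.1 h.2.1

theorem chks_sound (tb N W2 f k : ℕ) (h : chks tb N W2 f k = true) (i : ℕ) (hi : i < f) :
    chkK OO (2^1400) (2^(3300-tb)) l2c l3c l5c l7c N W2 (k + i) = true := by
  unfold chks at h
  simp only [fce_eq] at h
  generalize OO = O at *
  generalize l2c = a at *
  generalize l3c = b at *
  generalize l5c = c at *
  generalize l7c = d at *
  generalize 2^1400 = S at *
  generalize 2^(3300-tb) = T at *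
  induction f with
  | zero => omega
  | succ f ih =>
    simp only [cnd_eq] at h ih
    split_ifs at h with h1
    rcases Nat.lt_succ_iff_lt_or_eq.1 hi with h2 | h2
    · exact ih h2 h
    · rw [h2]; exact h1

/-- the linear form -/
noncomputable def lform (k : ℕ) (x : ℝ) (b d m : ℕ) : ℝ :=
  d * Real.log 10 - m * (Real.log 2 + Real.log (1-x)) -
      ((Real.log 3 + Real.log (1 - 4*x/3) + Real.log (1-2*x) - Real.log 2 - Real.log (1-(k+1)*x)) - Real.log b)

structure XK (k : ℕ) (x : ℝ) : Prop where
  pos : 0 < x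
  le : 2 * (k+1) * x ≤ 1
  eq : x * (1-x)^k = 1/2^(k+1)

theorem pow_fin (n e : ℕ) (h : e ≤ n) (t : ℝ) (ht : ((2^(n-e) : ℕ):ℝ) < ((2^n:ℕ):ℝ) * t) : 1/2^e < t := by
  rw [div_lt_iff₀ (by positivity)]
  push_cast at ht
  rw [show (2:ℝ)^n = 2^(n-e) * 2^e by rw [← pow_add]; congr 1; omega, mul_assoc] at ht
  have := (lt_mul_iff_one_lt_right (by positivity : (0:ℝ) < 2^(n-e))).1 ht
  linarith

theorem num1 (k : ℕ) (hk : 3 ≤ k) (hk2 : k < 1233) (x : ℝ) (hx : XK k x) (b : ℕ) (hb1 : 1 ≤ b) (hb9 : b ≤ 9) (d m : ℕ)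
    (hdm : d ≤ m) (hm : m ≤ 2^601) : 1/2^1300 < |lform k x b d m| := by
  have h := chks_sound _ _ _ _ _ (r1 ((k-3)/10) (by omega)) ((k-3)%10) (by omega)
  rw [show 3 + 10*((k-3)/10) + (k-3)%10 = k by omega] at h
  have := chkK_sound _ _ _ _ _ _ _ _ _ (2^600) k LCc hk (by omega) (by rw [show 2^602 = 2 * 2^601 from pow_succ' 2 601]) h x hx.pos hx.le hx.eq b hb1 hb9 d m hdm hm
  exact pow_fin 1900 1300 (by norm_num) _ this

theorem num2 (k : ℕ) (hk : 3 ≤ k) (hk2 : k < 43) (x : ℝ) (hx : XK k x) (b : ℕ) (hb1 : 1 ≤ b) (hb9 : b ≤ 9) (d m : ℕ)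
    (hdm : d ≤ m) (hm : m ≤ 1700) : 1/2^80 < |lform k x b d m| := by
  have h := chks_sound _ _ _ _ _ (r2 ((k-3)/10) (by omega)) ((k-3)%10) (by omega)
  rw [show 3 + 10*((k-3)/10) + (k-3)%10 = k by omega] at h
  have := chkK_sound _ _ _ _ _ _ _ _ _ (2^1820) k LCc hk (by omega) (by norm_num) h x hx.pos hx.le hx.eq b hb1 hb9 d m hdm hm
  exact pow_fin 1900 80 (by norm_num) _ this

theorem chkJ_sound (tb N W2 : ℕ) (h : chkJ tb N W2 = true) : chkI (2^1400) (2^(3300-tb)) l2c l3c l5c l7c N W2 = true := by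
  unfold chkJ at h
  simp only [fce_eq] at h
  exact h

theorem ind1 (b : ℕ) (hb1 : 1 ≤ b) (hb9 : b ≤ 9) (d m : ℕ) (hdm : d + 1 ≤ m) (hm : m ≤ 2^601) (hm1 : 2 ≤ m) :
    1/2^620 < |d * Real.log 10 - m * Real.log 2 - (Real.log 3 - Real.log b)| := by
  have := chkI_sound _ _ _ _ _ _ _ _ _ (2^1280) LCc (by rw [show 2^602 = 2 * 2^601 from pow_succ' 2 601]) (chkJ_sound _ _ _ i1) b hb1 hb9 d m hdm hm hm1
  exact pow_fin 1900 620 (by norm_num) _ this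

theorem ind2 (b : ℕ) (hb1 : 1 ≤ b) (hb9 : b ≤ 9) (d m : ℕ) (hdm : d + 1 ≤ m) (hm : m ≤ 1700) (hm1 : 2 ≤ m) :
    1/2^24 < |d * Real.log 10 - m * Real.log 2 - (Real.log 3 - Real.log b)| := by
  have := chkI_sound _ _ _ _ _ _ _ _ _ (2^1876) LCc (by norm_num) (chkJ_sound _ _ _ i2) b hb1 hb9 d m hdm hm hm1
  exact pow_fin 1900 24 (by norm_num) _ this

end partN9

section partB1

theorem gl_zero (k m : ℕ) (h : m < k - 2) : genLucas k m = 0 := by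
  rw [genLucas]; simp [h]
theorem gl_two (k : ℕ) : genLucas k (k-2) = 2 := by
  rw [genLucas]; simp
theorem gl_one (k : ℕ) (hk : 2 ≤ k) : genLucas k (k-1) = 1 := by
  rw [genLucas]; rw [dif_neg (by omega), dif_neg (by omega), dif_pos rfl]
theorem gl_rec (k : ℕ) (hk : 2 ≤ k) (m : ℕ) : genLucas k (m+k) = ∑ i ∈ Finset.range k, genLucas k (m+i) := by
  rw [genLucas, dif_neg (by omega), dif_neg (by omega), dif_neg (by omega), ← Finset.sum_range_reflect]
  apply Finset.sum_congr rfl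
  intro i hi
  rw [Finset.mem_range] at hi
  congr 1; omega
theorem gl_rec2 (k : ℕ) (hk : 2 ≤ k) (m : ℕ) : genLucas k (m+k+1) = 2 * genLucas k (m+k) - genLucas k m := by
  have h1 := gl_rec k hk m
  have h2 := gl_rec k hk (m+1)
  have e : ∀ f : ℕ → ℤ, ∑ i ∈ Finset.range k, f (m+1+i) = ∑ i ∈ Finset.range k, f (m+i) - f m + f (m+k) := by
    intro f
    have a := Finset.sum_range_succ (fun i => f (m+i)) k
    have b := Finset.sum_range_succ' (fun i => f (m+i)) k
    have c : ∑ i ∈ Finset.range k, f (m+1+i) = ∑ i ∈ Finset.range k, f (m+(i+1)) :=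
      Finset.sum_congr rfl fun i _ => by congr 1; omega
    simp only [add_zero] at b
    rw [c]; linarith
  rw [e, ← h1] at h2
  rw [show m+k+1 = m+1+k by omega, h2]; ring
theorem gl_k (k : ℕ) (hk : 2 ≤ k) : genLucas k k = 3 := by
  have h := gl_rec k hk 0
  simp only [zero_add] at h
  obtain ⟨j, rfl⟩ : ∃ j, k = j + 2 := ⟨k-2, by omega⟩
  have h1 := gl_one (j+2) hk
  have h2 := gl_two (j+2)
  rw [h, Finset.sum_range_succ, Finset.sum_range_succ, Finset.sum_eq_zero]
  · rw [show j + 2 - 1 = j + 1 by omega] at h1; rw [show j+2-2 = j by omega] at h2; rw [h1, h2]; norm_num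
  · intro i hi; exact gl_zero _ _ (by simpa using hi)
theorem gl_nonneg (k : ℕ) (hk : 2 ≤ k) (m : ℕ) : 0 ≤ genLucas k m := by
  induction m using Nat.strong_induction_on with
  | _ m ih =>
    rcases lt_or_ge m k with h | h
    · rcases lt_or_ge m (k-2) with h1 | h1
      · rw [gl_zero k m h1]
      · rcases eq_or_ne m (k-2) with h2 | h2
        · rw [h2, gl_two]; norm_num
        · rw [show m = k-1 by omega, gl_one k hk]; norm_num
    · obtain ⟨j, rfl⟩ : ∃ j, m = j + k := ⟨m-k, by omega⟩
      rw [gl_rec k hk]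
      exact Finset.sum_nonneg fun i hi => ih _ (by rw [Finset.mem_range] at hi; omega)

theorem L_zero (k : ℕ) : lucasL k 0 = 2 := by unfold lucasL; rw [zero_add, gl_two]
theorem L_one (k : ℕ) (hk : 2 ≤ k) : lucasL k 1 = 1 := by unfold lucasL; rw [show 1 + k - 2 = k - 1 by omega, gl_one k hk]
theorem L_two (k : ℕ) (hk : 2 ≤ k) : lucasL k 2 = 3 := by unfold lucasL; rw [show 2 + k - 2 = k by omega, gl_k k hk]
theorem L_nonneg (k : ℕ) (hk : 2 ≤ k) (n : ℕ) : 0 ≤ lucasL k n := gl_nonneg k hk _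
theorem L_dbl (k n : ℕ) (hk : 2 ≤ k) (hn : 2 ≤ n) (hnk : n < k) : lucasL k (n+1) = 2 * lucasL k n := by
  unfold lucasL
  have := gl_rec2 k hk (n-2)
  rw [gl_zero k (n-2) (by omega)] at this
  rw [show n + 1 + k - 2 = n - 2 + k + 1 by omega, show n + k - 2 = n-2+k by omega, this]; ring
theorem L_rec (k n : ℕ) (hk : 2 ≤ k) (hnk : k ≤ n) : lucasL k (n+1) = 2 * lucasL k n - lucasL k (n-k) := by
  unfold lucasL
  have := gl_rec2 k hk (n-2)
  rw [show n + 1 + k - 2 = n - 2 + k + 1 by omega, show n + k - 2 = n-2+k by omega, show n - k + k - 2 = n - 2 by omega, this]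
theorem L_small (k n : ℕ) (hk : 2 ≤ k) (hn : 2 ≤ n) (hnk : n ≤ k) : lucasL k n = 3 * 2^(n-2) := by
  induction n, hn using Nat.le_induction with
  | base => rw [L_two k hk]; norm_num
  | succ n hn ih =>
    rw [L_dbl k n hk hn (by omega), ih (by omega), show n + 1 - 2 = n - 2 + 1 by omega, pow_succ]; ring

theorem L_up (k n : ℕ) (hk : 2 ≤ k) (hn : 2 ≤ n) : lucasL k n ≤ 3 * 2^(n-2) := by
  induction n, hn using Nat.le_induction with
  | base => rw [L_two k hk]; norm_num
  | succ n hn ih =>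
    rw [show n + 1 - 2 = n - 2 + 1 by omega, pow_succ]
    rcases lt_or_ge n k with h | h
    · rw [L_dbl k n hk hn h]; linarith
    · rw [L_rec k n hk h]; linarith [L_nonneg k hk (n-k)]

theorem L_up' (k n : ℕ) (hk : 2 ≤ k) : lucasL k n ≤ 2^(n+1) := by
  rcases n with _ | _ | n
  · rw [L_zero]; norm_num
  · rw [zero_add, L_one k hk]; norm_num
  · refine (L_up k (n+2) hk (by omega)).trans ?_
    rw [show n + 2 - 2 = n by omega, show n + 1 + 1 + 1 = n + 3 by omega, pow_add]
    linarith [pow_pos (by norm_num : (0:ℤ) < 2) n]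

theorem L_low (k n : ℕ) (hk : 2 ≤ k) (hnk : k ≤ n) : 3 * 2^(n-2) ≤ lucasL k n + (n-k) * 2^(n-k) := by
  induction n, hnk using Nat.le_induction with
  | base => rw [L_small k k hk hk le_rfl]; simp
  | succ n hn ih =>
    rw [L_rec k n hk hn, show n + 1 - 2 = n - 2 + 1 by omega, pow_succ, show n + 1 - k = n - k + 1 by omega, pow_succ]
    have := L_up' k (n-k) hk
    rw [pow_succ] at this
    push_cast
    nlinarith

end partB1

section partB2

theorem xk_exists (k : ℕ) (hk : 3 ≤ k) : ∃ x : ℝ, XK k x ∧ x ≤ 1/2^k := by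
  have h2k : (2*(k+1) : ℝ) ≤ 2^k := by
    have : 2*(k+1) ≤ 2^k := by
      induction k, hk using Nat.le_induction with
      | base => norm_num
      | succ n hn ih => rw [pow_succ]; omega
    exact_mod_cast this
  have hp : (0:ℝ) < 2^k := by positivity
  have hq : (1:ℝ)/2^k ≤ 1 := by
    rw [div_le_one hp]; exact one_le_pow₀ (by norm_num)
  have hB : (1:ℝ)/2 ≤ (1 - 1/2^k)^k := by
    have := one_add_mul_le_pow (a := -(1/2^k : ℝ)) (by linarith) k
    have h3 : (k:ℝ) * (1/2^k) ≤ 1/2 := by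
      rw [mul_one_div, div_le_div_iff₀ hp (by norm_num)]; linarith
    rw [show (1:ℝ) - 1/2^k = 1 + -(1/2^k) by ring]
    linarith
  have hc : ContinuousOn (fun y : ℝ => y * (1-y)^k) (Set.Icc 0 (1/2^k)) := by fun_prop
  have := intermediate_value_Icc (by positivity : (0:ℝ) ≤ 1/2^k) hc
  have hm : (1/2^(k+1) : ℝ) ∈ Set.Icc ((fun y : ℝ => y * (1-y)^k) 0) ((fun y : ℝ => y * (1-y)^k) (1/2^k)) := by
    constructor
    · simp
    · simp only
      rw [pow_succ, show (1:ℝ)/(2^k*2) = 1/2^k * (1/2) by field_simp]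
      gcongr
  obtain ⟨x, ⟨hx0, hx1⟩, hx⟩ := this hm
  refine ⟨x, ⟨?_, ?_, hx⟩, hx1⟩
  · rcases hx0.lt_or_eq with h | h
    · exact h
    · exfalso; rw [← h] at hx; simp at hx; exact absurd hx.symm (by positivity)
  · calc 2 * ((k:ℝ)+1) * x ≤ 2^k * (1/2^k) := by gcongr
      _ = 1 := by field_simp

section binet
variable (k : ℕ) (hk : 3 ≤ k) (α : ℝ) (h1 : 1 < α) (h2 : α < 2) (hα : α^k * (2 - α) = 1)

theorem bi_pow (hα : α^k * (2 - α) = 1) (h1 : 1 < α) : (α⁻¹)^k = 2 - α := by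
  have : α^k ≠ 0 := by positivity
  rw [inv_pow]; field_simp; linarith

theorem bi_sum (hα : α^k * (2 - α) = 1) (h1 : 1 < α) : ∑ i ∈ Finset.range k, (α⁻¹)^(i+1) = 1 := by
  have h := geom_sum_eq (x := α⁻¹) (by simpa using (by linarith : α ≠ 1) ) k
  simp only [pow_succ]
  rw [← Finset.sum_mul, h, bi_pow k α hα h1]
  have h3 : 1 - α ≠ 0 := by linarith
  have h4 : α⁻¹ - 1 = (1 - α) / α := by field_simp
  rw [h4]
  field_simp
  ring

theorem bi_tel (u : ℕ → ℝ) (h1 : 1 < α) (j i : ℕ) :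
    ∑ l ∈ Finset.range i, (α⁻¹)^(l+1) * (u (j+l+1) - α * u (j+l)) = (α⁻¹)^i * u (j+i) - u j := by
  have h0 : α ≠ 0 := by linarith
  induction i with
  | zero => simp
  | succ i ih =>
    rw [Finset.sum_range_succ, ih, ← add_assoc]
    have : (α⁻¹)^(i+1) * (α * u (j+i)) = (α⁻¹)^i * u (j+i) := by
      rw [pow_succ]; field_simp
    rw [mul_sub, this]; ring

include hk h1 h2 hα in
theorem bi_w (j : ℕ) : |(genLucas k (j+1) : ℝ) - α * genLucas k j| ≤ 3 := by
  induction j using Nat.strong_induction_on with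
  | _ j ih =>
    rcases lt_or_ge j k with h | h
    · rcases lt_or_ge j (k-3) with h3 | h3
      · rw [gl_zero k j (by omega), gl_zero k (j+1) (by omega)]; norm_num
      · rcases (by omega : j = k - 3 ∨ j = k - 2 ∨ j = k - 1) with e | e | e
        · rw [gl_zero k j (by omega), show j + 1 = k - 2 by omega, gl_two]; norm_num
        · rw [show j + 1 = k-1 by omega, gl_one k (by omega), e, gl_two, abs_le]; push_cast; constructor <;> linarith
        · rw [show j + 1 = k by omega, gl_k k (by omega), e, gl_one k (by omega), abs_le]; push_cast; constructor <;> linarith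
    · obtain ⟨m, rfl⟩ : ∃ m, j = m + k := ⟨j-k, by omega⟩
      have e : (genLucas k (m+k+1) : ℝ) - α * genLucas k (m+k) = ∑ l ∈ Finset.range k, (α⁻¹)^(l+1) * ((genLucas k (m+l+1):ℝ) - α * genLucas k (m+l)) := by
        rw [bi_tel α (fun i => (genLucas k i : ℝ)) h1 m k, bi_pow k α hα h1, gl_rec2 k (by omega)]
        push_cast; ring
      rw [e]
      have hp : 0 < α⁻¹ := by positivity
      calc _ ≤ ∑ l ∈ Finset.range k, (α⁻¹)^(l+1) * 3 := by
            refine (Finset.abs_sum_le_sum_abs _ _).trans (Finset.sum_le_sum fun l hl => ?_)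
            rw [abs_mul, abs_of_pos (by positivity)]
            rw [Finset.mem_range] at hl
            exact mul_le_mul_of_nonneg_left (ih (m+l) (by omega)) (by positivity)
        _ = 3 := by rw [← Finset.sum_mul, bi_sum k α hα h1, one_mul]

include hk h1 h2 hα in
theorem bi_d (j i : ℕ) (hi : i ≤ k) : |(genLucas k (j+i) : ℝ) - α^i * genLucas k j| ≤ 3 * α^i := by
  have hp : 0 < α⁻¹ := by positivity
  have h : |(α⁻¹)^i * genLucas k (j+i) - genLucas k j| ≤ 3 := by
    rw [← bi_tel α (fun i => (genLucas k i : ℝ)) h1 j i]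
    calc _ ≤ ∑ l ∈ Finset.range i, (α⁻¹)^(l+1) * 3 := by
            refine (Finset.abs_sum_le_sum_abs _ _).trans (Finset.sum_le_sum fun l hl => ?_)
            rw [abs_mul, abs_of_pos (by positivity)]
            exact mul_le_mul_of_nonneg_left (bi_w k hk α h1 h2 hα (j+l)) (by positivity)
      _ ≤ ∑ l ∈ Finset.range k, (α⁻¹)^(l+1) * 3 := by
            apply Finset.sum_le_sum_of_subset_of_nonneg
            · simpa using hi
            · intros; positivity
      _ = 3 := by rw [← Finset.sum_mul, bi_sum k α hα h1, one_mul]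
  have e : (genLucas k (j+i) : ℝ) - α^i * genLucas k j = α^i * ((α⁻¹)^i * genLucas k (j+i) - genLucas k j) := by
    have : α^i ≠ 0 := by positivity
    rw [inv_pow]; field_simp
  rw [e, abs_mul, abs_of_pos (by positivity)]
  have : 0 < α^i := by positivity
  nlinarith

include hk h1 hα in
theorem bi_J (j : ℕ) : ∑ i ∈ Finset.range k, (1 - (α⁻¹)^(i+1)) * (genLucas k (j+i) : ℝ) = α^j * ((2*α-1)*(α-1)) := by
  have h0 : α ≠ 0 := by linarith
  induction j with
  | zero =>
    obtain ⟨m, rfl⟩ : ∃ m, k = m + 2 := ⟨k-2, by omega⟩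
    have e1 := gl_one (m+2) (by omega)
    have e2 := gl_two (m+2)
    rw [show m + 2 - 1 = m + 1 by omega] at e1
    rw [show m + 2 - 2 = m by omega] at e2
    rw [Finset.sum_range_succ, Finset.sum_range_succ, Finset.sum_eq_zero]
    · have hh := bi_pow (m+2) α hα h1
      have h3 : (α⁻¹)^(m+1) = α * (2 - α) := by
        rw [← hh, pow_succ _ (m+1)]; field_simp
      rw [zero_add, zero_add, zero_add, e1, e2, show m + 1 + 1 = m + 2 by omega, hh, h3]; push_cast; ring
    · intro i hi
      rw [Finset.mem_range] at hi
      rw [zero_add, gl_zero _ _ (by omega)]; simp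
  | succ j ih =>
    have a := Finset.sum_range_succ (fun i => (1 - (α⁻¹)^i) * (genLucas k (j+i) : ℝ)) k
    have b := Finset.sum_range_succ' (fun i => (1 - (α⁻¹)^i) * (genLucas k (j+i) : ℝ)) k
    simp only [pow_zero, sub_self, zero_mul, add_zero] at b
    have c : ∑ i ∈ Finset.range k, (1 - (α⁻¹)^(i+1)) * (genLucas k (j+1+i) : ℝ) = ∑ i ∈ Finset.range k, (1 - (α⁻¹)^(i+1)) * (genLucas k (j+(i+1)) : ℝ) :=
      Finset.sum_congr rfl fun i _ => by rw [show j+1+i = j+(i+1) by omega]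
    have d : ∑ i ∈ Finset.range k, (1 - (α⁻¹)^i) * (genLucas k (j+i) : ℝ) = α * (∑ i ∈ Finset.range k, (1 - (α⁻¹)^(i+1)) * (genLucas k (j+i) : ℝ)) - (α-1) * genLucas k (j+k) := by
      rw [gl_rec k (by omega) j]
      push_cast
      rw [Finset.mul_sum, Finset.mul_sum, ← Finset.sum_sub_distrib]
      refine Finset.sum_congr rfl fun i _ => ?_
      have : α * (α⁻¹)^(i+1) = (α⁻¹)^i := by rw [pow_succ]; field_simp
      linear_combination (genLucas k (j+i) : ℝ) * this
    rw [c, ← b, a, d, ih, bi_pow k α hα h1, pow_succ]; ring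

include hk h1 hα in
theorem bi_B : ∑ i ∈ Finset.range k, (1 - (α⁻¹)^(i+1)) * α^i = α^(k-1) * ((k+1)*α - 2*k) := by
  have h0 : α ≠ 0 := by linarith
  have e : ∀ i, (1 - (α⁻¹)^(i+1)) * α^i = α^i - α⁻¹ := by
    intro i; rw [pow_succ, inv_pow]; have : α^i ≠ 0 := by positivity
    field_simp
  simp only [e]
  rw [Finset.sum_sub_distrib, geom_sum_eq (by linarith)]
  simp only [Finset.sum_const, Finset.card_range, nsmul_eq_mul]
  have h3 : α - 1 ≠ 0 := by linarith
  obtain ⟨m, rfl⟩ : ∃ m, k = m + 1 := ⟨k-1, by omega⟩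
  rw [show m + 1 - 1 = m by omega]
  rw [pow_succ] at hα ⊢
  field_simp
  push_cast
  linear_combination (α + (m+1)*(α-1)) * hα

include hk h1 h2 hα in
theorem binet (hE : 0 < (k+1)*α - 2*k) (n : ℕ) (hn : 1 ≤ n) :
    |(lucasL k n : ℝ) - (2*α-1)*(α-1)/((k+1)*α-2*k) * α^(n-1)| ≤ 3 := by
  set j := n + k - 2 with hj
  set B := ∑ i ∈ Finset.range k, (1 - (α⁻¹)^(i+1)) * α^i with hB
  have hB' := bi_B k hk α h1 hα
  rw [← hB] at hB'
  have hBp : 0 < B := by rw [hB']; positivity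
  have hJ := bi_J k hk α h1 hα j
  have hc : ∀ i, 0 ≤ 1 - (α⁻¹)^(i+1) := by
    intro i
    have : (α⁻¹)^(i+1) ≤ 1 := pow_le_one₀ (by positivity) (inv_lt_one_of_one_lt₀ h1).le
    linarith
  have key : |α^j * ((2*α-1)*(α-1)) - B * genLucas k j| ≤ 3 * B := by
    rw [← hJ, hB, Finset.sum_mul, ← Finset.sum_sub_distrib, Finset.mul_sum]
    refine (Finset.abs_sum_le_sum_abs _ _).trans (Finset.sum_le_sum fun i hi => ?_)
    rw [mul_assoc, ← mul_sub, abs_mul, abs_of_nonneg (hc i)]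
    have := bi_d k hk α h1 h2 hα j i (Finset.mem_range.1 hi).le
    nlinarith [hc i]
  have e : (2*α-1)*(α-1)/((k+1)*α-2*k) * α^(n-1) = α^j * ((2*α-1)*(α-1)) / B := by
    rw [hB', show j = (n-1) + (k-1) by omega, pow_add]
    have : α^(k-1) ≠ 0 := by positivity
    field_simp
  rw [e]
  have e2 : (lucasL k n : ℝ) - α^j * ((2*α-1)*(α-1)) / B = - ((α^j * ((2*α-1)*(α-1)) - B * genLucas k j) / B) := by
    rw [lucasL, ← hj]; field_simp; ring
  rw [e2, abs_neg, abs_div, abs_of_pos hBp, div_le_iff₀ hBp]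
  exact key
end binet

end partB2

section partB3
def okv (v : ℕ) : Bool := cnd (Nat.beq (Nat.mod v 100) 0)
  (cnd (Nat.ble v 900) false (cnd (Nat.beq (Nat.mod v 1000) 0) (cnd (Nat.ble v 900000) false (cnd (Nat.beq (Nat.mod v 1000000) 0) false true)) true)) true
def finC (k : ℕ) (f : ℕ) : List ℕ → Bool :=
  Nat.rec (fun _ => true) (fun _ ih l => fce (Nat.sub (Nat.mul 2 (l.getD 0 0)) (l.getD k 0)) fun v =>
    cnd (okv v) (ih (v :: l)) false) f

set_option maxRecDepth 100000 in
theorem fin_run : ∀ j < 40, finC (j+3) 103 [3, 1, 2] = true := by decide +kernel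

theorem okv_spec (v b d : ℕ) (hb : 1 ≤ b) (hb9 : b ≤ 9) (hd : 2 ≤ d) (h : v = b * 10^d) : okv v = false := by
  unfold okv
  simp only [cnd_eq, Nat.beq_eq, Nat.ble_eq, show ∀ a b : ℕ, Nat.mod a b = a % b from fun _ _ => rfl]
  have h100 : v % 100 = 0 := by
    rw [h]; exact Nat.mod_eq_zero_of_dvd (Dvd.dvd.mul_left (pow_dvd_pow 10 hd) b)
  rw [if_pos h100]
  split_ifs with h1 h2 h3 h4
  · rfl
  · rfl
  · rfl
  · exfalso
    apply h4
    have : 6 ≤ d := by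
      by_contra hlt
      have : 10^d ≤ 10^5 := Nat.pow_le_pow_right (by norm_num) (by omega)
      have := Nat.mul_le_mul hb9 this
      rw [← h] at this; norm_num at this; omega
    rw [h]; exact Nat.mod_eq_zero_of_dvd (Dvd.dvd.mul_left (pow_dvd_pow 10 this) b)
  · exfalso
    apply h2
    have : 3 ≤ d := by
      by_contra hlt
      have : 10^d ≤ 10^2 := Nat.pow_le_pow_right (by norm_num) (by omega)
      have := Nat.mul_le_mul hb9 this
      rw [← h] at this; norm_num at this; omega
    rw [h]; exact Nat.mod_eq_zero_of_dvd (Dvd.dvd.mul_left (pow_dvd_pow 10 this) b)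

theorem finC_sound (k : ℕ) (hk : 2 ≤ k) (f : ℕ) : ∀ (l : List ℕ) (n : ℕ), 2 ≤ n → l.length = n + 1 →
    (∀ i ≤ n, ((l.getD i 0 : ℕ) : ℤ) = lucasL k (n-i)) → finC k f l = true →
    ∀ m, n < m → m ≤ n + f → ∃ v : ℕ, (v:ℤ) = lucasL k m ∧ okv v = true := by
  induction f with
  | zero => intro l n _ _ _ _ m h1 h2; omega
  | succ f ih =>
    intro l n hn hl hi hC m h1 h2
    have hC' : (fce (Nat.sub (Nat.mul 2 (l.getD 0 0)) (l.getD k 0)) fun v =>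
      cnd (okv v) (finC k f (v :: l)) false) = true := hC
    rw [fce_eq, cnd_eq] at hC'
    set v := Nat.sub (Nat.mul 2 (l.getD 0 0)) (l.getD k 0) with hv
    have hv' : v = 2 * l.getD 0 0 - l.getD k 0 := rfl
    clear_value v
    have h0 := hi 0 (by omega)
    rw [Nat.sub_zero] at h0
    have hvL : (v:ℤ) = lucasL k (n+1) := by
      have hp := L_nonneg k hk (n+1)
      rcases lt_or_ge n k with h | h
      · rw [hv', L_dbl k n hk hn h, ← h0, List.getD_eq_default _ _ (by omega : l.length ≤ k)]; simp
      · rw [L_rec k n hk h, ← h0, ← hi k h] at hp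
        rw [L_rec k n hk h, ← h0, ← hi k h]; omega
    by_cases ho : okv v = true
    · rw [if_pos ho] at hC'
      rcases Nat.eq_or_lt_of_le (Nat.succ_le_of_lt h1) with e | e
      · exact ⟨v, by rw [hvL, ← e], ho⟩
      · refine ih (v :: l) (n+1) (by omega) (by simp [hl]) ?_ hC' m e (by omega)
        intro i hin
        rcases i with _ | i
        · simpa using hvL
        · rw [List.getD_cons_succ, hi i (by omega)]; congr 1; omega
    · rw [if_neg ho] at hC'; exact absurd hC' (by simp)

theorem fin_final (k n d b : ℕ) (hk : 3 ≤ k) (hk2 : k < 43) (hn : 2 < n) (hn2 : n ≤ 105) (hb : 1 ≤ b) (hb9 : b ≤ 9) (hd : 2 ≤ d)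
    (h : lucasL k n = b * 10^d) : False := by
  have hr := fin_run (k-3) (by omega)
  rw [show k - 3 + 3 = k by omega] at hr
  obtain ⟨v, hv, ho⟩ := finC_sound k (by omega) 103 [3,1,2] 2 le_rfl rfl (by
    intro i hi
    interval_cases i
    · simp [L_two k (by omega : 2 ≤ k)]
    · simp [L_one k (by omega : 2 ≤ k)]
    · simp [L_zero]) hr n hn (by omega)
  rw [h] at hv
  have := okv_spec v b d hb hb9 hd (by exact_mod_cast hv)
  rw [this] at ho; simp at ho

theorem d_bound (k n d b : ℕ) (hk : 2 ≤ k) (hn : 2 ≤ n) (hb : 1 ≤ b) (h : lucasL k n = b * 10^d) : 3 * d < n := by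
  have h1 := L_up k n hk hn
  rw [h] at h1
  have h1' : b * 10^d ≤ 3 * 2^(n-2) := by exact_mod_cast h1
  have h2 : 2^(3*d) ≤ 10^d := by rw [pow_mul]; exact Nat.pow_le_pow_left (by norm_num) d
  have h3 : 2^(3*d) < 2^n := by
    obtain ⟨e, rfl⟩ := Nat.exists_eq_add_of_le hn
    rw [pow_add]
    rw [show 2 + e - 2 = e by omega] at h1'
    have := Nat.pos_of_ne_zero (pow_ne_zero e (by norm_num : (2:ℕ) ≠ 0))
    nlinarith
  exact (Nat.pow_lt_pow_iff_right (by norm_num)).1 h3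

theorem log_near (t : ℝ) (ht : |t - 1| ≤ 1/2) : |Real.log t| ≤ 2 * |t - 1| := by
  have := log_lip t 1 (by linarith [(abs_le.1 ht).1]) (by norm_num)
  simpa using this

theorem ind_form (k n d b : ℕ) (hk : 3 ≤ k) (hnk : k ≤ n) (hb : 1 ≤ b) (h8 : 8 * n ≤ 3 * 2^k) (h : lucasL k n = b * 10^d) :
    |(d:ℝ) * Real.log 10 - ((n-2 : ℕ):ℝ) * Real.log 2 - (Real.log 3 - Real.log b)| ≤ 3 * n / 2^k := by
  have h1 := L_up k n (by omega) (by omega)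
  have h2 := L_low k n (by omega) hnk
  rw [h] at h1 h2
  have h1' : (b:ℝ) * 10^d ≤ 3 * 2^(n-2) := by exact_mod_cast h1
  have h2' : (3:ℝ) * 2^(n-2) ≤ b * 10^d + (n-k) * 2^(n-k) := by exact_mod_cast h2
  have hb0 : (0:ℝ) < b := by exact_mod_cast hb
  set Q : ℝ := 3 * 2^(n-2) with hQ
  have hQ0 : 0 < Q := by positivity
  have e1 : (d:ℝ) * Real.log 10 - ((n-2 : ℕ):ℝ) * Real.log 2 - (Real.log 3 - Real.log b) = Real.log (b * 10^d / Q) := by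
    rw [Real.log_div (by positivity) (by positivity), Real.log_mul (by positivity) (by positivity), hQ,
      Real.log_mul (by positivity) (by positivity), Real.log_pow, Real.log_pow]; ring
  have e2 : (2:ℝ)^(n-k) * 2^k = 4 * 2^(n-2) := by
    rw [← pow_add, show (4:ℝ) = 2^2 by norm_num, ← pow_add]; congr 1; omega
  have hk0 : (0:ℝ) < 2^k := by positivity
  have e3 : |b * 10^d / Q - 1| ≤ 4/3 * n / 2^k := by
    rw [abs_le]
    constructor
    · have : -(4/3 * n / 2^k : ℝ) = - (n * 2^(n-k)) / Q := by
        rw [hQ]; field_simp; linear_combination (n:ℝ) * e2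
      rw [this, div_sub_one hQ0.ne', div_le_div_iff_of_pos_right hQ0]
      have : (0:ℝ) ≤ k * 2^(n-k) := by positivity
      linarith
    · have : b * 10^d / Q ≤ 1 := by rw [div_le_one hQ0]; exact h1'
      have : (0:ℝ) ≤ 4/3 * n / 2^k := by positivity
      linarith
  have h8' : (8:ℝ) * n ≤ 3 * 2^k := by exact_mod_cast h8
  have e4 : (4/3 * n / 2^k : ℝ) ≤ 1/2 := by
    rw [div_le_div_iff₀ hk0 (by norm_num)]; linarith
  rw [e1]
  refine (log_near _ (e3.trans e4)).trans ?_
  have : (3 * n / 2^k : ℝ) = 9/4 * (4/3 * n / 2^k) := by ring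
  have h5 : 8/3 * (n:ℝ) / 2^k ≤ 3 * n / 2^k := by gcongr; norm_num
  have : 8/3 * (n:ℝ) / 2^k = 2 * (4/3 * n / 2^k) := by ring
  linarith

theorem lform_le (k n d b : ℕ) (x : ℝ) (hk : 3 ≤ k) (hx : XK k x) (hb : 1 ≤ b) (hn : 6 ≤ n) (h : lucasL k n = b * 10^d) :
    |lform k x b d (n-1)| ≤ 8 / (2*(1-x))^(n-1) := by
  have hk' : (3:ℝ) ≤ k := by exact_mod_cast hk
  have hx0 := hx.pos
  have hxl := hx.le
  have hx8 : x ≤ 1/8 := by nlinarith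
  set α := 2*(1-x) with hα
  have hE : 0 < (k+1)*α - 2*k := by rw [hα]; nlinarith
  have hbin := binet k hk α (by rw [hα]; linarith) (by rw [hα]; linarith) (by
    have := hx.eq
    rw [hα, mul_pow]
    have hp : (2:ℝ)^k ≠ 0 := by positivity
    rw [pow_succ] at this
    field_simp at this
    linear_combination this) hE n (by omega)
  set G := (2*α-1)*(α-1)/((k+1)*α-2*k) with hG
  have hGe : G = (3 * (1 - 4*x/3)) * (1-2*x) / (2 * (1 - (k+1)*x)) := by
    rw [hG, hα]; congr 1 <;> ring
  have hG0 : 15/16 ≤ G := by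
    rw [hG, le_div_iff₀ hE, hα]; nlinarith
  have hα7 : 7/4 ≤ α := by rw [hα]; linarith
  have hα5 : 16 ≤ α^(n-1) := by
    calc (16:ℝ) ≤ (7/4)^5 := by norm_num
      _ ≤ α^5 := by gcongr
      _ ≤ α^(n-1) := pow_le_pow_right₀ (by linarith) (by omega)
  set m := n - 1
  rw [h] at hbin
  push_cast at hbin
  have hb0 : (0:ℝ) < b := by exact_mod_cast hb
  have e1 : lform k x b d m = Real.log (b * 10^d / (G * α^m)) := by
    have a1 : 0 < 1 - 4*x/3 := by linarith
    have a2 : 0 < 1 - 2*x := by linarith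
    have a3 : 0 < 1 - (k+1)*x := by nlinarith
    have a4 : 0 < 1 - x := by linarith
    unfold lform
    rw [Real.log_div (by positivity) (by positivity), Real.log_mul (by positivity) (by positivity),
      Real.log_mul (by positivity) (by positivity), Real.log_pow, Real.log_pow, hGe, Real.log_div (by positivity) (by positivity),
      Real.log_mul (by positivity) (by positivity), Real.log_mul (by positivity) (by positivity), Real.log_mul (by positivity) (by positivity),
      hα, Real.log_mul (by positivity) (by positivity)]
    ring
  have hM : 0 < G * α^m := by positivity
  have e3 : |b * 10^d / (G * α^m) - 1| ≤ 4 / α^m := by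
    rw [div_sub_one hM.ne', abs_div, abs_of_pos hM, div_le_div_iff₀ hM (by positivity)]
    have : 0 < α^m := by positivity
    nlinarith
  rw [e1]
  refine (log_near _ (e3.trans ?_)).trans ?_
  · rw [div_le_div_iff₀ (by positivity) (by norm_num)]; linarith
  · calc _ ≤ 2 * (4 / α^m) := by gcongr
      _ = _ := by ring

theorem al_pow (x : ℝ) (hx : x ≤ 1/8) (m : ℕ) (e : ℕ) (h : (2*(1-x))^m < 2^e) : 4 * (m/5) < e := by
  have h1 : (2:ℝ)^(4*(m/5)) ≤ (2*(1-x))^m := by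
    calc (2:ℝ)^(4*(m/5)) = 16^(m/5) := by rw [pow_mul]; norm_num
      _ ≤ ((7/4)^5)^(m/5) := by gcongr; norm_num
      _ ≤ ((2*(1-x))^5)^(m/5) := by gcongr; linarith
      _ = (2*(1-x))^(5*(m/5)) := by rw [← pow_mul]
      _ ≤ _ := pow_le_pow_right₀ (by linarith) (Nat.mul_div_le m 5)
  exact (pow_lt_pow_iff_right₀ (by norm_num : (1:ℝ) < 2)).1 (h1.trans_lt h)

theorem small_n (k n d b : ℕ) (hk : 3 ≤ k) (hnk : k < n) (hn6 : 5 < n) (hb : 1 ≤ b) (hb9 : b ≤ 9) (hd : 2 ≤ d)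
    (h : lucasL k n = b * 10^d) (hn : n ≤ 2^601) : False := by
  revert hn
  have hdn := d_bound k n d b (by omega) (by omega) hb h
  have conv : ∀ e : ℕ, ∀ y : ℝ, 0 < y → 1/2^e < 8/y → y < 2^(e+3) := by
    intro e y hy h
    rw [div_lt_div_iff₀ (by positivity) hy] at h
    rw [pow_add]; linarith
  have q1 : d ≤ n - 1 := by omega
  have q2 : d + 1 ≤ n - 2 := by omega
  have q3 : 2 ≤ n - 2 := by omega
  have q4 : 6 ≤ n := by omega
  rcases le_or_gt 1233 k with hk2 | hk2
  · have q5 : 604 ≤ k := by omega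
    intro hn
    have h2k : 8 * n ≤ 3 * 2^k := by
      calc 8 * n ≤ 2^3 * 2^601 := Nat.mul_le_mul (by norm_num) hn
        _ = 2^604 := by rw [← pow_add]
        _ ≤ 2^k := Nat.pow_le_pow_right (by norm_num) q5
        _ ≤ 3 * 2^k := Nat.le_mul_of_pos_left _ (by norm_num)
    have h1 := ind_form k n d b hk hnk.le hb h2k h
    have h2 := ind1 b hb hb9 d (n-2) q2 ((Nat.sub_le _ _).trans hn) q3
    have h3 : (3 * n / 2^k : ℝ) ≤ 1/2^620 := by
      rw [div_le_div_iff₀ (by positivity) (by positivity)]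
      have hn' : (n:ℝ) ≤ 2^601 := by exact_mod_cast hn
      have hk' : (2:ℝ)^1233 ≤ 2^k := pow_le_pow_right₀ (by norm_num) hk2
      calc (3 * n * 2^620 : ℝ) ≤ 3 * 2^601 * 2^620 := by gcongr
        _ ≤ 2^2 * 2^601 * 2^620 := by gcongr; norm_num
        _ = 2^1223 := by rw [← pow_add, ← pow_add]
        _ ≤ 2^1233 := pow_le_pow_right₀ (by norm_num) (by norm_num)
        _ ≤ _ := by linarith
    linarith
  · obtain ⟨x, hx, _⟩ := xk_exists k hk
    have hx8 : x ≤ 1/8 := by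
      have hk' : (3:ℝ) ≤ k := by exact_mod_cast hk
      have := hx.pos; have := hx.le; nlinarith
    have h1 := lform_le k n d b x hk hx hb q4 h
    intro hn
    have h2 := num1 k hk hk2 x hx b hb hb9 d (n-1) q1 ((Nat.sub_le _ _).trans hn)
    clear hn
    have hpos : 0 < (2*(1-x))^(n-1) := pow_pos (by linarith) _
    have h3 := al_pow x hx8 _ _ (conv _ _ hpos (h2.trans_le h1))
    have hn2 : n ≤ 1650 := by omega
    rcases le_or_gt 43 k with hk3 | hk3
    · have h2k : 2^43 ≤ 2^k := Nat.pow_le_pow_right (by norm_num) (by omega)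
      have h1 := ind_form k n d b hk hnk.le hb (by omega) h
      have h2 := ind2 b hb hb9 d (n-2) (by omega) (by omega) (by omega)
      have h3 : (3 * n / 2^k : ℝ) ≤ 1/2^24 := by
        rw [div_le_div_iff₀ (by positivity) (by positivity)]
        have hn' : (n:ℝ) ≤ 1650 := by exact_mod_cast hn2
        have hk' : (2:ℝ)^43 ≤ 2^k := pow_le_pow_right₀ (by norm_num) hk3
        calc (3 * n * 2^24 : ℝ) ≤ 3 * 1650 * 2^24 := by gcongr
          _ ≤ 2^43 := by norm_num
          _ ≤ _ := by linarith
      linarith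
    · have h2 := num2 k hk hk3 x hx b hb hb9 d (n-1) (by omega) (by omega)
      have h3 := al_pow x hx8 _ _ (conv _ _ hpos (h2.trans_le h1))
      exact fin_final k n d b hk hk3 (by omega) (by omega) hb hb9 hd h

end partB3

section partB4

def PInt (x ℓ : ℝ) : Prop := (∃ z : ℤ, x = z) ∧ 0 ≤ ℓ
theorem lsys_int : LSys PInt 2 1 where
  int z := ⟨⟨z, rfl⟩, abs_nonneg _⟩
  nn x ℓ h := h.2
  add := by
    rintro x y a b ⟨⟨z, rfl⟩, ha⟩ ⟨⟨w, rfl⟩, hb⟩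
    exact ⟨⟨z+w, by push_cast; ring⟩, by positivity⟩
  mul := by
    rintro x y a b ⟨⟨z, rfl⟩, ha⟩ ⟨⟨w, rfl⟩, hb⟩
    exact ⟨⟨z*w, by push_cast; ring⟩, by positivity⟩
  gen := ⟨⟨2, by norm_num⟩, by norm_num⟩
  mono := fun x a b h hab => ⟨h.1, h.2.trans hab⟩
  liou := by
    rintro x ℓ ⟨⟨z, rfl⟩, _⟩ hl hx
    have : z ≠ 0 := by exact_mod_cast hx
    have h1 : (1:ℝ) ≤ |(z:ℝ)| := by exact_mod_cast Int.one_le_abs this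
    rw [pow_one]; nlinarith

theorem log3b (b : ℕ) (hb : 1 ≤ b) (hb9 : b ≤ 9) : |Real.log (3 / (b:ℝ))| ≤ 4 := by
  have h1 : (1:ℝ) ≤ b := by exact_mod_cast hb
  have h9 : (b:ℝ) ≤ 9 := by exact_mod_cast hb9
  have a := Real.log_le_sub_one_of_pos (show (0:ℝ) < 3 / b by positivity)
  have c := Real.log_le_sub_one_of_pos (show (0:ℝ) < b / 3 by positivity)
  have e : Real.log ((b:ℝ)/3) = - Real.log (3/(b:ℝ)) := by rw [← Real.log_inv, inv_div]
  have d1 : (3:ℝ)/b ≤ 3 := by rw [div_le_iff₀ (by linarith)]; linarith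
  rw [abs_le]; constructor <;> linarith

theorem t_pow (t : ℕ) (h : 11 ≤ t) : 96 * (t+1) ≤ 2^t := by
  induction t, h using Nat.le_induction with
  | base => norm_num
  | succ n hn ih => rw [pow_succ]; omega

theorem nat_M (N : ℕ) (hN : 2^600 ≤ N) : ∃ M, 600 ≤ M ∧ 2^M ≤ N ∧ N < 2^(M+1) := by
  have h0 : N ≠ 0 := by
    intro h; rw [h] at hN; exact absurd hN (not_le.2 (by positivity))
  exact ⟨Nat.log 2 N, Nat.le_log_of_pow_le (by norm_num) hN, Nat.pow_log_le_self 2 h0, Nat.lt_pow_succ_log_self (by norm_num) N⟩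

theorem d_low (n d b q : ℕ) (hb9 : b ≤ 9) (h : 2^q ≤ b * 10^d) : q ≤ 4 * (d+1) := by
  have h1 : 2^q ≤ 2^(4*(d+1)) := by
    calc 2^q ≤ b * 10^d := h
      _ ≤ 16 * 16^d := Nat.mul_le_mul (by omega) (Nat.pow_le_pow_left (by norm_num) d)
      _ = 2^(4*(d+1)) := by rw [pow_mul]; norm_num; ring
  exact (Nat.pow_le_pow_iff_right (by norm_num)).1 h1

theorem five_two : ∀ x y : ℕ, 0 < x → ((5:ℕ):ℝ)^x ≠ 2^y := by
  intro x y hx h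
  have h' : 5^x = 2^y := by exact_mod_cast h
  have h1 : Odd (2^y) := h' ▸ Odd.pow (by decide)
  rcases Nat.eq_zero_or_pos y with hy | hy
  · rw [hy, pow_zero] at h'
    have : 1 < 5^x := Nat.one_lt_pow hx.ne' (by norm_num)
    omega
  · exact (Nat.not_odd_iff_even.2 ((Nat.even_pow' hy.ne').2 (by decide))) h1

theorem app2 (k n d b : ℕ) (hk : 3 ≤ k) (hnk : k ≤ n) (hb : 1 ≤ b) (hb9 : b ≤ 9) (hd : 2 ≤ d)
    (h : lucasL k n = b * 10^d) (h8k : n ≤ 8 * k) (hn : 2^601 ≤ n) : False := by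
  obtain ⟨N0, hN0⟩ : ∃ N0 : ℕ, N0 = 2^600 := ⟨_, rfl⟩
  have hn0 : 2 * N0 ≤ n := by
    rw [hN0]; refine le_trans (le_of_eq ?_) hn; rw [pow_succ 2 600, mul_comm]
  have hN0' : 2^10 ≤ N0 := by rw [hN0]; exact Nat.pow_le_pow_right (by norm_num) (by norm_num)
  clear hn
  have hdn := d_bound k n d b (by omega) (by omega) hb h
  obtain ⟨M, hM, hM1, hM2⟩ := nat_M (n-2-d) (by rw [← hN0]; omega)
  set t := n / 16 with ht
  have htp := t_pow t (by omega)
  have hk2 : 2 * t ≤ k := by omega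
  have hkt : 2^(2*t) ≤ 2^k := Nat.pow_le_pow_right (by norm_num) hk2
  have hA : 3 * n * 2^(t+1) ≤ 2^k := by
    calc 3 * n * 2^(t+1) ≤ 48 * (t+1) * 2^(t+1) := Nat.mul_le_mul_right _ (by omega)
      _ = 96 * (t+1) * 2^t := by ring
      _ ≤ 2^t * 2^t := Nat.mul_le_mul_right _ htp
      _ = 2^(2*t) := by rw [← pow_add]; congr 1; ring
      _ ≤ 2^k := hkt
  have h2t : 4 ≤ 2^(t+1) := by
    calc 4 = 2^2 := by norm_num
      _ ≤ 2^(t+1) := Nat.pow_le_pow_right (by norm_num) (by omega)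
  have hA' : 8 * n ≤ 3 * 2^k := by
    have := Nat.mul_le_mul_left (3*n) h2t
    omega
  have hI := ind_form k n d b hk hnk hb hA' h
  have hlow : 2^(n-2) ≤ b * 10^d := by
    have h2 := L_low k n (by omega) hnk
    rw [h] at h2
    have e2 : (2:ℤ)^(n-k) * 2^k = 4 * 2^(n-2) := by
      rw [← pow_add, show (4:ℤ) = 2^2 by norm_num, ← pow_add]; congr 1; omega
    have h5 : ((n:ℤ)-k) * 2^(n-k) ≤ 2 * 2^(n-2) := by
      have : (0:ℤ) < 2^(n-k) := by positivity
      have h6 : (8:ℤ) * n ≤ 3 * 2^k := by exact_mod_cast hA'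
      have h7 := mul_le_mul_of_nonneg_left h6 this.le
      have h8 : (0:ℤ) ≤ k * 2^(n-k) := by positivity
      have h9 : (0:ℤ) < 2^(n-2) := by positivity
      linarith
    have : (2:ℤ)^(n-2) ≤ b * 10^d := by linarith
    exact_mod_cast this
  have hdl := d_low n d b _ hb9 hlow
  have h1 : (1:ℝ) ≤ b := by exact_mod_cast hb
  have h9 : (b:ℝ) ≤ 9 := by exact_mod_cast hb9
  refine baker PInt 2 1 lsys_int M hM (by omega) (by norm_num) le_rfl 5 (by norm_num) (by norm_num) (3/(b:ℝ)) 3 b 9 rfl (by positivity)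
    (by linarith) ⟨⟨3, by norm_num⟩, by norm_num⟩ ⟨⟨b, by norm_num⟩, by norm_num⟩ ?_ (by norm_num) ?_ (log3b b hb hb9) (n-2-d) d (t+1) hM2 (by omega) (by omega) (by omega) ?_ five_two
  · rw [abs_of_nonneg (by linarith)]; exact h9
  · calc (9:ℝ) ≤ 2^4 := by norm_num
      _ ≤ 2^M := pow_le_pow_right₀ (by norm_num) (by omega)
  · have e : Real.log (3/(b:ℝ)) - (d * Real.log ((5:ℕ):ℝ) - ((n-2-d:ℕ):ℝ) * Real.log 2) = -((d:ℝ) * Real.log 10 - ((n-2 : ℕ):ℝ) * Real.log 2 - (Real.log 3 - Real.log b)) := by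
      rw [Real.log_div (by norm_num) (by linarith), show (10:ℝ) = 5 * 2 by norm_num, Real.log_mul (by norm_num) (by norm_num), Nat.cast_sub (by omega : d ≤ n - 2)]
      push_cast; ring
    rw [e, abs_neg]
    refine hI.trans ?_
    rw [div_le_div_iff₀ (by positivity) (by positivity)]
    have : (3 * n * 2^(t+1) : ℝ) ≤ 2^k := by exact_mod_cast hA
    linarith

end partB4

section partB5

def TT (i m : ℕ) : ℤ := 8 * ((m+2+i).choose i : ℤ) - 6 * ((m+1+i).choose i : ℤ) + ((m+i).choose i : ℤ)
def AA (i : ℕ) : ℕ → ℤ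
  | 0 => 2
  | 1 => 4 * i + 1
  | m+2 => 2^m * TT i m

theorem chP (m i : ℕ) : ((m+1+(i+1)).choose (i+1) : ℤ) = ((m+(i+1)).choose (i+1) : ℤ) + ((m+1+i).choose i : ℤ) := by
  have h := Nat.choose_succ_succ (m+1+i) i
  rw [show m+1+(i+1) = (m+1+i).succ by omega, show m + (i+1) = m+1+i by omega, show i + 1 = i.succ from rfl, h]
  push_cast; ring

theorem AA_rec (i m : ℕ) : AA (i+1) (m+1) = 2 * AA (i+1) m + AA i (m+1) := by
  match m with
  | 0 => simp only [AA]; push_cast; ring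
  | 1 =>
    simp only [AA, TT]
    have h1 := chP 1 i
    have h2 := chP 0 i
    have e1 : ((1+(i+1)).choose (i+1) : ℤ) = i+2 := by
      rw [show 1 + (i+1) = (i+1) + 1 by omega, Nat.choose_succ_self_right]; push_cast; ring
    have e2 : ((1+i).choose i : ℤ) = i+1 := by
      rw [show 1 + i = i + 1 by omega, Nat.choose_succ_self_right]; push_cast; ring
    have e3 : ((0+i).choose i : ℤ) = 1 := by simp
    have e4 : ((0+(i+1)).choose (i+1) : ℤ) = 1 := by simp
    simp only [show 0 + 2 = 1 + 1 from rfl, show 0+1 = 1 from rfl] at *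
    rw [h1, e1, e2, e3, e4]; push_cast; ring
  | m+2 =>
    simp only [AA, TT]
    have h1 := chP (m+2) i
    have h2 := chP (m+1) i
    have h3 := chP m i
    rw [show m+1+2 = m+2+1 by omega, show m+1+1 = m + 2 by omega] at *
    rw [h1, h2, h3, pow_succ]; ring

theorem AA_k (i m : ℕ) (hm : 2 ≤ m) : (2:ℤ)^(m-2) ∣ AA i m := by
  obtain ⟨e, rfl⟩ : ∃ e, m = e + 2 := ⟨m-2, by omega⟩
  exact ⟨TT i e, rfl⟩

theorem L_mod (k : ℕ) (hk : 2 ≤ k) (q : ℕ) : ∀ m, m ≤ k → ∃ z : ℤ, lucasL k (q*(k+1)+m) = (-1)^q * AA q m + 2^(m+k-1) * z := by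
  induction q with
  | zero =>
    intro m hm
    refine ⟨0, ?_⟩
    match m with
    | 0 => simp [AA, L_zero]
    | 1 => simp [AA, L_one k hk]
    | m+2 =>
      rw [zero_mul, zero_add, L_small k (m+2) hk (by omega) hm, show m + 2 - 2 = m by omega]
      simp [AA, TT]; ring
  | succ q ih =>
    intro m
    induction m with
    | zero =>
      intro _
      obtain ⟨z, hz⟩ := ih k le_rfl
      obtain ⟨w, hw⟩ := ih 0 (by omega)
      obtain ⟨t, ht⟩ := AA_k q k hk
      have h := L_rec k (q*(k+1)+k) hk (by omega)
      rw [show q*(k+1)+k - k = q*(k+1)+0 by omega, hz, hw, ht] at h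
      refine ⟨(-1)^q * t + 2^k*2*z/2 * 2 - w, ?_⟩
      rw [show (q+1)*(k+1)+0 = q*(k+1)+k+1 by ring, h]
      have e1 : (2:ℤ)^(k-1) = 2 * 2^(k-2) := by rw [← pow_succ']; congr 1; omega
      have e2 : (2:ℤ)^(k+k-1) = 2^k * 2^(k-1) := by rw [← pow_add]; congr 1; omega
      have e3 : (2:ℤ)^k*2*z/2 = 2^k * z := by
        rw [show (2:ℤ)^k*2*z = 2 * (2^k*z) by ring]; exact Int.mul_ediv_cancel_left _ (by norm_num)
      rw [zero_add, e2, e1, e3]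
      simp only [AA]
      rw [pow_succ]; ring
    | succ m ihm =>
      intro hm
      obtain ⟨z, hz⟩ := ihm (by omega)
      obtain ⟨w, hw⟩ := ih (m+1) hm
      have h := L_rec k ((q+1)*(k+1)+m) hk (by nlinarith)
      rw [show (q+1)*(k+1)+m-k = q*(k+1)+(m+1) by
        rw [Nat.sub_eq_iff_eq_add (by nlinarith)]; ring, hz, hw] at h
      refine ⟨z - w, ?_⟩
      rw [← add_assoc, h, AA_rec]
      have e1 : (2:ℤ)^(m+1+k-1) = 2 * 2^(m+k-1) := by rw [← pow_succ']; congr 1; omega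
      rw [e1, pow_succ]; ring

theorem TT_mul (i m : ℕ) : TT i m * ((m+2)*(m+1)) = ((m+i).choose i : ℤ) * (8*i^2+(10*(m+2)-8)*i+3*(m+2)*(m+1)) := by
  have h1 : ((m+1+i).choose i : ℤ) * (m+1) = (m+i).choose i * (m+1+i) := by
    have := Nat.choose_mul_succ_eq (m+i) i
    rw [show m + i + 1 - i = m + 1 by omega, show m + i + 1 = m+1+i by omega] at this
    have h' : ((m+i).choose i : ℤ) * ((m+1+i : ℕ):ℤ) = (m+1+i).choose i * ((m+1 : ℕ):ℤ) := by exact_mod_cast this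
    push_cast at h'; linarith
  have h2 : ((m+2+i).choose i : ℤ) * (m+2) = (m+1+i).choose i * (m+2+i) := by
    have := Nat.choose_mul_succ_eq (m+1+i) i
    rw [show m + 1 + i + 1 - i = m + 2 by omega, show m + 1 + i + 1 = m+2+i by omega] at this
    have h' : ((m+1+i).choose i : ℤ) * ((m+2+i : ℕ):ℤ) = (m+2+i).choose i * ((m+2 : ℕ):ℤ) := by exact_mod_cast this
    push_cast at h'; linarith
  unfold TT
  linear_combination 8 * (m+1:ℤ) * h2 + (8 * (m+2+i:ℤ) - 6 * (m+2:ℤ)) * h1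

theorem adic (k n : ℕ) (hk : 4 ≤ k) (hn : 1 ≤ n) (h21 : 21 * n^3 < 2^k) : ¬ (2:ℤ)^(2*k-2) ∣ lucasL k n := by
  intro hdvd
  set q := n / (k+1) with hq
  set m := n % (k+1) with hm
  have hmk : m ≤ k := Nat.lt_succ_iff.1 (Nat.mod_lt n (by omega))
  have hqm : n = q*(k+1)+m := by rw [mul_comm]; exact (Nat.div_add_mod n (k+1)).symm
  obtain ⟨z, hz⟩ := L_mod k (by omega) q m hmk
  rw [← hqm] at hz
  have hA : (2:ℤ)^(m+k-2) ∣ AA q m := by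
    have h1 : (2:ℤ)^(m+k-2) ∣ lucasL k n := (pow_dvd_pow 2 (by omega)).trans hdvd
    have h2 : (2:ℤ)^(m+k-2) ∣ 2^(m+k-1) * z := Dvd.dvd.mul_right (pow_dvd_pow 2 (by omega)) z
    have h3 : (2:ℤ)^(m+k-2) ∣ (-1)^q * AA q m := by
      rw [hz] at h1; exact (dvd_add_left h2).1 h1
    rcases neg_one_pow_eq_or ℤ q with e | e <;> rw [e] at h3 <;> simpa using h3
  clear_value m q
  match m with
  | 0 =>
    simp only [AA] at hA
    have := Int.le_of_dvd (by norm_num) ((pow_dvd_pow 2 (by omega : 2 ≤ 0+k-2)).trans hA)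
    norm_num at this
  | 1 =>
    simp only [AA] at hA
    have := (pow_dvd_pow (2:ℤ) (by omega : 1 ≤ 1+k-2)).trans hA
    omega
  | m+2 =>
    simp only [AA] at hA
    rw [show m+2+k-2 = m+k by omega, pow_add] at hA
    have hT : (2:ℤ)^k ∣ TT q m := (mul_dvd_mul_iff_left (by positivity)).1 hA
    have hC : (2:ℤ)^k ∣ ((m+q).choose q : ℤ) * (8*q^2+(10*(m+2)-8)*q+3*(m+2)*(m+1)) := by
      rw [← TT_mul]; exact Dvd.dvd.mul_right hT _
    set Q := 8*q^2+(10*m+12)*q+3*(m+2)*(m+1) with hQ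
    have hC' : 2^k ∣ (m+q).choose q * Q := by
      have e : (8*(q:ℤ)^2+(10*(m+2)-8)*q+3*(m+2)*(m+1)) = (Q:ℤ) := by rw [hQ]; push_cast; ring
      rw [e] at hC
      exact_mod_cast hC
    have c0 : (m+q).choose q ≠ 0 := (Nat.choose_pos (by omega)).ne'
    have Q0 : Q ≠ 0 := by rw [hQ]; positivity
    rw [Nat.prime_two.pow_dvd_iff_le_factorization (mul_ne_zero c0 Q0), Nat.factorization_mul c0 Q0, Finsupp.add_apply] at hC'
    have f1 : (Nat.choose (m+q) q).factorization 2 ≤ Nat.log 2 (m+q) := Nat.factorization_choose_le_log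
    have f2 : 2^(Q.factorization 2) ≤ Q := Nat.ordProj_le 2 Q0
    have hqn : q + m + 2 ≤ n := by rw [hqm]; nlinarith
    have f3 : 2^((Nat.choose (m+q) q).factorization 2) ≤ n := by
      rcases Nat.eq_zero_or_pos (m+q) with h0 | h0
      · rw [h0] at f1; simp at f1
        rw [h0, f1]; simpa using hn
      · calc _ ≤ 2^(Nat.log 2 (m+q)) := Nat.pow_le_pow_right (by norm_num) f1
          _ ≤ m + q := Nat.pow_log_le_self 2 h0.ne'
          _ ≤ n := by omega
    have f4 : Q ≤ 21 * n^2 := by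
      rw [hQ]; nlinarith [Nat.zero_le (q*m), Nat.zero_le (q*q), Nat.zero_le (m*m), Nat.mul_le_mul hqn hqn]
    have : 2^k ≤ n * (21*n^2) := by
      calc 2^k ≤ 2^((Nat.choose (m+q) q).factorization 2 + Q.factorization 2) := Nat.pow_le_pow_right (by norm_num) hC'
        _ = 2^((Nat.choose (m+q) q).factorization 2) * 2^(Q.factorization 2) := pow_add _ _ _
        _ ≤ n * (21*n^2) := Nat.mul_le_mul f3 (f2.trans f4)
    have : n * (21*n^2) = 21 * n^3 := by ring
    omega

end partB5

section partB6
section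
open IntermediateField
variable (k : ℕ) (α : ℝ)

noncomputable def sig0 : ℚ⟮α⟯ →ₐ[ℚ] ℂ := (Complex.ofRealAm.restrictScalars ℚ).comp (ℚ⟮α⟯).val

theorem sig0_apply (y : ℚ⟮α⟯) : sig0 α y = ((y : ℝ) : ℂ) := rfl

def PK (x ℓ : ℝ) : Prop := 0 ≤ ℓ ∧ ∃ y : ℚ⟮α⟯, IsIntegral ℤ y ∧ (y : ℝ) = x ∧ ∀ σ : ℚ⟮α⟯ →ₐ[ℚ] ℂ, σ ≠ sig0 α → ‖σ y‖ ≤ ℓ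

noncomputable def qpoly : Polynomial ℤ := Polynomial.X^(k+1) - 2 * Polynomial.X^k + 1

theorem qpoly_monic : (qpoly k).Monic ∧ (qpoly k).natDegree ≤ k+1 := by
  unfold qpoly
  constructor
  · monicity!
  · compute_degree

theorem q_int {R : Type*} [CommRing R] (y : R) (h : y^k * (2 - y) = 1) : IsIntegral ℤ y := by
  refine ⟨qpoly k, (qpoly_monic k).1, ?_⟩
  unfold qpoly
  simp only [Polynomial.eval₂_add, Polynomial.eval₂_sub, Polynomial.eval₂_mul, Polynomial.eval₂_pow, Polynomial.eval₂_X, Polynomial.eval₂_one, Polynomial.eval₂_ofNat]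
  linear_combination -h

theorem root_bound (h1 : 1 < α) (hα : α^k * (2 - α) = 1) (hk : 1 ≤ k) (z : ℂ) (hz : z^k * (2 - z) = 1) (hne : z ≠ α) : ‖z‖ ≤ 1 := by
  have h0 : (α:ℂ) ≠ 0 := by
    have : α ≠ 0 := by linarith
    exact_mod_cast this
  have tel : ∀ i : ℕ, (z - α) * ∑ l ∈ Finset.range i, ((α:ℂ)⁻¹)^(l+1) * z^l = ((α:ℂ)⁻¹)^i * z^i - 1 := by
    intro i
    induction i with
    | zero => simp
    | succ i ih =>
      rw [Finset.sum_range_succ, mul_add, ih, pow_succ ((α:ℂ)⁻¹) i]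
      field_simp; ring
  have hp : ((α:ℂ)⁻¹)^k = 2 - α := by
    have := bi_pow k α hα h1
    have h2 : (((α⁻¹)^k : ℝ) : ℂ) = ((2 - α : ℝ) : ℂ) := by rw [this]
    push_cast at h2; exact h2
  have key : z^k = ∑ l ∈ Finset.range k, ((α:ℂ)⁻¹)^(l+1) * z^l := by
    have h3 := tel k
    rw [hp] at h3
    apply mul_left_cancel₀ (sub_ne_zero.2 hne)
    rw [h3]; linear_combination -hz
  by_contra hgt
  rw [not_le] at hgt
  have hp : 0 < α⁻¹ := by positivity
  obtain ⟨j, rfl⟩ : ∃ j, k = j + 1 := ⟨k-1, by omega⟩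
  have h4 : ‖z‖^(j+1) ≤ ‖z‖^j := by
    rw [← norm_pow, key]
    calc _ ≤ ∑ l ∈ Finset.range (j+1), (α⁻¹)^(l+1) * ‖z‖^j := by
          refine (norm_sum_le _ _).trans (Finset.sum_le_sum fun l hl => ?_)
          rw [norm_mul, norm_pow, norm_pow, norm_inv, Complex.norm_real, Real.norm_of_nonneg (by linarith)]
          rw [Finset.mem_range] at hl
          gcongr
          · exact hgt.le
          · omega
      _ = ‖z‖^j := by rw [← Finset.sum_mul, bi_sum (j+1) α hα h1, one_mul]
  rw [pow_succ] at h4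
  have : 0 < ‖z‖^j := by positivity
  nlinarith

theorem lsysK (hk : 1 ≤ k) (h1 : 1 < α) (hα : α^k * (2 - α) = 1) : LSys (PK α) α k where
  int z := by
    refine ⟨abs_nonneg _, (z : ℚ⟮α⟯), ?_, by simp, ?_⟩
    · exact isIntegral_algebraMap (R := ℤ) (A := ℚ⟮α⟯) (x := z)
    · intro σ _
      rw [map_intCast, Complex.norm_intCast]
  nn x ℓ h := h.1
  add := by
    rintro x y a b ⟨ha, u, hu, rfl, hu2⟩ ⟨hb, v, hv, rfl, hv2⟩
    refine ⟨by positivity, u+v, hu.add hv, by push_cast; ring, fun σ hs => ?_⟩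
    rw [map_add]
    exact (norm_add_le _ _).trans (add_le_add (hu2 σ hs) (hv2 σ hs))
  mul := by
    rintro x y a b ⟨ha, u, hu, rfl, hu2⟩ ⟨hb, v, hv, rfl, hv2⟩
    refine ⟨by positivity, u*v, hu.mul hv, by push_cast; ring, fun σ hs => ?_⟩
    rw [map_mul, norm_mul]
    exact mul_le_mul (hu2 σ hs) (hv2 σ hs) (norm_nonneg _) ha
  gen := by
    have hg : (AdjoinSimple.gen ℚ α)^k * (2 - AdjoinSimple.gen ℚ α) = 1 := by
      apply Subtype.ext
      push_cast
      rw [AdjoinSimple.coe_gen]; exact hα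
    refine ⟨by norm_num, AdjoinSimple.gen ℚ α, q_int k _ hg, AdjoinSimple.coe_gen ℚ α, fun σ hs => ?_⟩
    apply root_bound k α h1 hα hk
    · have := congrArg σ hg
      rw [map_mul, map_pow, map_sub, map_ofNat, map_one] at this; exact this
    · intro he
      apply hs
      apply IntermediateField.adjoin_algHom_ext ℚ
      rintro x hx
      rw [Set.mem_singleton_iff] at hx
      subst hx
      exact he
  mono := fun x a b h hab => ⟨h.1.trans hab, by
    obtain ⟨_, y, hy1, hy2, hy3⟩ := h
    exact ⟨y, hy1, hy2, fun σ hs => (hy3 σ hs).trans hab⟩⟩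
  liou := by
    classical
    rintro x ℓ ⟨hl0, y, hy, rfl, hs⟩ hl hx
    have hint : IsIntegral ℤ α := q_int k α hα
    have hintQ : IsIntegral ℚ α := hint.tower_top
    have : FiniteDimensional ℚ ℚ⟮α⟯ := adjoin.finiteDimensional hintQ
    have hcard : Fintype.card (ℚ⟮α⟯ →ₐ[ℚ] ℂ) ≤ k + 1 := by
      rw [AlgHom.card, adjoin.finrank hintQ]
      refine le_trans (Polynomial.natDegree_le_of_dvd (minpoly.dvd ℚ α (p := (qpoly k).map (Int.castRingHom ℚ)) ?_) ?_) ?_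
      · unfold qpoly
        simp only [Polynomial.map_add, Polynomial.map_sub, Polynomial.map_mul, Polynomial.map_pow, Polynomial.map_X, Polynomial.map_one, Polynomial.map_ofNat, map_add, map_sub, map_mul, map_pow, Polynomial.aeval_X, map_one, map_ofNat]
        linear_combination -hα
      · exact ((qpoly_monic k).1.map _).ne_zero
      · exact (Polynomial.natDegree_map_le).trans (qpoly_monic k).2
    have hN := Algebra.norm_eq_prod_embeddings ℚ ℂ y
    have hNi : IsIntegral ℤ (Algebra.norm ℚ y) := Algebra.isIntegral_norm ℚ hy
    obtain ⟨N, hNe⟩ := IsIntegrallyClosed.isIntegral_iff.1 hNi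
    have hy0 : y ≠ 0 := by
      intro h; apply hx; rw [h]; simp
    have hN0 : N ≠ 0 := by
      intro h
      rw [h] at hNe
      have : Algebra.norm ℚ y ≠ 0 := Algebra.norm_ne_zero_iff.2 hy0
      apply this; rw [← hNe]; simp
    have h1N : (1:ℝ) ≤ ‖algebraMap ℚ ℂ (Algebra.norm ℚ y)‖ := by
      rw [← hNe]
      simp only [algebraMap_int_eq, eq_intCast, map_intCast, Complex.norm_intCast]
      exact_mod_cast Int.one_le_abs hN0
    rw [hN, norm_prod, ← Finset.mul_prod_erase _ _ (Finset.mem_univ (sig0 α)), sig0_apply, Complex.norm_real, Real.norm_eq_abs] at h1N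
    refine h1N.trans (mul_le_mul_of_nonneg_left ?_ (abs_nonneg _))
    calc _ ≤ ∏ σ ∈ Finset.univ.erase (sig0 α), ℓ :=
          Finset.prod_le_prod (fun _ _ => norm_nonneg _) fun σ h => hs σ (Finset.ne_of_mem_erase h)
      _ = ℓ^(Fintype.card (ℚ⟮α⟯ →ₐ[ℚ] ℂ) - 1) := by
          rw [Finset.prod_const, Finset.card_erase_of_mem (Finset.mem_univ _), Finset.card_univ]
      _ ≤ ℓ^k := pow_le_pow_right₀ hl (by omega)

theorem hindK (hk : 1 ≤ k) (hα : α^k * (2 - α) = 1) : ∀ x y : ℕ, 0 < x → ((10:ℕ):ℝ)^x ≠ α^y := by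
  intro x y hx h
  have hint : IsIntegral ℤ α := q_int k α hα
  have hinv : IsIntegral ℤ (α^(k-1) * (2 - α)) := (hint.pow _).mul ((isIntegral_algebraMap (R := ℤ) (A := ℝ) (x := 2)).sub hint)
  have e : α * (α^(k-1) * (2-α)) = 1 := by
    rw [← mul_assoc, ← pow_succ', show k - 1 + 1 = k by omega, hα]
  have h2 : IsIntegral ℤ ((α^(k-1) * (2 - α))^y) := hinv.pow y
  have h3 : ((10:ℝ)^x) * (α^(k-1) * (2 - α))^y = 1 := by
    push_cast at h
    rw [h, ← mul_pow, e, one_pow]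
  have h4 : (α^(k-1) * (2 - α))^y = algebraMap ℚ ℝ (1/10^x) := by
    have : (10:ℝ)^x ≠ 0 := by positivity
    simp; field_simp; linarith
  rw [h4, isIntegral_algebraMap_iff (algebraMap ℚ ℝ).injective] at h2
  obtain ⟨N, hN⟩ := IsIntegrallyClosed.isIntegral_iff.1 h2
  simp at hN
  have h5 : N * 10^x = 1 := by
    have : (N:ℚ) * 10^x = 1 := by rw [hN]; field_simp
    exact_mod_cast this
  have h6 := Int.isUnit_iff.1 (IsUnit.of_mul_eq_one_right _ h5)
  have : (1:ℤ) < 10^x := one_lt_pow₀ (by norm_num) hx.ne'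
  omega
end

end partB6


theorem L_half (k n d b : ℕ) (hk : 3 ≤ k) (hnk : k ≤ n) (h : lucasL k n = b * 10^d) (hA' : 8 * n ≤ 3 * 2^k) : 2^(n-2) ≤ b * 10^d := by
  have h2 := L_low k n (by omega) hnk
  rw [h] at h2
  have e2 : (2:ℤ)^(n-k) * 2^k = 4 * 2^(n-2) := by
    rw [← pow_add, show (4:ℤ) = 2^2 by norm_num, ← pow_add]; congr 1; omega
  have h5 : ((n:ℤ)-k) * 2^(n-k) ≤ 2 * 2^(n-2) := by
    have : (0:ℤ) < 2^(n-k) := by positivity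
    have h6 : (8:ℤ) * n ≤ 3 * 2^k := by exact_mod_cast hA'
    have h7 := mul_le_mul_of_nonneg_left h6 this.le
    have h8 : (0:ℤ) ≤ k * 2^(n-k) := by positivity
    have h9 : (0:ℤ) < 2^(n-2) := by positivity
    linarith
  have : (2:ℤ)^(n-2) ≤ b * 10^d := by linarith
  exact_mod_cast this

set_option maxHeartbeats 1000000 in
theorem app1 (k n d b : ℕ) (hk : 3 ≤ k) (hb : 1 ≤ b) (hb9 : b ≤ 9) (hd : 2 ≤ d)
    (h : lucasL k n = b * 10^d) (h21 : 2^k ≤ 21 * n^3) (hn : 2^601 ≤ n) : False := by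
  obtain ⟨N0, hN0⟩ : ∃ N0 : ℕ, N0 = 2^600 := ⟨_, rfl⟩
  have hn0 : 2 * N0 ≤ n := by
    rw [hN0]; refine le_trans (le_of_eq ?_) hn; rw [pow_succ 2 600, mul_comm]
  have hN0' : 2^10 ≤ N0 := by rw [hN0]; exact Nat.pow_le_pow_right (by norm_num) (by norm_num)
  clear hn
  have hdn := d_bound k n d b (by omega) (by omega) hb h
  obtain ⟨M, hM, hM1, hM2⟩ := nat_M (n-1) (by rw [← hN0]; omega)
  clear hN0
  have hkM : k < 3*M+8 := by
    apply (Nat.pow_lt_pow_iff_right (by norm_num : 1 < 2)).1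
    calc 2^k ≤ 21 * n^3 := h21
      _ ≤ 21 * (2^(M+1))^3 := Nat.mul_le_mul_left _ (Nat.pow_le_pow_left (by omega) 3)
      _ < 2^5 * (2^(M+1))^3 := Nat.mul_lt_mul_of_pos_right (by norm_num) (by positivity)
      _ = 2^(3*M+8) := by rw [← pow_mul, ← pow_add]; congr 1; ring
  have htp := t_pow M (by omega)
  obtain ⟨x, hx, _⟩ := xk_exists k hk
  have hl := lform_le k n d b x hk hx hb (by omega) h
  have hk' : (3:ℝ) ≤ k := by exact_mod_cast hk
  have hx0 := hx.pos
  have hxl := hx.le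
  have hx8 : x ≤ 1/8 := by nlinarith
  obtain ⟨α, hα⟩ : ∃ α, α = 2*(1-x) := ⟨_, rfl⟩
  have hE : 1 ≤ (k+1)*α - 2*k := by rw [hα]; nlinarith
  have hE2 : (k+1)*α - 2*k ≤ 2 := by rw [hα]; nlinarith
  have hα1 : 7/4 ≤ α := by rw [hα]; linarith
  have hα2 : α < 2 := by rw [hα]; linarith
  have hαk : α^k * (2 - α) = 1 := by
    have := hx.eq
    rw [hα, mul_pow]
    have hp : (2:ℝ)^k ≠ 0 := by positivity
    rw [pow_succ] at this
    field_simp at this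
    linear_combination this
  have hbin := binet k hk α (by linarith) hα2 hαk (by linarith) n (by omega)
  set G := (2*α-1)*(α-1)/((k+1)*α-2*k) with hG
  have hGe : G = (3 * (1 - 4*x/3)) * (1-2*x) / (2 * (1 - (k+1)*x)) := by
    rw [hG, hα]; congr 1 <;> ring
  have hG0 : 15/16 ≤ G := by
    rw [hG, le_div_iff₀ (by linarith)]; nlinarith
  have hG3 : G ≤ 3 := by
    rw [hG, div_le_iff₀ (by linarith)]; nlinarith
  set m := n - 1 with hm
  have hpw : (2:ℝ)^(4*(m/5)) ≤ α^m := by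
    by_contra hlt
    rw [not_le, hα] at hlt
    exact lt_irrefl _ (al_pow x hx8 m _ hlt)
  have h1 : (1:ℝ) ≤ b := by exact_mod_cast hb
  have h9 : (b:ℝ) ≤ 9 := by exact_mod_cast hb9
  have hpw16 : (16:ℝ) ≤ 2^(4*(m/5)) := by
    calc (16:ℝ) = 2^4 := by norm_num
      _ ≤ _ := pow_le_pow_right₀ (by norm_num) (by omega)
  have hlow : 2^(4*(m/5)-1) ≤ b * 10^d := by
    rw [h] at hbin
    push_cast at hbin
    have a1 := (abs_le.1 hbin).1
    have e1 : (2:ℝ)^(4*(m/5)) = 2 * 2^(4*(m/5)-1) := by rw [← pow_succ']; congr 1; omega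
    have : (2:ℝ)^(4*(m/5)-1) ≤ b * 10^d := by nlinarith
    exact_mod_cast this
  have hdl := d_low n d b _ hb9 hlow
  have L := lsysK k α (by omega) (by linarith) hαk
  have Pz : ∀ z : ℤ, ∀ c : ℝ, |(z:ℝ)| ≤ c → PK α z c := fun z c hc => L.mono _ _ _ (L.int z) hc
  have P1 : PK α ((2*α-1)*(α-1)) 6 := by
    have p1 := L.add _ _ _ _ (L.mul _ _ _ _ (Pz 2 2 (by norm_num)) L.gen) (Pz (-1) 1 (by norm_num))
    have p2 := L.add _ _ _ _ L.gen (Pz (-1) 1 (by norm_num))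
    have p3 := L.mul _ _ _ _ p1 p2
    convert p3 using 1 <;> push_cast <;> ring
  have P2 : PK α (b*((k+1)*α-2*k)) (27*k+9) := by
    have p1 := L.add _ _ _ _ (L.mul _ _ _ _ (Pz (k+1) (k+1) (by push_cast; rw [abs_of_nonneg (by positivity)])) L.gen) (Pz (-(2*k)) (2*k) (by push_cast; rw [abs_neg, abs_of_nonneg (by positivity)]))
    have p3 := L.mul _ _ _ _ (Pz b 9 (by push_cast; rw [abs_of_nonneg (by positivity)]; exact h9)) p1
    convert p3 using 1 <;> push_cast <;> ring
  have hγ0 : 0 < G / b := by positivity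
  refine baker (PK α) α k L M hM (by omega) (by linarith) hα2.le 10 (by norm_num) le_rfl (G/b) ((2*α-1)*(α-1)) (b*((k+1)*α-2*k)) (27*k+9) ?_ hγ0
    (by positivity) (L.mono _ _ _ P1 (by linarith)) P2 ?_ (by linarith) ?_ ?_ m d (4*(m/5)-3) hM2 (by omega) (by omega) (by omega) ?_ (hindK k α (by omega) hαk)
  · rw [hG, div_div]; congr 1; ring
  · rw [abs_of_nonneg (by positivity)]; nlinarith
  · have : 27 * k + 9 ≤ 2^M := by omega
    exact_mod_cast this
  · rw [abs_le]
    constructor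
    · have a : Real.log (1/16) ≤ Real.log (G/b) := by
        apply Real.log_le_log (by norm_num)
        rw [le_div_iff₀ (by linarith)]; linarith
      have a2 : Real.log (1/16) = -(4 * Real.log 2) := by
        rw [one_div, Real.log_inv, show (16:ℝ) = 2^4 by norm_num, Real.log_pow]; norm_num
      have := Real.log_two_lt_d9
      linarith
    · have a := Real.log_le_sub_one_of_pos hγ0
      have : G/b ≤ 3 := by rw [div_le_iff₀ (by linarith)]; nlinarith
      linarith
  · have e1 : Real.log (G/b) - (d * Real.log ((10:ℕ):ℝ) - m * Real.log α) = - lform k x b d m := by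
      have a1 : 0 < 1 - 4*x/3 := by linarith
      have a2 : 0 < 1 - 2*x := by linarith
      have a3 : 0 < 1 - (k+1)*x := by nlinarith
      have a4 : 0 < 1 - x := by linarith
      unfold lform
      rw [Real.log_div (by positivity) (by positivity), hGe, Real.log_div (by positivity) (by positivity),
        Real.log_mul (by positivity) (by positivity), Real.log_mul (by positivity) (by positivity), Real.log_mul (by positivity) (by positivity),
        hα, Real.log_mul (by positivity) (by positivity)]
      push_cast
      ring
    rw [e1, abs_neg]
    refine hl.trans ?_
    rw [← hα, div_le_div_iff₀ (by positivity) (by positivity)]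
    have e2 : (2:ℝ)^(4*(m/5)) = 8 * 2^(4*(m/5)-3) := by
      rw [show (8:ℝ) = 2^3 by norm_num, ← pow_add]; congr 1; omega
    linarith

theorem k_two (m : ℕ) : (genLucas 2 m % 5 = 2 ∧ genLucas 2 (m+1) % 5 = 1) ∨ (genLucas 2 m % 5 = 1 ∧ genLucas 2 (m+1) % 5 = 3) ∨
   (genLucas 2 m % 5 = 3 ∧ genLucas 2 (m+1) % 5 = 4) ∨ (genLucas 2 m % 5 = 4 ∧ genLucas 2 (m+1) % 5 = 2) := by
  induction m with
  | zero =>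
    have h1 := gl_two 2
    have h2 := gl_one 2 le_rfl
    norm_num at h1 h2
    left; rw [zero_add, h1, h2]; norm_num
  | succ m ih =>
    have h := gl_rec 2 le_rfl m
    rw [Finset.sum_range_succ, Finset.sum_range_succ, Finset.sum_range_zero, zero_add, add_zero] at h
    rw [show m + 1 + 1 = m + 2 by omega]
    omega

/-- No `k`-generalized Lucas number with at least three decimal digits is of the form
`b * 10 ^ d` with `1 ≤ b ≤ 9` and `d ≥ 2`; in particular none is a power of `10`. -/
theorem lucas_not_digit_times_power_of_ten (k : ℕ) (hk : 2 ≤ k) :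
    ¬ ∃ (n d : ℕ) (b : ℤ), 5 < n ∧ 1 ≤ b ∧ b ≤ 9 ∧ 2 ≤ d ∧
      lucasL k n = b * 10 ^ d := by
  rintro ⟨n, d, b, hn, hb1, hb9, hd, h⟩
  lift b to ℕ using (by omega)
  have hb : 1 ≤ b := by exact_mod_cast hb1
  have hb' : b ≤ 9 := by exact_mod_cast hb9
  clear hb1 hb9
  have h5 : (5:ℤ) ∣ lucasL k n := by
    rw [h]
    exact Dvd.dvd.mul_left (dvd_pow (by norm_num) (by omega)) _
  rcases Nat.eq_or_lt_of_le hk with rfl | hk3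
  · unfold lucasL at h5
    have := k_two (n + 2 - 2)
    omega
  have hk3 : 3 ≤ k := hk3
  rcases Nat.lt_or_ge k n with hnk | hnk
  · rcases le_total n (2^601) with hs | hs
    · exact small_n k n d b hk3 hnk hn hb hb' hd h hs
    · rcases le_or_gt (2^k) (21*n^3) with h21 | h21
      · exact app1 k n d b hk3 hb hb' hd h h21 hs
      · refine app2 k n d b hk3 hnk.le hb hb' hd h ?_ hs
        clear hs
        by_contra hlt
        have hn3 : n ≤ n^3 := Nat.le_self_pow (by norm_num) n
        have hA : 8 * n ≤ 3 * 2^k := by omega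
        have hk4 : 4 ≤ k := by
          by_contra h4
          have : k = 3 := by omega
          subst this
          omega
        have hdl := d_low n d b _ hb' (L_half k n d b hk3 hnk.le h hA)
        refine adic k n hk4 (by omega) h21 ?_
        rw [h]
        refine Dvd.dvd.mul_left ?_ _
        refine (pow_dvd_pow (2:ℤ) (by omega : 2*k-2 ≤ d)).trans ?_
        exact pow_dvd_pow_of_dvd (by norm_num) d
  · rw [L_small k n hk (by omega) hnk] at h5
    have h6 : Prime (5:ℤ) := Int.prime_iff_natAbs_prime.2 (by norm_num)
    rcases h6.dvd_or_dvd h5 with h7 | h7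
    · omega
    · have := h6.dvd_of_dvd_pow h7
      omega
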